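/- arXiv:0909.4915 — 2 statements merged into one kernel-verified Lean document; each statement's English description precedes it below -/
import Mathlib

section
/- Let d ≥ 1 and let n be a power of a prime. Let 𝓕 be a family of (d+1)·n hyperplanes in general position in ℝ^d. Then 𝓕 can be partitioned into n subfamilies of d+1 hyperplanes each, such that the n simplexes formed by the subfamilies have a common interior point, i.e., there exists a point b lying in the interior of every one of these n simplexes. -/
open scoped InnerProductSpace

/-- A hyperplane in `ℝ^d`: the solution set of one nontrivial linear equation. -/
def IsHyperplane {d : ℕ} (h : Set (EuclideanSpace ℝ (Fin d))) : Prop :=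
  ∃ (v : EuclideanSpace ℝ (Fin d)) (c : ℝ), v ≠ 0 ∧ h = {y | ⟪y, v⟫_ℝ = c}

/-- A family of hyperplanes in `ℝ^d` is in general position if any `d` of them have
exactly one point in common and any `d+1` of them have no common point. -/
def InGeneralPosition {d n : ℕ} (H : Fin n → Set (EuclideanSpace ℝ (Fin d))) : Prop :=
  (∀ s : Finset (Fin n), s.card = d → ∃! x, ∀ i ∈ s, x ∈ H i) ∧
  (∀ s : Finset (Fin n), s.card = d + 1 → ¬ ∃ x, ∀ i ∈ s, x ∈ H i)

/-- The vertex set of the simplex formed by the subfamily `{i | c i = m}` of `d+1`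
hyperplanes: for each member `i` of the subfamily, the (unique) common point of the
other `d` hyperplanes of the subfamily is a vertex. -/
def SimplexVertices {d N n : ℕ} (H : Fin N → Set (EuclideanSpace ℝ (Fin d)))
    (c : Fin N → Fin n) (m : Fin n) : Set (EuclideanSpace ℝ (Fin d)) :=
  {x | ∃ i, c i = m ∧ ∀ j, c j = m → j ≠ i → x ∈ H j}

/-!
Write the `i`-th hyperplane as `a i ⬝ᵥ (1, y) = 0` and let `e = (1, 0, …, 0)`. If in some class
`∑ x i • a i = e` with all `x i * (a i ⬝ᵥ b) > 0`, then the numbers `x i * (a i ⬝ᵥ b)` are, up to a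
common factor, barycentric coordinates of the point with homogeneous coordinates `b` in the simplex
of that class. So one needs one vector `b` and a partition into classes each of which has such an
expansion of `e`.

Let `G = (ℤ/p)^k`, and let a weighting `t` assign to every index at most one element of `G`, with
weights in `[0, 1]`. With the Gram matrix `M` of the weighted `a i` and `b = adj(M) e`, the shares
`∑ i, (t i g * (a i ⬝ᵥ b)) • a i` of the elements `g` add up to `det(M) • e`, and `det(M) > 0` as
soon as `d + 1` of the weights are positive. If all shares agree, each of them is then a positive
multiple of `e`, and general position together with counting turns `t` into the required partition.

The shares agree when their nontrivial Fourier coefficients vanish, which are equivariant functions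
of `t`. They have a common zero among the weightings with at most `(n - 1)(d + 1)` weights below `1`
by a combinatorial Borsuk-Ulam argument: weightings are discretised by words, step functions with
values in `G`, and the complex values of the functions by sectors of the argument, with values in
`ℤ/p`. An invariant cocycle of `ℤ/p` (of degree one for `p = 2`, a Bockstein class otherwise) pulled
back along such a labelling is cohomologous to a linear form in the pullbacks along the coordinates
of `G`. Iterated transfers detect the cup product of these forms, because a product of nonzero
linear polynomials is nonzero; hence there are arbitrarily small simplices of words on which the
cocycles of all the functions are nonzero. The cocycle vanishes on labels that come from values near
a nonzero number, so such simplices can only accumulate at a common zero.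
-/

namespace DualTverberg

open Finset

section Cochains

variable {R V W : Type*} [CommRing R]

/-- Cochains on the full simplex with vertex set `V`. A cochain of degree `q` is a function of
`q + 1` vertices; it is encoded as a function of an infinite sequence that only looks at the first
`q + 1` entries, which avoids transports between the types `Fin (q + 1) → V`. -/
abbrev Cochain (R V : Type*) := (ℕ → V) → R

/-- The sequence with its `i`-th entry omitted. -/
def face (i : ℕ) (v : ℕ → V) : ℕ → V := fun a => if a < i then v a else v (a + 1)

/-- The sequence with its first `q` entries omitted. -/
def shift (q : ℕ) (v : ℕ → V) : ℕ → V := fun a => v (q + a)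

/-- The `i`-th simplex of the prism between `α` and `β`: apply `α` to the entries up to the `i`-th
one, and `β` to the entries from the `i`-th one on. -/
def splice (α β : V → W) (i : ℕ) (v : ℕ → V) : ℕ → W :=
  fun a => if a ≤ i then α (v a) else β (v (a - 1))

/-- The functions of the first `q` entries, that is, the cochains of degree `q - 1`. The complex is
not augmented, so that there is no nonzero such cochain for `q = 0`. -/
def cochains (R V : Type*) [CommRing R] (q : ℕ) : Submodule R (Cochain R V) where
  carrier := {ψ | DependsOn ψ (Set.Iio q) ∧ (q = 0 → ψ = 0)}
  zero_mem' := ⟨fun _ _ _ => rfl, fun _ => rfl⟩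
  add_mem' := fun h h' =>
    ⟨fun _ _ hv => congrArg₂ (· + ·) (h.1 hv) (h'.1 hv),
      fun hq => by rw [h.2 hq, h'.2 hq, add_zero]⟩
  smul_mem' := fun c _ h =>
    ⟨fun _ _ hv => congrArg (c • ·) (h.1 hv), fun hq => by rw [h.2 hq, smul_zero]⟩

/-- Pullback of cochains along a map of vertices. -/
def pullback (f : V → W) : Cochain R W →ₗ[R] Cochain R V := LinearMap.funLeft R R (f ∘ ·)

/-- The coboundary, from functions of `q` entries to functions of `q + 1` entries. -/
def coboundary (q : ℕ) : Module.End R (Cochain R V) :=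
  ∑ i ∈ range (q + 1), (-1 : R) ^ i • LinearMap.funLeft R R (face i)

/-- The prism operator, from functions of `q + 1` entries to functions of `q` entries. It is a
cochain homotopy between the pullbacks along `α` and `β`. -/
def prism (α β : V → W) (q : ℕ) : Cochain R W →ₗ[R] Cochain R V :=
  ∑ i ∈ range q, (-1 : R) ^ i • LinearMap.funLeft R R (splice α β i)

/-- The cup product of a cochain of degree `q` with another cochain. -/
def cup (q : ℕ) : Cochain R V →ₗ[R] Cochain R V →ₗ[R] Cochain R V :=
  (LinearMap.mul R (Cochain R V)).compl₂ (LinearMap.funLeft R R (shift q))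

@[simp]
theorem pullback_apply (f : V → W) (ψ : Cochain R W) (v : ℕ → V) :
    pullback f ψ v = ψ (f ∘ v) := rfl

theorem coboundary_apply (q : ℕ) (ψ : Cochain R V) (v : ℕ → V) :
    coboundary q ψ v = ∑ i ∈ range (q + 1), (-1) ^ i * ψ (face i v) := by
  simp [coboundary, LinearMap.sum_apply, Finset.sum_apply, LinearMap.funLeft_apply]

theorem prism_apply (α β : V → W) (q : ℕ) (ψ : Cochain R W) (v : ℕ → V) :
    prism α β q ψ v = ∑ i ∈ range q, (-1) ^ i * ψ (splice α β i v) := by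
  simp [prism, LinearMap.sum_apply, Finset.sum_apply, LinearMap.funLeft_apply]

@[simp]
theorem cup_apply (q : ℕ) (A B : Cochain R V) (v : ℕ → V) : cup q A B v = A v * B (shift q v) := rfl

theorem face_comp (f : V → W) (i : ℕ) (v : ℕ → V) : face i (f ∘ v) = f ∘ face i v := by
  funext a
  simp only [face, Function.comp_apply, apply_ite f]

theorem coboundary_pullback (f : V → W) (q : ℕ) (ψ : Cochain R W) :
    coboundary q (pullback f ψ) = pullback f (coboundary q ψ) := by
  funext v
  simp only [coboundary_apply, pullback_apply, face_comp]

theorem pullback_cup (f : V → W) (q : ℕ) (A B : Cochain R W) :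
    pullback f (cup q A B) = cup q (pullback f A) (pullback f B) := rfl

theorem pullback_comp_prism {f : V → V} {f' : W → W} {α β : V → W} (hα : α ∘ f = f' ∘ α)
    (hβ : β ∘ f = f' ∘ β) (q : ℕ) (ψ : Cochain R W) :
    pullback f (prism α β q ψ) = prism α β q (pullback f' ψ) := by
  have hs (i : ℕ) (v : ℕ → V) : splice α β i (f ∘ v) = f' ∘ splice α β i v := by
    funext a
    simp only [splice, Function.comp_apply, apply_ite f']
    exact if_congr Iff.rfl (congrFun hα _) (congrFun hβ _)
  funext v
  simp only [prism_apply, pullback_apply, hs]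

section Membership

variable {q : ℕ} {ψ : Cochain R V}

theorem apply_congr_of_mem_cochains (hψ : ψ ∈ cochains R V q) {v v' : ℕ → V}
    (h : ∀ a < q, v a = v' a) : ψ v = ψ v' :=
  hψ.1 h

theorem mem_cochains_succ (h : ∀ v v' : ℕ → V, (∀ a ≤ q, v a = v' a) → ψ v = ψ v') :
    ψ ∈ cochains R V (q + 1) :=
  ⟨fun v v' hv => h v v' fun a ha => hv a (Nat.lt_succ_of_le ha),
    fun hq => absurd hq q.succ_ne_zero⟩

theorem pullback_mem_cochains {ψ : Cochain R W} (f : V → W) (hψ : ψ ∈ cochains R W q) :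
    pullback f ψ ∈ cochains R V q :=
  ⟨fun _ _ hv => apply_congr_of_mem_cochains hψ fun a ha => congrArg f (hv a ha),
    fun hq => by rw [hψ.2 hq, map_zero]⟩

theorem prism_mem_cochains {ψ : Cochain R W} (α β : V → W) (hψ : ψ ∈ cochains R W (q + 1)) :
    prism α β q ψ ∈ cochains R V q := by
  refine ⟨fun v v' hv => ?_, fun hq => by simp [prism, hq]⟩
  simp only [prism_apply]
  refine sum_congr rfl fun i hi => congrArg _ (apply_congr_of_mem_cochains hψ fun a ha => ?_)
  have hi := mem_range.1 hi
  simp only [splice]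
  split_ifs with hai
  · rw [hv a (by simp; omega)]
  · rw [hv (a - 1) (by simp; omega)]

theorem cup_mem_cochains {A B : Cochain R V} {r : ℕ} (hA : A ∈ cochains R V (q + 1))
    (hB : B ∈ cochains R V (r + 1)) : cup q A B ∈ cochains R V (q + r + 1) :=
  mem_cochains_succ fun v v' hv => by
    rw [cup_apply, cup_apply, apply_congr_of_mem_cochains hA fun a ha => hv a (by omega),
      apply_congr_of_mem_cochains (v := shift q v) (v' := shift q v') hB
        fun a ha => hv (q + a) (by omega)]

end Membership

theorem sum_range_succ_range_succ (f : ℕ → ℕ → R) (m n : ℕ) :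
    ∑ i ∈ range (m + 1), ∑ l ∈ range (n + 1), f i l =
      ∑ i ∈ range m, ∑ l ∈ range n, f i l + ∑ i ∈ range m, f i n + ∑ l ∈ range (n + 1), f m l := by
  rw [sum_range_succ, ← sum_add_distrib]
  simp only [sum_range_succ _ n]

/-- The faces of the simplices of a prism: `f i l` is the `l`-th face of the `i`-th simplex, `g i l`
the `i`-th simplex over the `l`-th face, and `m i` the wall between the `i`-th simplex and the
preceding one. -/
theorem sum_prism_faces {f g : ℕ → ℕ → R} {m : ℕ → R}
    (hlt : ∀ i l, l ≤ i → f (i + 1) l = g i l) (hgt : ∀ i l, i < l → f i (l + 1) = g i l)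
    (hleft : ∀ i, f i i = m i) (hright : ∀ i, f i (i + 1) = m (i + 1)) (q : ℕ) :
    ∑ i ∈ range (q + 1), ∑ l ∈ range (q + 2), (-1 : R) ^ (i + l) * f i l =
      m 0 - m (q + 1) - ∑ i ∈ range q, ∑ l ∈ range (q + 1), (-1 : R) ^ (i + l) * g i l := by
  induction q with
  | zero => simp [sum_range_succ, hleft, hright, sub_eq_add_neg]
  | succ q ih =>
    have hcol : ∑ i ∈ range (q + 1), (-1 : R) ^ (i + (q + 2)) * f i (q + 2) =
        -∑ i ∈ range (q + 1), (-1 : R) ^ (i + (q + 1)) * g i (q + 1) := by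
      rw [← sum_neg_distrib]
      refine sum_congr rfl fun i hi => ?_
      rw [hgt i (q + 1) (mem_range.1 hi)]
      ring
    have hrow : ∑ l ∈ range (q + 1), (-1 : R) ^ (q + 1 + l) * f (q + 1) l =
        -∑ l ∈ range (q + 1), (-1 : R) ^ (q + l) * g q l := by
      rw [← sum_neg_distrib]
      refine sum_congr rfl fun l hl => ?_
      rw [hlt q l (Nat.le_of_lt_succ (mem_range.1 hl))]
      ring
    have hsign : ((-1 : R) ^ q) * (-1) ^ q = 1 := by rw [← mul_pow, neg_one_mul, neg_neg, one_pow]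
    rw [sum_range_succ_range_succ, ih, hcol, sum_range_succ _ (q + 2), sum_range_succ _ (q + 1),
      hrow, hleft, hright, sum_range_succ_range_succ _ q (q + 1), sum_range_succ _ (q + 1),
      sum_range_succ _ q]
    linear_combination (m (q + 1) - m (q + 2)) * hsign

theorem coboundary_prism_apply (α β : V → W) (q : ℕ) (ψ : Cochain R W) (v : ℕ → V) :
    coboundary q (prism α β q ψ) v =
      ∑ i ∈ range q, ∑ l ∈ range (q + 1), (-1) ^ (i + l) * ψ (splice α β i (face l v)) := by
  simp only [coboundary_apply, prism_apply, mul_sum]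
  rw [sum_comm]
  exact sum_congr rfl fun i _ => sum_congr rfl fun l _ => by ring

theorem prism_coboundary_add (α β : V → W) (q : ℕ) {ψ : Cochain R W}
    (hψ : ψ ∈ cochains R W (q + 1)) :
    prism α β (q + 1) (coboundary (q + 1) ψ) + coboundary q (prism α β q ψ) =
      pullback β ψ - pullback α ψ := by
  funext v
  let wall (i : ℕ) : ℕ → W := fun a => if a < i then α (v a) else β (v a)
  have hfaces := sum_prism_faces (f := fun i l => ψ (face l (splice α β i v)))
    (g := fun i l => ψ (splice α β i (face l v))) (m := fun i => ψ (wall i)) ?_ ?_ ?_ ?_ q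
  · have hlast : ψ (wall (q + 1)) = pullback α ψ v :=
      apply_congr_of_mem_cochains hψ fun a ha => if_pos ha
    have hfirst : ψ (wall 0) = pullback β ψ v := rfl
    have hprism : prism α β (q + 1) (coboundary (q + 1) ψ) v =
        ∑ i ∈ range (q + 1), ∑ l ∈ range (q + 2),
          (-1 : R) ^ (i + l) * ψ (face l (splice α β i v)) := by
      simp only [coboundary_apply, prism_apply, mul_sum, pow_add, mul_assoc]
    rw [Pi.add_apply, Pi.sub_apply, hprism, hfaces, coboundary_prism_apply, sub_add_cancel, hfirst,
      hlast]
  all_goals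
    intros
    refine congrArg ψ (funext fun a => ?_)
    simp only [face, splice, wall]
    split_ifs <;> first | rfl | omega | (congr 2; omega)

theorem shift_face_of_le {i q : ℕ} (h : i ≤ q) (v : ℕ → V) :
    shift q (face i v) = shift (q + 1) v := by
  funext a
  simp only [shift, face, if_neg (show ¬q + a < i by omega)]
  congr 1
  omega

theorem shift_face_add (q i : ℕ) (v : ℕ → V) : shift q (face (q + i) v) = face i (shift q v) := by
  funext a
  simp only [shift, face, add_lt_add_iff_left, add_assoc]

theorem coboundary_cup (q r : ℕ) {A : Cochain R V} (hA : A ∈ cochains R V (q + 1))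
    (B : Cochain R V) :
    coboundary (q + r + 1) (cup q A B) =
      cup (q + 1) (coboundary (q + 1) A) B + (-1 : R) ^ q • cup q A (coboundary (r + 1) B) := by
  funext v
  have hface (i : ℕ) (hi : q < i) : A (face i v) = A v :=
    apply_congr_of_mem_cochains hA fun a ha => if_pos (by omega)
  have hfront : ∑ i ∈ range (q + 1), (-1 : R) ^ i * cup q A B (face i v) =
      (∑ i ∈ range (q + 1), (-1 : R) ^ i * A (face i v)) * B (shift (q + 1) v) := by
    rw [sum_mul]
    refine sum_congr rfl fun i hi => ?_
    rw [cup_apply, shift_face_of_le (Nat.le_of_lt_succ (mem_range.1 hi)), mul_assoc]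
  have hback : ∑ i ∈ range (r + 1), (-1 : R) ^ (q + 1 + i) * cup q A B (face (q + 1 + i) v) =
      (-1) ^ q *
        (A v * ∑ i ∈ range (r + 1), (-1 : R) ^ (i + 1) * B (face (i + 1) (shift q v))) := by
    simp only [mul_sum]
    refine sum_congr rfl fun i _ => ?_
    rw [cup_apply, hface _ (by omega), add_assoc, add_comm 1 i, shift_face_add]
    ring
  rw [coboundary_apply, show q + r + 1 + 1 = (q + 1) + (r + 1) by ring, sum_range_add, hfront,
    hback]
  simp only [Pi.add_apply, Pi.smul_apply, cup_apply, coboundary_apply, smul_eq_mul]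
  rw [sum_range_succ _ (q + 1), sum_range_succ' _ (r + 1), hface (q + 1) q.lt_succ_self,
    ← shift_face_add, add_zero, shift_face_of_le le_rfl]
  ring

theorem prism_cup (α β : V → W) (q r : ℕ) {A : Cochain R W} (hA : A ∈ cochains R W (q + 1))
    (B : Cochain R W) :
    prism α β (q + r) (cup q A B) =
      cup (q - 1) (prism α β q A) (pullback β B) +
        (-1 : R) ^ q • cup q (pullback α A) (prism α β r B) := by
  funext v
  simp only [Pi.add_apply, Pi.smul_apply, smul_eq_mul, cup_apply, prism_apply, sum_range_add,
    sum_mul, mul_sum, pullback_apply]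
  congr 1
  · refine sum_congr rfl fun i hi => ?_
    have hshift : shift q (splice α β i v) = β ∘ shift (q - 1) v := by
      have hi := mem_range.1 hi
      funext a
      simp only [shift, splice, Function.comp_apply, if_neg (show ¬q + a ≤ i by omega)]
      congr 2
      omega
    rw [hshift, mul_assoc]
  · refine sum_congr rfl fun i _ => ?_
    have hfront : A (splice α β (q + i) v) = A (α ∘ v) :=
      apply_congr_of_mem_cochains hA fun a ha => if_pos (by omega)
    have hshift : shift q (splice α β (q + i) v) = splice α β i (shift q v) := by
      funext a
      simp only [shift, splice, add_le_add_iff_left]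
      split_ifs
      · rfl
      · congr 2
        omega
    rw [hfront, hshift, pow_add]
    ring

end Cochains

section Words

variable {p M : ℕ} {ι R : Type*} [CommRing R]

/-- Words with `M` letters in the elementary abelian group `(ℤ/p)^ι`. A word stands for a step
function from an interval to the group, and words with few cuts for the points of a low-dimensional
skeleton of the infinite join of copies of the group, which is a model of its classifying space. -/
abbrev Word (p M : ℕ) (ι : Type*) := Fin M → ι → ZMod p

/-- The action of the group on words. -/
def translate (g : ι → ZMod p) (u : Word p M ι) : Word p M ι := fun x => u x + g

/-- Cochains invariant under the group. -/
def invariants (p M : ℕ) (ι R : Type*) [CommRing R] : Submodule R (Cochain R (Word p M ι)) where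
  carrier := {ψ | ∀ g, pullback (translate g) ψ = ψ}
  zero_mem' := fun _ => map_zero _
  add_mem' := fun h h' g => by rw [map_add, h, h']
  smul_mem' := fun c _ h g => by rw [map_smul, h]

theorem translate_add (g h : ι → ZMod p) (u : Word p M ι) :
    translate (g + h) u = translate g (translate h u) := by
  funext x
  simp only [translate]
  abel

open Classical in
/-- The positions at which a word is about to change. -/
noncomputable def cuts (u : Word p M ι) : Finset (Fin M) :=
  {x | ∃ h : x.1 + 1 < M, u x ≠ u ⟨x.1 + 1, h⟩}

open Classical in
/-- The positions at which two words differ. -/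
noncomputable def diffs (u u' : Word p M ι) : Finset (Fin M) := {x | u x ≠ u' x}

/-- A simplex of words is `s`-small if its vertices have at most `s` cuts each and pairwise differ
in at most `s` letters. -/
def IsSmall (s : ℕ) (v : ℕ → Word p M ι) : Prop :=
  (∀ a b, #(diffs (v a) (v b)) ≤ s) ∧ ∀ a, #(cuts (v a)) ≤ s

/-- The cochains that vanish on the `s`-small simplices. -/
def smallVanishing (p M : ℕ) (ι R : Type*) [CommRing R] (s : ℕ) :
    Submodule R (Cochain R (Word p M ι)) where
  carrier := {ψ | ∀ v, IsSmall s v → ψ v = 0}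
  zero_mem' := fun _ _ => rfl
  add_mem' := fun h h' v hv => by rw [Pi.add_apply, h v hv, h' v hv, add_zero]
  smul_mem' := fun c _ h v hv => by rw [Pi.smul_apply, h v hv, smul_zero]

theorem IsSmall.translate {s : ℕ} {v : ℕ → Word p M ι} (hv : IsSmall s v) (g : ι → ZMod p) :
    IsSmall s (translate g ∘ v) := by
  classical
  have hdiffs (u u' : Word p M ι) :
      diffs (DualTverberg.translate g u) (DualTverberg.translate g u') = diffs u u' :=
    filter_congr fun x _ => (add_left_injective g).ne_iff
  have hcuts (u : Word p M ι) : cuts (DualTverberg.translate g u) = cuts u :=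
    filter_congr fun x _ => exists_congr fun _ => (add_left_injective g).ne_iff
  exact ⟨fun a b => (hdiffs _ _).symm ▸ hv.1 a b, fun a => (hcuts _).symm ▸ hv.2 a⟩

variable [DecidableEq ι]

/-- The word with the `j`-th coordinates of the letters from the `y`-th one on replaced by zero. -/
def clearFrom (j : ι) (y : ℕ) (u : Word p M ι) : Word p M ι :=
  fun x => if y ≤ x then Function.update (u x) j 0 else u x

/-- Clearing the `j`-th coordinate letter by letter, starting from the last one, is a homotopy from
the identity of the set of words to `clearFrom j 0`. -/
def clearHomotopy (j : ι) (q : ℕ) : Module.End R (Cochain R (Word p M ι)) :=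
  ∑ y ∈ range M, prism (clearFrom j (y + 1)) (clearFrom j y) q

/-- The action on cochains of the element `∑ t, c t • [t]` of the group ring of the `j`-th
coordinate subgroup. -/
def translationOp [NeZero p] (j : ι) (c : ZMod p → R) : Module.End R (Cochain R (Word p M ι)) :=
  ∑ t, c t • pullback (translate (Pi.single j t))

theorem clearFrom_length (j : ι) : clearFrom j M = (id : Word p M ι → Word p M ι) := by
  funext u x
  exact if_neg (not_le.2 x.2)

theorem clearFrom_zero_translate_single (j : ι) (t : ZMod p) (u : Word p M ι) :
    clearFrom j 0 (translate (Pi.single j t) u) = clearFrom j 0 u := by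
  funext x i
  by_cases h : i = j <;> simp [clearFrom, translate, Function.update_apply, h]

theorem clearFrom_translate_single_of_ne {i j : ι} (hij : i ≠ j) (y : ℕ) (t : ZMod p)
    (u : Word p M ι) :
    clearFrom j y (translate (Pi.single i t) u) = translate (Pi.single i t) (clearFrom j y u) := by
  funext x l
  by_cases h : l = j
  · subst h
    by_cases hy : y ≤ x <;> simp [clearFrom, translate, hy, hij.symm]
  · by_cases hy : y ≤ x <;> simp [clearFrom, translate, hy, h]

theorem clearHomotopy_apply (j : ι) (q : ℕ) (ψ : Cochain R (Word p M ι)) :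
    clearHomotopy j q ψ = ∑ y ∈ range M, prism (clearFrom j (y + 1)) (clearFrom j y) q ψ :=
  LinearMap.sum_apply _ _ _

theorem clearHomotopy_mem_cochains (j : ι) {q : ℕ} {ψ : Cochain R (Word p M ι)}
    (hψ : ψ ∈ cochains R _ (q + 1)) : clearHomotopy j q ψ ∈ cochains R _ q := by
  rw [clearHomotopy_apply]
  exact sum_mem fun y _ => prism_mem_cochains _ _ hψ

theorem clearHomotopy_coboundary_add (j : ι) (q : ℕ) {ψ : Cochain R (Word p M ι)}
    (hψ : ψ ∈ cochains R _ (q + 1)) :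
    clearHomotopy j (q + 1) (coboundary (q + 1) ψ) + coboundary q (clearHomotopy j q ψ) =
      pullback (clearFrom j 0) ψ - ψ := by
  have htop : pullback (clearFrom j M) ψ = ψ := by rw [clearFrom_length]; rfl
  simp only [clearHomotopy_apply, map_sum, ← sum_add_distrib, prism_coboundary_add _ _ q hψ]
  rw [sum_range_sub' fun y => pullback (clearFrom j y) ψ, htop]

section TranslationOp

variable [NeZero p]

theorem translationOp_apply (j : ι) (c : ZMod p → R) (ψ : Cochain R (Word p M ι)) :
    translationOp j c ψ = ∑ t, c t • pullback (translate (Pi.single j t)) ψ := by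
  simp only [translationOp, LinearMap.sum_apply, LinearMap.smul_apply]

theorem translationOp_mem_cochains (j : ι) (c : ZMod p → R) {q : ℕ} {ψ : Cochain R (Word p M ι)}
    (hψ : ψ ∈ cochains R _ q) : translationOp j c ψ ∈ cochains R _ q := by
  rw [translationOp_apply]
  exact sum_mem fun t _ => Submodule.smul_mem _ _ (pullback_mem_cochains _ hψ)

theorem translationOp_coboundary (j : ι) (c : ZMod p → R) (q : ℕ) (ψ : Cochain R (Word p M ι)) :
    translationOp j c (coboundary q ψ) = coboundary q (translationOp j c ψ) := by
  simp only [translationOp_apply, map_sum, map_smul, coboundary_pullback]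

theorem translationOp_pullback_clearFrom_zero (j : ι) {c : ZMod p → R} (hc : ∑ t, c t = 0)
    (ψ : Cochain R (Word p M ι)) : translationOp j c (pullback (clearFrom j 0) ψ) = 0 := by
  have hinv (t : ZMod p) : pullback (translate (Pi.single j t)) (pullback (clearFrom j 0) ψ) =
      pullback (clearFrom j 0) ψ := by
    funext v
    exact congrArg ψ (funext fun a => clearFrom_zero_translate_single j t (v a))
  simp only [translationOp_apply, hinv, ← sum_smul, hc, zero_smul]

theorem translationOp_of_mem_invariants (j : ι) (c : ZMod p → R) {ψ : Cochain R (Word p M ι)}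
    (hψ : ψ ∈ invariants p M ι R) : translationOp j c ψ = (∑ t, c t) • ψ := by
  simp only [translationOp_apply, hψ _, sum_smul]

theorem translationOp_comm (i j : ι) (c c' : ZMod p → R) (ψ : Cochain R (Word p M ι)) :
    translationOp i c (translationOp j c' ψ) = translationOp j c' (translationOp i c ψ) := by
  have hcomm (s t : ZMod p) :
      pullback (translate (Pi.single i s)) (pullback (translate (Pi.single j t)) ψ) =
        pullback (translate (Pi.single j t)) (pullback (translate (Pi.single i s)) ψ) := by
    funext v
    refine congrArg ψ (funext fun a => ?_)
    simp only [Function.comp_apply, ← translate_add, add_comm]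
  simp only [translationOp_apply, map_sum, map_smul, hcomm, smul_sum]
  rw [sum_comm]
  exact sum_congr rfl fun t _ => sum_congr rfl fun s _ => smul_comm _ _ _

theorem translationOp_one_comp (j : ι) (c : ZMod p → R) (ψ : Cochain R (Word p M ι)) :
    translationOp j 1 (translationOp j c ψ) = (∑ t, c t) • translationOp j 1 ψ := by
  have habsorb (t : ZMod p) :
      translationOp j 1 (pullback (translate (Pi.single j t)) ψ) = translationOp j 1 ψ := by
    simp only [translationOp_apply, Pi.one_apply, one_smul]
    refine Fintype.sum_equiv (Equiv.addLeft t) _ _ fun s => ?_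
    funext v
    refine congrArg ψ (funext fun a => ?_)
    simp only [Function.comp_apply, ← translate_add, ← Pi.single_add, Equiv.coe_addLeft]
  rw [translationOp_apply j c, map_sum, sum_smul]
  simp only [map_smul, habsorb]

theorem translationOp_clearHomotopy_comm {i j : ι} (hij : i ≠ j) (c : ZMod p → R) (q : ℕ)
    (ψ : Cochain R (Word p M ι)) :
    translationOp i c (clearHomotopy j q ψ) = clearHomotopy j q (translationOp i c ψ) := by
  have hprism (t : ZMod p) (y : ℕ) :
      pullback (translate (Pi.single i t)) (prism (clearFrom j (y + 1)) (clearFrom j y) q ψ) =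
        prism (clearFrom j (y + 1)) (clearFrom j y) q (pullback (translate (Pi.single i t)) ψ) :=
    pullback_comp_prism (funext (clearFrom_translate_single_of_ne hij _ t))
      (funext (clearFrom_translate_single_of_ne hij _ t)) q ψ
  simp only [clearHomotopy_apply, translationOp_apply, map_sum, map_smul, hprism, smul_sum]
  exact sum_comm

theorem translationOp_cup_of_left_mem (j : ι) (c : ZMod p → R) (q : ℕ)
    {A : Cochain R (Word p M ι)} (hA : A ∈ invariants p M ι R) (B : Cochain R (Word p M ι)) :
    translationOp j c (cup q A B) = cup q A (translationOp j c B) := by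
  simp only [translationOp_apply, pullback_cup, hA _, map_sum, map_smul]

theorem translationOp_cup_of_right_fixed {j : ι} (c : ZMod p → R) (q : ℕ)
    (A : Cochain R (Word p M ι)) {B : Cochain R (Word p M ι)}
    (hB : ∀ t, pullback (translate (Pi.single j t)) B = B) :
    translationOp j c (cup q A B) = cup q (translationOp j c A) B := by
  simp only [translationOp_apply, pullback_cup, hB, map_sum, map_smul, LinearMap.sum_apply,
    LinearMap.smul_apply]

end TranslationOp

section Smallness

variable {s : ℕ} {ψ : Cochain R (Word p M ι)}

theorem translationOp_mem_smallVanishing [NeZero p] (j : ι) (c : ZMod p → R)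
    (hψ : ψ ∈ smallVanishing p M ι R s) : translationOp j c ψ ∈ smallVanishing p M ι R s := by
  rw [translationOp_apply]
  exact sum_mem fun t _ => Submodule.smul_mem _ _ fun v hv => hψ _ (hv.translate _)

theorem card_le_add_one_of_subset {n y : ℕ} {s t : Finset (Fin n)}
    (h : ∀ x ∈ s, x ∉ t → x.1 = y) : #s ≤ #t + 1 := by
  have hdiff : #(s \ t) ≤ 1 := card_le_one.2 fun a ha b hb => by
    rw [mem_sdiff] at ha hb
    exact Fin.ext ((h a ha.1 ha.2).trans (h b hb.1 hb.2).symm)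
  calc #s ≤ #(s \ t) + #t := card_le_card_sdiff_add_card
    _ ≤ #t + 1 := by omega

theorem card_cuts_clearFrom_le (j : ι) (y : ℕ) (u : Word p M ι) :
    #(cuts (clearFrom j y u)) ≤ #(cuts u) + 1 := by
  refine card_le_add_one_of_subset (y := y - 1) fun x hx hxu => ?_
  simp only [cuts, mem_filter, mem_univ, true_and, not_exists, not_not] at hx hxu
  obtain ⟨h, hx⟩ := hx
  by_contra hy
  refine hx ?_
  simp only [clearFrom, ← hxu h]
  split_ifs <;> first | rfl | omega

theorem card_diffs_clearFrom_le (j : ι) {y y' y₀ : ℕ} (hy : y = y₀ ∨ y = y₀ + 1)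
    (hy' : y' = y₀ ∨ y' = y₀ + 1) (u u' : Word p M ι) :
    #(diffs (clearFrom j y u) (clearFrom j y' u')) ≤ #(diffs u u') + 1 := by
  refine card_le_add_one_of_subset (y := y₀) fun x hx hxu => ?_
  simp only [diffs, mem_filter, mem_univ, true_and, not_not] at hx hxu
  by_contra hxy
  refine hx ?_
  simp only [clearFrom, ← hxu]
  split_ifs <;> first | rfl | omega

theorem IsSmall.splice_clearFrom {v : ℕ → Word p M ι} (hv : IsSmall s v) (j : ι) (y i : ℕ) :
    IsSmall (s + 1) (splice (clearFrom j (y + 1)) (clearFrom j y) i v) := by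
  have hsplice (a : ℕ) : ∃ b y', (y' = y ∨ y' = y + 1) ∧
      splice (clearFrom j (y + 1)) (clearFrom j y) i v a = clearFrom j y' (v b) := by
    simp only [splice]
    split_ifs
    · exact ⟨a, y + 1, Or.inr rfl, rfl⟩
    · exact ⟨a - 1, y, Or.inl rfl, rfl⟩
  refine ⟨fun a b => ?_, fun a => ?_⟩
  · obtain ⟨a', y₁, hy₁, ha⟩ := hsplice a
    obtain ⟨b', y₂, hy₂, hb⟩ := hsplice b
    rw [ha, hb]
    exact (card_diffs_clearFrom_le j hy₁ hy₂ _ _).trans (Nat.succ_le_succ (hv.1 _ _))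
  · obtain ⟨a', y₁, -, ha⟩ := hsplice a
    rw [ha]
    exact (card_cuts_clearFrom_le j y₁ _).trans (Nat.succ_le_succ (hv.2 _))

theorem clearHomotopy_mem_smallVanishing (j : ι) (q : ℕ)
    (hψ : ψ ∈ smallVanishing p M ι R (s + 1)) :
    clearHomotopy j q ψ ∈ smallVanishing p M ι R s := by
  rw [clearHomotopy_apply]
  refine sum_mem fun y _ v hv => ?_
  rw [prism_apply]
  exact sum_eq_zero fun i _ => by rw [hψ _ (hv.splice_clearFrom j y i), mul_zero]

end Smallness

end Words

section Normalized

variable {V W W' R : Type*} [CommRing R] {q r : ℕ}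

/-- The cochains of degree `q - 1` that only depend on the images of the vertices under `f`, and
that vanish whenever two consecutive vertices have the same image. -/
def normalizedCochains (R : Type*) [CommRing R] (f : V → W) (q : ℕ) :
    Submodule R (Cochain R V) where
  carrier := {ψ | (∀ v v' : ℕ → V, (∀ a < q, f (v a) = f (v' a)) → ψ v = ψ v') ∧
    ∀ (v : ℕ → V) (a : ℕ), a + 1 < q → f (v a) = f (v (a + 1)) → ψ v = 0}
  zero_mem' := ⟨fun _ _ _ => rfl, fun _ _ _ _ => rfl⟩
  add_mem' := fun h h' => ⟨fun v v' hv => congrArg₂ (· + ·) (h.1 v v' hv) (h'.1 v v' hv),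
    fun v a ha hv => by rw [Pi.add_apply, h.2 v a ha hv, h'.2 v a ha hv, add_zero]⟩
  smul_mem' := fun c _ h => ⟨fun v v' hv => congrArg (c • ·) (h.1 v v' hv),
    fun v a ha hv => by rw [Pi.smul_apply, h.2 v a ha hv, smul_zero]⟩

theorem normalizedCochains_succ_le (f : V → W) :
    normalizedCochains R f (q + 1) ≤ cochains R V (q + 1) :=
  fun _ hψ => mem_cochains_succ fun v v' h =>
    hψ.1 v v' fun a ha => congrArg f (h a (Nat.le_of_lt_succ ha))

theorem normalizedCochains_comp_le (f : V → W) (g : W → W') :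
    normalizedCochains R (g ∘ f) q ≤ normalizedCochains R f q :=
  fun _ hψ => ⟨fun v v' h => hψ.1 v v' fun a ha => congrArg g (h a ha),
    fun v a ha h => hψ.2 v a ha (congrArg g h)⟩

theorem pullback_mem_normalizedCochains (f : V → W) {ψ : Cochain R W}
    (hψ : ψ ∈ normalizedCochains R id q) : pullback f ψ ∈ normalizedCochains R f q :=
  ⟨fun v v' h => hψ.1 (f ∘ v) (f ∘ v') h, fun v a ha h => hψ.2 (f ∘ v) a ha h⟩

variable {f : V → W}

theorem pullback_eq_self_of_mem_normalizedCochains {ψ : Cochain R V}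
    (hψ : ψ ∈ normalizedCochains R f q) {α : V → V} (hα : f ∘ α = f) : pullback α ψ = ψ :=
  funext fun v => hψ.1 (α ∘ v) v fun a _ => congrFun hα (v a)

theorem cup_mem_normalizedCochains {A B : Cochain R V} (hA : A ∈ normalizedCochains R f (q + 1))
    (hB : B ∈ normalizedCochains R f (r + 1)) :
    cup q A B ∈ normalizedCochains R f (q + r + 1) := by
  refine ⟨fun v v' h => ?_, fun v a ha h => ?_⟩
  · rw [cup_apply, cup_apply, hA.1 v v' fun a ha => h a (by omega),
      hB.1 (shift q v) (shift q v') fun a ha => h (q + a) (by omega)]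
  · rw [cup_apply]
    rcases lt_or_ge a q with haq | haq
    · rw [hA.2 v a (by omega) h, zero_mul]
    · obtain ⟨b, rfl⟩ := Nat.exists_eq_add_of_le haq
      rw [hB.2 (shift q v) b (by omega) h, mul_zero]

theorem prism_mem_normalizedCochains {α β : V → V} {α' β' : W → W} (hα : f ∘ α = α' ∘ f)
    (hβ : f ∘ β = β' ∘ f) {ψ : Cochain R V} (hψ : ψ ∈ normalizedCochains R f (q + 1)) :
    prism α β q ψ ∈ normalizedCochains R f q := by
  have hsplice (i a : ℕ) (v : ℕ → V) :
      f (splice α β i v a) = if a ≤ i then α' (f (v a)) else β' (f (v (a - 1))) := by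
    simp only [splice, apply_ite f]
    exact if_congr Iff.rfl (congrFun hα _) (congrFun hβ _)
  refine ⟨fun v v' h => ?_, fun v a ha h => ?_⟩
  · simp only [prism_apply]
    refine sum_congr rfl fun i hi => congrArg _ (hψ.1 _ _ fun a ha => ?_)
    have hi := mem_range.1 hi
    rw [hsplice, hsplice]
    split_ifs with hai
    · rw [h a (by omega)]
    · rw [h (a - 1) (by omega)]
  · rw [prism_apply]
    refine sum_eq_zero fun i _ => ?_
    rcases lt_or_ge a i with hai | hai
    · rw [hψ.2 _ a (by omega) (by rw [hsplice, hsplice, if_pos (by omega), if_pos (by omega), h]),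
        mul_zero]
    · rw [hψ.2 _ (a + 1) (by omega) (by
        rw [hsplice, hsplice, if_neg (by omega), if_neg (by omega)]
        exact congrArg β' h), mul_zero]

theorem prism_eq_zero_of_mem_normalizedCochains {α β : V → V} (h : f ∘ α = f ∘ β)
    {ψ : Cochain R V} (hψ : ψ ∈ normalizedCochains R f (q + 1)) : prism α β q ψ = 0 := by
  funext v
  rw [prism_apply]
  refine sum_eq_zero fun i hi => ?_
  rw [hψ.2 _ i (by have := mem_range.1 hi; omega), mul_zero]
  simpa [splice] using congrFun h (v i)

theorem prism_congr_left_of_mem_normalizedCochains {α α' : V → V} (h : f ∘ α = f ∘ α') (β : V → V)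
    {ψ : Cochain R V} (hψ : ψ ∈ normalizedCochains R f (q + 1)) :
    prism α β q ψ = prism α' β q ψ := by
  funext v
  simp only [prism_apply]
  refine sum_congr rfl fun i _ => congrArg _ (hψ.1 _ _ fun a _ => ?_)
  simp only [splice]
  split_ifs
  · exact congrFun h (v a)
  · rfl

end Normalized

section TransferStep

variable {p M : ℕ} {ι R : Type*} [CommRing R] [DecidableEq ι] [NeZero p]

/-- Clear the `j`-th coordinate, then apply an element of the group ring of the `j`-th coordinate
subgroup. For elements of augmentation zero this lowers the degree of invariant cochains in a way
that, up to sign, commutes with the coboundary. -/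
def transferStep (j : ι) (c : ZMod p → R) (q : ℕ) : Module.End R (Cochain R (Word p M ι)) :=
  translationOp j c ∘ₗ clearHomotopy j q

theorem transferStep_apply (j : ι) (c : ZMod p → R) (q : ℕ) (ψ : Cochain R (Word p M ι)) :
    transferStep j c q ψ = translationOp j c (clearHomotopy j q ψ) := rfl

theorem transferStep_mem_smallVanishing (j : ι) (c : ZMod p → R) (q : ℕ) {s : ℕ}
    {ψ : Cochain R (Word p M ι)} (hψ : ψ ∈ smallVanishing p M ι R (s + 1)) :
    transferStep j c q ψ ∈ smallVanishing p M ι R s :=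
  translationOp_mem_smallVanishing j c (clearHomotopy_mem_smallVanishing j q hψ)

theorem transferStep_zero (j : ι) (c : ZMod p → R) (ψ : Cochain R (Word p M ι)) :
    transferStep j c 0 ψ = 0 := by
  simp [transferStep_apply, clearHomotopy_apply, prism]

theorem transferStep_coboundary (j : ι) {c : ZMod p → R} (hc : ∑ t, c t = 0) {q : ℕ}
    {ψ : Cochain R (Word p M ι)} (hψ : ψ ∈ cochains R _ q) (hcψ : translationOp j c ψ = 0) :
    transferStep j c q (coboundary q ψ) =
      coboundary (q - 1) (-transferStep j c (q - 1) ψ) := by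
  cases q with
  | zero => simp [hψ.2 rfl]
  | succ q =>
    have hB := clearHomotopy_coboundary_add j q hψ
    rw [transferStep_apply, eq_sub_of_add_eq hB, map_sub, map_sub, hcψ,
      translationOp_pullback_clearFrom_zero j hc, translationOp_coboundary]
    simp [transferStep_apply]

/-- The cochains annihilated by the norm elements of all the coordinate subgroups. -/
def nullCochains (p M : ℕ) (ι R : Type*) [CommRing R] [DecidableEq ι] [NeZero p] (q : ℕ) :
    Submodule R (Cochain R (Word p M ι)) :=
  cochains R _ q ⊓ ⨅ i, LinearMap.ker (translationOp i 1)

theorem mem_nullCochains {q : ℕ} {ψ : Cochain R (Word p M ι)} :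
    ψ ∈ nullCochains p M ι R q ↔ ψ ∈ cochains R _ q ∧ ∀ i, translationOp i 1 ψ = 0 := by
  simp [nullCochains]

theorem transferStep_mem_nullCochains (j : ι) {c : ZMod p → R} (hc : ∑ t, c t = 0) {q : ℕ}
    {ψ : Cochain R (Word p M ι)} (hψ : ψ ∈ nullCochains p M ι R q) :
    transferStep j c (q - 1) ψ ∈ nullCochains p M ι R (q - 1) := by
  rw [mem_nullCochains] at hψ ⊢
  cases q with
  | zero => simp [hψ.1.2 rfl]
  | succ q =>
    refine ⟨translationOp_mem_cochains j c (clearHomotopy_mem_cochains j hψ.1), fun i => ?_⟩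
    rw [transferStep_apply]
    by_cases hij : i = j
    · rw [hij, translationOp_one_comp, hc, zero_smul]
    · rw [translationOp_comm, translationOp_clearHomotopy_comm hij, hψ.2, map_zero, map_zero]

end TransferStep

section Head

variable {p M : ℕ} [NeZero M] {ι R : Type*} [CommRing R]

/-- The first letter of a word. -/
def head (u : Word p M ι) : ι → ZMod p := u 0

/-- The `i`-th coordinate of the first letter of a word. -/
def headCoord (i : ι) (u : Word p M ι) : ZMod p := u 0 i

theorem headCoord_mem {q : ℕ} (i : ι) {ψ : Cochain R (Word p M ι)}
    (hψ : ψ ∈ normalizedCochains R (headCoord i) q) : ψ ∈ normalizedCochains R head q :=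
  normalizedCochains_comp_le head (fun g => g i) hψ

variable [DecidableEq ι]

theorem head_comp_clearFrom_succ (j : ι) (y : ℕ) :
    head ∘ clearFrom j (y + 1) = (head : Word p M ι → ι → ZMod p) := by
  funext u
  simp [head, clearFrom]

theorem head_comp_clearFrom_zero (j : ι) :
    head ∘ clearFrom j 0 = (Function.update · j 0) ∘ (head : Word p M ι → ι → ZMod p) := rfl

theorem headCoord_comp_clearFrom_of_ne {i j : ι} (hij : i ≠ j) (y : ℕ) :
    headCoord i ∘ clearFrom j y = (headCoord i : Word p M ι → ZMod p) := by
  funext u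
  simp only [Function.comp_apply, headCoord, clearFrom]
  split_ifs
  · exact Function.update_of_ne hij _ _
  · rfl

theorem headCoord_comp_translate_single_of_ne {i j : ι} (hij : i ≠ j) (t : ZMod p) :
    headCoord i ∘ translate (Pi.single j t) = (headCoord i : Word p M ι → ZMod p) := by
  funext u
  simp [headCoord, translate, hij]

theorem headCoord_clearFrom_zero (j : ι) (u : Word p M ι) :
    headCoord j (clearFrom j 0 u) = 0 := by
  simp [headCoord, clearFrom]

/-- Only the last of the steps that clear a coordinate changes the first letter. -/
theorem clearHomotopy_of_mem_normalizedCochains (j : ι) {q : ℕ} {ψ : Cochain R (Word p M ι)}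
    (hψ : ψ ∈ normalizedCochains R head (q + 1)) :
    clearHomotopy j q ψ = prism id (clearFrom j 0) q ψ := by
  rw [clearHomotopy_apply, sum_eq_single_of_mem 0 (mem_range.2 (NeZero.pos M))]
  · exact prism_congr_left_of_mem_normalizedCochains (head_comp_clearFrom_succ j 0) _ hψ
  · intro y _ hy
    obtain ⟨y, rfl⟩ := Nat.exists_eq_succ_of_ne_zero hy
    exact prism_eq_zero_of_mem_normalizedCochains
      ((head_comp_clearFrom_succ j _).trans (head_comp_clearFrom_succ j y).symm) hψ

theorem clearHomotopy_mem_normalizedCochains (j : ι) {q : ℕ} {ψ : Cochain R (Word p M ι)}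
    (hψ : ψ ∈ normalizedCochains R head (q + 1)) :
    clearHomotopy j q ψ ∈ normalizedCochains R head q := by
  rw [clearHomotopy_of_mem_normalizedCochains j hψ]
  exact prism_mem_normalizedCochains (f := head) (α' := id) rfl (head_comp_clearFrom_zero j) hψ

variable [NeZero p]

theorem translationOp_mem_normalizedCochains (j : ι) (c : ZMod p → R) {q : ℕ}
    {ψ : Cochain R (Word p M ι)} (hψ : ψ ∈ normalizedCochains R head q) :
    translationOp j c ψ ∈ normalizedCochains R head q := by
  rw [translationOp_apply]
  refine sum_mem fun t _ => Submodule.smul_mem _ _ ⟨fun v v' h => ?_, fun v a ha h => ?_⟩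
  · exact hψ.1 _ _ fun a ha => congrArg (· + Pi.single j t) (h a ha)
  · exact hψ.2 _ a ha (congrArg (· + Pi.single j t) h)

theorem transferStep_mem_normalizedCochains (j : ι) (c : ZMod p → R) {q : ℕ}
    {ψ : Cochain R (Word p M ι)} (hψ : ψ ∈ normalizedCochains R head (q + 1)) :
    transferStep j c q ψ ∈ normalizedCochains R head q :=
  translationOp_mem_normalizedCochains j c (clearHomotopy_mem_normalizedCochains j hψ)

theorem transferStep_cup_self (j : ι) (c : ZMod p → R) {q r : ℕ} {A C : Cochain R (Word p M ι)}
    (hA : A ∈ normalizedCochains R head (q + 1)) (hA' : A ∈ invariants p M ι R)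
    (hC : C ∈ normalizedCochains R (headCoord j) (r + 2)) :
    transferStep j c (q + (r + 1)) (cup q A C) =
      (-1 : R) ^ q • cup q A (transferStep j c (r + 1) C) := by
  have hclear : pullback (clearFrom j 0) C = 0 := by
    funext v
    exact hC.2 _ 0 (by omega) (by simp only [Function.comp_apply, headCoord_clearFrom_zero])
  have hCh := headCoord_mem j hC
  rw [transferStep_apply, clearHomotopy_of_mem_normalizedCochains j
    (cup_mem_normalizedCochains hA hCh), prism_cup _ _ _ _ (normalizedCochains_succ_le _ hA),
    hclear, map_zero, zero_add, ← clearHomotopy_of_mem_normalizedCochains j hCh, map_smul]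
  exact congrArg _ (translationOp_cup_of_left_mem j c q hA' _)

theorem transferStep_cup_of_ne {i j : ι} (hij : i ≠ j) (c : ZMod p → R) {q r : ℕ}
    {A C : Cochain R (Word p M ι)} (hA : A ∈ normalizedCochains R head (q + 1))
    (hC : C ∈ normalizedCochains R (headCoord i) (r + 1)) :
    transferStep j c (q + r) (cup q A C) = cup (q - 1) (transferStep j c q A) C := by
  have hprism : prism id (clearFrom j 0) r C = 0 :=
    prism_eq_zero_of_mem_normalizedCochains (f := headCoord i) (α := id)
      (headCoord_comp_clearFrom_of_ne hij 0).symm hC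
  rw [transferStep_apply, clearHomotopy_of_mem_normalizedCochains j
    (cup_mem_normalizedCochains hA (headCoord_mem i hC)),
    prism_cup _ _ _ _ (normalizedCochains_succ_le _ hA), hprism, map_zero, smul_zero, add_zero,
    pullback_eq_self_of_mem_normalizedCochains hC (headCoord_comp_clearFrom_of_ne hij 0),
    ← clearHomotopy_of_mem_normalizedCochains j hA]
  exact translationOp_cup_of_right_fixed c _ _ fun t =>
    pullback_eq_self_of_mem_normalizedCochains hC (headCoord_comp_translate_single_of_ne hij t)

theorem transferStep_pullback_headCoord (j : ι) (c : ZMod p → R) {q : ℕ} {C : Cochain R (ZMod p)}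
    (hC : C ∈ normalizedCochains R id (q + 1)) (v : ℕ → Word p M ι) :
    transferStep j c q (pullback (headCoord j) C) v =
      ∑ t, c t * ∑ i ∈ range q,
        (-1) ^ i * C fun a => if a ≤ i then v a 0 j + t else 0 := by
  rw [transferStep_apply, clearHomotopy_of_mem_normalizedCochains j
    (headCoord_mem j (pullback_mem_normalizedCochains _ hC)), translationOp_apply, Finset.sum_apply]
  simp only [Pi.smul_apply, smul_eq_mul, pullback_apply, prism_apply]
  refine sum_congr rfl fun t _ => congrArg _ (sum_congr rfl fun i _ => congrArg _ (congrArg C ?_))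
  funext a
  simp only [Function.comp_apply, splice, apply_ite (headCoord j), headCoord_clearFrom_zero]
  simp [headCoord, translate]

end Head

section DetectingClass

/-- Two invariant cochains of degree `q` that differ by the coboundary of an invariant cochain. -/
def Cohomologous {p M : ℕ} {ι R : Type*} [CommRing R] (q : ℕ) (A B : Cochain R (Word p M ι)) :
    Prop :=
  ∃ ψ ∈ cochains R (Word p M ι) q ⊓ invariants p M ι R, A - B = coboundary q ψ

/-- An invariant cocycle on the cyclic group whose pullbacks along the coordinates detect nonzero
polynomials: it is additive in the labelling up to coboundaries, and for each coordinate `j` a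
transfer (integration along the `j`-th coordinate subgroup) strips off one factor pulled back
along `j`. -/
structure DetectingClass (p M : ℕ) (ι : Type*) [NeZero p] [NeZero M] [DecidableEq ι]
    [Fintype ι] where
  deg : ℕ
  cls : Cochain (ZMod p) (ZMod p)
  transfer : ι → ℕ → Module.End (ZMod p) (Cochain (ZMod p) (Word p M ι))
  cls_mem : cls ∈ normalizedCochains (ZMod p) id (deg + 1)
  coboundary_cls : coboundary (deg + 1) cls = 0
  pullback_add_cls : ∀ t, pullback (· + t) cls = cls
  transfer_zero : ∀ j ψ, transfer j 0 ψ = 0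
  transfer_mem_smallVanishing : ∀ {j q s ψ}, ψ ∈ smallVanishing p M ι (ZMod p) (s + deg) →
    transfer j q ψ ∈ smallVanishing p M ι (ZMod p) s
  transfer_coboundary : ∀ j {q ψ}, ψ ∈ nullCochains p M ι (ZMod p) q →
    ∃ ψ' ∈ nullCochains p M ι (ZMod p) (q - deg),
      transfer j q (coboundary q ψ) = coboundary (q - deg) ψ'
  transfer_cup_self : ∀ j {q A}, A ∈ normalizedCochains (ZMod p) head (q + 1) →
    A ∈ invariants p M ι (ZMod p) →
      transfer j (q + deg) (cup q A (pullback (headCoord j) cls)) = A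
  transfer_cup_of_ne : ∀ {i j q A}, i ≠ j → A ∈ normalizedCochains (ZMod p) head (q + 1) →
    transfer j (q + deg) (cup q A (pullback (headCoord i) cls)) =
      cup (q - deg) (transfer j q A) (pullback (headCoord i) cls)
  cohomologous : ∀ {l : Word p M ι → ZMod p} {χ : ι → ZMod p},
    (∀ g u, l (translate g u) = l u + χ ⬝ᵥ g) →
      Cohomologous deg (pullback l cls) (∑ i, χ i • pullback (headCoord i) cls)

theorem coboundary_one_apply {R V : Type*} [CommRing R] (ψ : Cochain R V) (v : ℕ → V) :
    coboundary 1 ψ v = ψ (face 0 v) - ψ (face 1 v) := by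
  simp [coboundary_apply, sum_range_succ, sub_eq_add_neg]

theorem coboundary_two_apply {R V : Type*} [CommRing R] (ψ : Cochain R V) (v : ℕ → V) :
    coboundary 2 ψ v = ψ (face 0 v) - ψ (face 1 v) + ψ (face 2 v) := by
  simp [coboundary_apply, sum_range_succ, sub_eq_add_neg]

section LinearPart

variable {p M : ℕ} [NeZero M] {ι : Type*} [Fintype ι]

/-- The difference between a label and the linear function of the first letter with the same
equivariance. -/
def deviation (l : Word p M ι → ZMod p) (χ : ι → ZMod p) (u : Word p M ι) : ZMod p :=
  l u - χ ⬝ᵥ head u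

theorem deviation_translate {l : Word p M ι → ZMod p} {χ : ι → ZMod p}
    (hl : ∀ g u, l (translate g u) = l u + χ ⬝ᵥ g) (g : ι → ZMod p) (u : Word p M ι) :
    deviation l χ (translate g u) = deviation l χ u := by
  have hhead : head (translate g u) = head u + g := rfl
  rw [deviation, deviation, hl, hhead, dotProduct_add]
  ring

theorem sub_eq_dotProduct_add_deviation (l : Word p M ι → ZMod p) (χ : ι → ZMod p)
    (u u' : Word p M ι) :
    l u' - l u = ∑ i, χ i * (headCoord i u' - headCoord i u) +
      (deviation l χ u' - deviation l χ u) := by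
  simp only [deviation, dotProduct, head, headCoord, mul_sub, sum_sub_distrib]
  ring

end LinearPart

section Edge

/-- The cocycle `w 1 - w 0`. -/
def edge (p : ℕ) : Cochain (ZMod p) (ZMod p) := fun w => w 1 - w 0

theorem edge_mem_normalizedCochains (p : ℕ) :
    edge p ∈ normalizedCochains (ZMod p) id 2 := by
  refine ⟨fun v v' h => congrArg₂ (· - ·) (h 1 one_lt_two) (h 0 two_pos), fun v a ha h => ?_⟩
  obtain rfl : a = 0 := by omega
  exact sub_eq_zero.2 h.symm

/-- In characteristic two, the classes of the coordinates themselves are detected. -/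
def edgeClass (M : ℕ) (ι : Type*) [NeZero M] [DecidableEq ι] [Fintype ι] :
    DetectingClass 2 M ι where
  deg := 1
  cls := edge 2
  transfer j q := transferStep j 1 q
  cls_mem := edge_mem_normalizedCochains 2
  coboundary_cls := by
    funext w
    simp [coboundary_two_apply, edge, face]
  pullback_add_cls t := funext fun w => add_sub_add_right_eq_sub _ _ t
  transfer_zero j ψ := transferStep_zero j 1 ψ
  transfer_mem_smallVanishing := transferStep_mem_smallVanishing _ _ _
  transfer_coboundary j q ψ hψ := ⟨-transferStep j 1 (q - 1) ψ,
    neg_mem (transferStep_mem_nullCochains j (by decide) hψ),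
    transferStep_coboundary j (by decide) (mem_nullCochains.1 hψ).1 ((mem_nullCochains.1 hψ).2 j)⟩
  transfer_cup_self j q A hA hA' := by
    have hstep : transferStep j 1 1 (pullback (headCoord j) (edge 2)) =
        (1 : Cochain (ZMod 2) (Word 2 M ι)) := by
      funext v
      have hsum (x : ZMod 2) : ∑ t, -(x + t) = 1 := by decide +revert
      rw [transferStep_pullback_headCoord j _ (edge_mem_normalizedCochains 2), Pi.one_apply,
        ← hsum (v 0 0 j)]
      simp [edge]
    have hsign : (-1 : ZMod 2) = 1 := by decide
    rw [transferStep_cup_self j 1 hA hA'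
      (pullback_mem_normalizedCochains _ (edge_mem_normalizedCochains 2)), hstep, hsign, one_pow,
      one_smul]
    exact funext fun v => mul_one _
  transfer_cup_of_ne hij hA := transferStep_cup_of_ne hij _ hA
    (pullback_mem_normalizedCochains _ (edge_mem_normalizedCochains 2))
  cohomologous {l χ} hl := by
    refine ⟨fun v => deviation l χ (v 0), ⟨mem_cochains_succ fun v v' h => ?_, fun g => ?_⟩, ?_⟩
    · exact congrArg (deviation l χ) (h 0 le_rfl)
    · exact funext fun v => deviation_translate hl g (v 0)
    · funext v
      simp only [Pi.sub_apply, pullback_apply, edge, Function.comp_apply, Finset.sum_apply,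
        Pi.smul_apply, smul_eq_mul, sub_eq_dotProduct_add_deviation l χ, add_sub_cancel_left,
        coboundary_one_apply]
      rfl

end Edge

section Carry

/-- The integer cochain that lifts `edge p`. -/
def edgeInt (p : ℕ) : Cochain ℤ (ZMod p) := fun w => (w 1 - w 0).valMinAbs

/-- The carry cocycle of the extension of `ℤ/p` by `ℤ`, for the system of representatives of
smallest absolute value. -/
def carryInt (p : ℕ) : Cochain ℤ (ZMod p) := fun w => coboundary 2 (edgeInt p) w / p

/-- Reduction modulo `p` of integer cochains. -/
def reduce (p : ℕ) {V : Type*} : Cochain ℤ V →ₗ[ℤ] Cochain (ZMod p) V :=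
  (Int.castAddHom (ZMod p)).toIntLinearMap.compLeft _

/-- The carry cocycle modulo `p`, a Bockstein class. -/
def carry (p : ℕ) : Cochain (ZMod p) (ZMod p) := reduce p (carryInt p)

theorem reduce_apply (p : ℕ) {V : Type*} (ψ : Cochain ℤ V) (v : ℕ → V) :
    reduce p ψ v = (ψ v : ZMod p) := rfl

theorem coboundary_reduce (p : ℕ) {V : Type*} (q : ℕ) (ψ : Cochain ℤ V) :
    coboundary q (reduce p ψ) = reduce p (coboundary q ψ) := by
  funext v
  simp [reduce_apply, coboundary_apply]

theorem coe_edgeInt (p : ℕ) (w : ℕ → ZMod p) : (edgeInt p w : ZMod p) = w 1 - w 0 :=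
  ZMod.coe_valMinAbs _

theorem coboundary_two_edgeInt (p : ℕ) (w : ℕ → ZMod p) :
    coboundary 2 (edgeInt p) w =
      (w 2 - w 1).valMinAbs - (w 2 - w 0).valMinAbs + (w 1 - w 0).valMinAbs := by
  rw [coboundary_two_apply]
  rfl

theorem smul_carryInt (p : ℕ) : (p : ℤ) • carryInt p = coboundary 2 (edgeInt p) := by
  funext w
  refine Int.mul_ediv_cancel' ((ZMod.intCast_zmod_eq_zero_iff_dvd _ p).1 ?_)
  rw [coboundary_two_edgeInt]
  push_cast
  ring

theorem cochain_smul_cancel {p : ℕ} [NeZero p] {V : Type*} {A B : Cochain ℤ V}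
    (h : (p : ℤ) • A = (p : ℤ) • B) : A = B :=
  smul_right_injective _ (Int.natCast_ne_zero.2 (NeZero.ne p)) h

theorem carry_mem_normalizedCochains (p : ℕ) : carry p ∈ normalizedCochains (ZMod p) id 3 := by
  refine ⟨fun v v' h => congrArg (fun z : ℤ => ((z / p : ℤ) : ZMod p)) ?_, fun v a ha h => ?_⟩
  · simp only [id_eq] at h
    rw [coboundary_two_edgeInt, coboundary_two_edgeInt, h 0 (by omega), h 1 (by omega),
      h 2 (by omega)]
  · have hzero : coboundary 2 (edgeInt p) v = 0 := by
      rw [coboundary_two_edgeInt]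
      obtain rfl | rfl : a = 0 ∨ a = 1 := by omega
      · rw [show v 0 = v 1 from h]
        simp
      · rw [show v 1 = v 2 from h]
        simp
    rw [carry, reduce_apply, carryInt, hzero, Int.zero_ediv, Int.cast_zero]

theorem coboundary_carryInt (p : ℕ) [NeZero p] : coboundary 3 (carryInt p) = 0 := by
  refine cochain_smul_cancel (p := p) ?_
  rw [← map_smul, smul_carryInt, smul_zero]
  funext w
  simp only [coboundary_apply 3, sum_range_succ, range_zero, sum_empty, coboundary_two_edgeInt,
    face, Pi.zero_apply]
  norm_num
  ring

theorem sum_carryInt_translates (p : ℕ) [NeZero p] (w : ℕ → ZMod p) :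
    ∑ t, ∑ i ∈ range 2, (-1) ^ i * carryInt p (fun a => if a ≤ i then w a + t else 0) =
      -edgeInt p w := by
  refine mul_left_cancel₀ (Int.natCast_ne_zero.2 (NeZero.ne p)) ?_
  have hmul (w : ℕ → ZMod p) : (p : ℤ) * carryInt p w = _ :=
    (congrFun (smul_carryInt p) w).trans (coboundary_two_edgeInt p w)
  have hshift (x : ZMod p) : ∑ t, (-t + -x).valMinAbs = ∑ t : ZMod p, (-t).valMinAbs :=
    Fintype.sum_equiv (Equiv.addRight x) _ _ fun t => by simp [add_comm]
  simp only [sum_range_succ, range_zero, sum_empty, mul_sum, mul_add, mul_left_comm (p : ℤ), hmul]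
  simp [sum_add_distrib, sum_sub_distrib, hshift, edgeInt]

theorem transferStep_carry {p M : ℕ} [NeZero p] [NeZero M] {ι : Type*} [DecidableEq ι] (j : ι) :
    transferStep j 1 2 (pullback (headCoord j) (carry p)) =
      -(pullback (headCoord j) (edge p) : Cochain (ZMod p) (Word p M ι)) := by
  funext v
  have hsum := congrArg (Int.cast : ℤ → ZMod p) (sum_carryInt_translates p fun a => v a 0 j)
  rw [transferStep_pullback_headCoord j 1 (carry_mem_normalizedCochains p)]
  simpa [coe_edgeInt, carry, reduce_apply, edge, headCoord] using hsum

theorem transferStep_edge {p M : ℕ} [NeZero p] [NeZero M] {ι : Type*} [DecidableEq ι] (j : ι) :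
    transferStep j (Pi.single 1 1 - Pi.single 0 1) 1 (pullback (headCoord j) (edge p)) =
      (-1 : Cochain (ZMod p) (Word p M ι)) := by
  funext v
  rw [transferStep_pullback_headCoord j _ (edge_mem_normalizedCochains p)]
  simp [edge, sub_mul, sum_sub_distrib, Pi.single_apply]

section CarryPrimitive

variable {p M : ℕ} [NeZero M] {ι : Type*} [Fintype ι]

/-- The integer lift of the relation expressing the edge cochain of a label through the edge
cochains of the coordinates. It is divisible by `p`. -/
def edgeRelation (l : Word p M ι → ZMod p) (χ : ι → ZMod p) : Cochain ℤ (Word p M ι) :=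
  pullback l (edgeInt p) - ∑ i, ((χ i).val : ℤ) • pullback (headCoord i) (edgeInt p) -
    coboundary 1 fun v => ((deviation l χ (v 0)).val : ℤ)

/-- The quotient of `edgeRelation` by `p`. -/
def carryPrimitive (l : Word p M ι → ZMod p) (χ : ι → ZMod p) : Cochain ℤ (Word p M ι) :=
  fun v => edgeRelation l χ v / p

theorem edgeRelation_apply (l : Word p M ι → ZMod p) (χ : ι → ZMod p) (v : ℕ → Word p M ι) :
    edgeRelation l χ v = (l (v 1) - l (v 0)).valMinAbs -
      ∑ i, ((χ i).val : ℤ) * (headCoord i (v 1) - headCoord i (v 0)).valMinAbs -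
        ((deviation l χ (v 1)).val - (deviation l χ (v 0)).val) := by
  simp [edgeRelation, coboundary_one_apply, edgeInt, face, -ZMod.natCast_val]

theorem carryPrimitive_mem_cochains (l : Word p M ι → ZMod p) (χ : ι → ZMod p) :
    carryPrimitive l χ ∈ cochains ℤ (Word p M ι) 2 :=
  mem_cochains_succ fun v v' h => congrArg (· / (p : ℤ)) <| by
    rw [edgeRelation_apply, edgeRelation_apply, h 0 (by omega), h 1 le_rfl]

variable [NeZero p]

theorem smul_carryPrimitive (l : Word p M ι → ZMod p) (χ : ι → ZMod p) :
    (p : ℤ) • carryPrimitive l χ = edgeRelation l χ := by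
  funext v
  refine Int.mul_ediv_cancel' ((ZMod.intCast_zmod_eq_zero_iff_dvd _ p).1 ?_)
  rw [edgeRelation_apply]
  push_cast
  simp only [ZMod.natCast_zmod_val, sub_eq_dotProduct_add_deviation l χ]
  ring

theorem carryPrimitive_mem_invariants {l : Word p M ι → ZMod p} {χ : ι → ZMod p}
    (hl : ∀ g u, l (translate g u) = l u + χ ⬝ᵥ g) :
    carryPrimitive l χ ∈ invariants p M ι ℤ :=
  fun g => funext fun v => congrArg (· / (p : ℤ)) <| by
    simp [edgeRelation_apply, hl, deviation_translate hl, headCoord, translate]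

theorem coboundary_carryPrimitive (l : Word p M ι → ZMod p) (χ : ι → ZMod p) :
    coboundary 2 (carryPrimitive l χ) =
      pullback l (carryInt p) - ∑ i, ((χ i).val : ℤ) • pullback (headCoord i) (carryInt p) := by
  have hclosed : coboundary 2 (coboundary 1
      fun v : ℕ → Word p M ι => ((deviation l χ (v 0)).val : ℤ)) = 0 := by
    funext v
    simp [coboundary_two_apply, coboundary_one_apply, face]
  refine cochain_smul_cancel (p := p) ?_
  rw [← map_smul, smul_carryPrimitive, edgeRelation, map_sub, hclosed, sub_zero]
  simp only [map_sub, map_sum, map_smul, coboundary_pullback, ← smul_carryInt, smul_sub, smul_sum,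
    smul_comm (p : ℤ)]

theorem cohomologous_carry {l : Word p M ι → ZMod p} {χ : ι → ZMod p}
    (hl : ∀ g u, l (translate g u) = l u + χ ⬝ᵥ g) :
    Cohomologous 2 (pullback l (carry p)) (∑ i, χ i • pullback (headCoord i) (carry p)) := by
  refine ⟨reduce p (carryPrimitive l χ), ⟨mem_cochains_succ fun v v' h => ?_, fun g => ?_⟩, ?_⟩
  · exact congrArg Int.cast (apply_congr_of_mem_cochains (carryPrimitive_mem_cochains l χ)
      fun a ha => h a (by omega))
  · exact congrArg (reduce p) (carryPrimitive_mem_invariants hl g)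
  · rw [coboundary_reduce, coboundary_carryPrimitive]
    funext v
    simp [reduce_apply, carry, ZMod.natCast_zmod_val, -ZMod.natCast_val]

end CarryPrimitive

theorem sum_one_zmod {p : ℕ} [NeZero p] : ∑ t : ZMod p, (1 : ZMod p → ZMod p) t = 0 := by
  simp

theorem sum_single_sub_single {p : ℕ} [NeZero p] :
    ∑ t, (Pi.single 1 1 - Pi.single 0 1 : ZMod p → ZMod p) t = 0 := by
  simp

/-- The transfer by the norm followed by the transfer by a generator minus the identity; together
they strip off one Bockstein class of the `j`-th coordinate. -/
def carryTransfer (p M : ℕ) {ι : Type*} [NeZero p] [NeZero M] [DecidableEq ι] (j : ι) (q : ℕ) :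
    Module.End (ZMod p) (Cochain (ZMod p) (Word p M ι)) :=
  transferStep j (Pi.single 1 1 - Pi.single 0 1) (q - 1) ∘ₗ transferStep j 1 q

theorem carryTransfer_coboundary {p M q : ℕ} {ι : Type*} [NeZero p] [NeZero M]
    [DecidableEq ι] (j : ι) {ψ : Cochain (ZMod p) (Word p M ι)}
    (hψ : ψ ∈ nullCochains p M ι (ZMod p) q) :
    ∃ ψ' ∈ nullCochains p M ι (ZMod p) (q - 2),
      carryTransfer p M j q (coboundary q ψ) = coboundary (q - 2) ψ' := by
  have hψ' := mem_nullCochains.1 hψ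
  have hone := transferStep_coboundary j sum_one_zmod hψ'.1 (hψ'.2 j)
  have hprim := neg_mem (transferStep_mem_nullCochains j sum_one_zmod hψ)
  have hker : translationOp j (Pi.single 1 1 - Pi.single 0 1)
      (-transferStep j 1 (q - 1) ψ) = 0 := by
    rw [map_neg, transferStep_apply, translationOp_comm, translationOp_one_comp,
      sum_single_sub_single, zero_smul, neg_zero]
  refine ⟨_, neg_mem (transferStep_mem_nullCochains j sum_single_sub_single hprim), ?_⟩
  rw [carryTransfer, LinearMap.comp_apply, hone,
    transferStep_coboundary j sum_single_sub_single (mem_nullCochains.1 hprim).1 hker]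
  rfl

theorem carryTransfer_cup_self {p M q : ℕ} {ι : Type*} [NeZero p] [NeZero M]
    [DecidableEq ι] (j : ι) {A : Cochain (ZMod p) (Word p M ι)}
    (hA : A ∈ normalizedCochains (ZMod p) head (q + 1)) (hA' : A ∈ invariants p M ι (ZMod p)) :
    carryTransfer p M j (q + 2) (cup q A (pullback (headCoord j) (carry p))) = A := by
  have hone := transferStep_cup_self j 1 hA hA'
    (pullback_mem_normalizedCochains _ (carry_mem_normalizedCochains p))
  have hdiff := transferStep_cup_self j (Pi.single 1 1 - Pi.single 0 1) hA hA'
    (pullback_mem_normalizedCochains _ (edge_mem_normalizedCochains p))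
  have hunit : cup q A (-1) = -A := funext fun v => mul_neg_one _
  rw [transferStep_carry, map_neg] at hone
  rw [zero_add, transferStep_edge, hunit] at hdiff
  rw [carryTransfer, LinearMap.comp_apply, hone, map_smul, map_neg]
  refine (congrArg (fun B => (-1 : ZMod p) ^ q • -B) hdiff).trans ?_
  rw [smul_neg, smul_smul, ← mul_pow, neg_one_mul, neg_neg, one_pow, one_smul, neg_neg]

/-- In arbitrary characteristic, the Bockstein classes of the coordinates are detected. -/
def carryClass (p M : ℕ) (ι : Type*) [NeZero p] [NeZero M] [DecidableEq ι] [Fintype ι] :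
    DetectingClass p M ι where
  deg := 2
  cls := carry p
  transfer := carryTransfer p M
  cls_mem := carry_mem_normalizedCochains p
  coboundary_cls := by rw [carry, coboundary_reduce, coboundary_carryInt, map_zero]
  pullback_add_cls t := funext fun w => by
    simp [carry, reduce_apply, carryInt, coboundary_two_edgeInt]
  transfer_zero j ψ := by simp [carryTransfer, transferStep_zero]
  transfer_mem_smallVanishing hψ :=
    transferStep_mem_smallVanishing _ _ _ (transferStep_mem_smallVanishing _ _ _ hψ)
  transfer_coboundary j _ _ := carryTransfer_coboundary j
  transfer_cup_self j _ _ := carryTransfer_cup_self j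
  transfer_cup_of_ne {i j q A} hij hA := by
    have hC := pullback_mem_normalizedCochains (headCoord (M := M) i)
      (carry_mem_normalizedCochains p)
    rw [carryTransfer, LinearMap.comp_apply, transferStep_cup_of_ne hij _ hA hC]
    cases q with
    | zero => simp [carryTransfer, transferStep_zero]
    | succ q =>
      exact transferStep_cup_of_ne hij _ (transferStep_mem_normalizedCochains j 1 hA) hC
  cohomologous := cohomologous_carry

end Carry

end DetectingClass

section CupList

variable {R V : Type*} [CommRing R]

/-- The cup product of a list of cochains of degree `d`, the head of the list being the last
factor. -/
def cupList (d : ℕ) : List (Cochain R V) → Cochain R V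
  | [] => 1
  | C :: L => cup (d * L.length) (cupList d L) C

variable {d : ℕ}

theorem cupList_apply_eq_zero {L : List (Cochain R V)} {v : ℕ → V}
    (h : ∃ C ∈ L, ∀ s, C (shift s v) = 0) : cupList d L v = 0 := by
  induction L with
  | nil => simp at h
  | cons C L ih =>
    rw [List.exists_mem_cons_iff] at h
    rw [cupList, cup_apply]
    rcases h with h | h
    · rw [h, mul_zero]
    · rw [ih h, zero_mul]

theorem cupList_append_sum_smul_cons {α : Type*} [Fintype α] (L L' : List (Cochain R V))
    (c : α → R) (C : α → Cochain R V) :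
    cupList d (L ++ (∑ i, c i • C i) :: L') = ∑ i, c i • cupList d (L ++ C i :: L') := by
  induction L with
  | nil => simp only [List.nil_append, cupList, map_sum, map_smul]
  | cons A L ih =>
    simp only [List.cons_append, cupList, ih, List.length_append, List.length_cons, map_sum,
      map_smul, LinearMap.sum_apply, LinearMap.smul_apply]

theorem cupList_mem_normalizedCochains {W : Type*} {f : V → W} {L : List (Cochain R V)}
    (h : ∀ C ∈ L, C ∈ normalizedCochains R f (d + 1)) :
    cupList d L ∈ normalizedCochains R f (d * L.length + 1) := by
  induction L with
  | nil => exact ⟨fun _ _ _ => rfl, fun _ a ha => by simp at ha⟩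
  | cons C L ih =>
    rw [List.forall_mem_cons] at h
    exact cup_mem_normalizedCochains (ih h.2) h.1

theorem cupList_mem_cochains {L : List (Cochain R V)} (h : ∀ C ∈ L, C ∈ cochains R V (d + 1)) :
    cupList d L ∈ cochains R V (d * L.length + 1) := by
  induction L with
  | nil => exact mem_cochains_succ fun _ _ _ => rfl
  | cons C L ih =>
    rw [List.forall_mem_cons] at h
    exact cup_mem_cochains (ih h.2) h.1

theorem coboundary_cupList {L : List (Cochain R V)} (h : ∀ C ∈ L, C ∈ cochains R V (d + 1))
    (h' : ∀ C ∈ L, coboundary (d + 1) C = 0) :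
    coboundary (d * L.length + 1) (cupList d L) = 0 := by
  induction L with
  | nil =>
    funext v
    simp [cupList, coboundary_one_apply]
  | cons C L ih =>
    rw [List.forall_mem_cons] at h h'
    refine (coboundary_cup _ _ (cupList_mem_cochains h.2) C).trans ?_
    rw [ih h.2 h'.2, h'.1, map_zero, map_zero, LinearMap.zero_apply, smul_zero, add_zero]

end CupList

section CupListInvariants

variable {p M : ℕ} {ι R : Type*} [CommRing R] {d : ℕ}

theorem cup_mem_invariants (q : ℕ) {A B : Cochain R (Word p M ι)} (hA : A ∈ invariants p M ι R)
    (hB : B ∈ invariants p M ι R) : cup q A B ∈ invariants p M ι R := fun g => by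
  rw [pullback_cup, hA g, hB g]

theorem cupList_mem_invariants {L : List (Cochain R (Word p M ι))}
    (h : ∀ C ∈ L, C ∈ invariants p M ι R) : cupList d L ∈ invariants p M ι R := by
  induction L with
  | nil => exact fun _ => rfl
  | cons C L ih =>
    rw [List.forall_mem_cons] at h
    exact cup_mem_invariants _ (ih h.2) h.1

/-- The invariant cocycles of degree `q`. -/
def invariantCocycles (p M : ℕ) (ι R : Type*) [CommRing R] (q : ℕ) :
    Submodule R (Cochain R (Word p M ι)) :=
  cochains R (Word p M ι) (q + 1) ⊓ invariants p M ι R ⊓ LinearMap.ker (coboundary (q + 1))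

theorem cupList_mem_invariantCocycles {L : List (Cochain R (Word p M ι))}
    (h : ∀ C ∈ L, C ∈ invariantCocycles p M ι R d) :
    cupList d L ∈ invariantCocycles p M ι R (d * L.length) :=
  ⟨⟨cupList_mem_cochains fun C hC => (h C hC).1.1, cupList_mem_invariants fun C hC => (h C hC).1.2⟩,
    coboundary_cupList (fun C hC => (h C hC).1.1) fun C hC => (h C hC).2⟩

theorem Cohomologous.trans {q : ℕ} {A B C : Cochain R (Word p M ι)} (h : Cohomologous q A B)
    (h' : Cohomologous q B C) : Cohomologous q A C := by
  obtain ⟨φ, hφ, hAB⟩ := h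
  obtain ⟨ψ, hψ, hBC⟩ := h'
  exact ⟨φ + ψ, add_mem hφ hψ, by rw [map_add, ← hAB, ← hBC, sub_add_sub_cancel]⟩

theorem Cohomologous.cup_right {q r : ℕ} {A A' B : Cochain R (Word p M ι)}
    (h : Cohomologous q A A') (hB : B ∈ invariantCocycles p M ι R r) :
    Cohomologous (q + r) (cup q A B) (cup q A' B) := by
  obtain ⟨φ, hφ, hAA'⟩ := h
  rw [Cohomologous, ← LinearMap.sub_apply, ← map_sub, hAA']
  cases q with
  | zero => exact ⟨0, zero_mem _, by simp [hφ.1.2 rfl]⟩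
  | succ q =>
    rw [Nat.add_right_comm]
    refine ⟨cup q φ B, ⟨cup_mem_cochains hφ.1 hB.1.1, cup_mem_invariants q hφ.2 hB.1.2⟩, ?_⟩
    rw [coboundary_cup q r hφ.1, LinearMap.mem_ker.1 hB.2, map_zero, smul_zero, add_zero]

theorem Cohomologous.cup_left {q r : ℕ} {A B B' : Cochain R (Word p M ι)}
    (hA : A ∈ invariantCocycles p M ι R q) (h : Cohomologous r B B') :
    Cohomologous (q + r) (cup q A B) (cup q A B') := by
  obtain ⟨ψ, hψ, hBB'⟩ := h
  rw [Cohomologous, ← map_sub, hBB']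
  cases r with
  | zero => exact ⟨0, zero_mem _, by simp [hψ.1.2 rfl]⟩
  | succ r =>
    refine ⟨(-1 : R) ^ q • cup q A ψ, Submodule.smul_mem _ _
      ⟨cup_mem_cochains hA.1.1 hψ.1, cup_mem_invariants q hA.1.2 hψ.2⟩, ?_⟩
    rw [map_smul, ← Nat.add_assoc, coboundary_cup q r hA.1.1, LinearMap.mem_ker.1 hA.2, map_zero,
      LinearMap.zero_apply, zero_add, smul_smul, ← mul_pow, neg_one_mul, neg_neg, one_pow, one_smul]

theorem cohomologous_cupList {α : Type*} (L : List α) {A B : α → Cochain R (Word p M ι)}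
    (hA : ∀ x, A x ∈ invariantCocycles p M ι R d) (hB : ∀ x, B x ∈ invariantCocycles p M ι R d)
    (h : ∀ x, Cohomologous d (A x) (B x)) :
    Cohomologous (d * L.length) (cupList d (L.map A)) (cupList d (L.map B)) := by
  induction L with
  | nil => exact ⟨0, zero_mem _, by simp [cupList]⟩
  | cons x L ih =>
    have hcocycle := cupList_mem_invariantCocycles (L := L.map B) (d := d)
      (List.forall_mem_map.2 fun x _ => hB x)
    simp only [List.map_cons, cupList, List.length_map] at hcocycle ⊢
    exact (ih.cup_right (hA x)).trans (.cup_left hcocycle (h x))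

end CupListInvariants

section LinearPoly

open MvPolynomial

variable {ι R : Type*} [CommSemiring R]

theorem prod_map_X (w : List ι) [DecidableEq ι] :
    (w.map X).prod = monomial (Multiset.toFinsupp (w : Multiset ι)) (1 : R) := by
  induction w with
  | nil => simp
  | cons i w ih =>
    rw [List.map_cons, List.prod_cons, ih, X, monomial_mul, one_mul, ← Multiset.cons_coe,
      ← Multiset.singleton_add, Multiset.toFinsupp_add, Multiset.toFinsupp_singleton]

variable [Fintype ι]

/-- The linear form with coefficients `χ`, as a polynomial. -/
noncomputable def linearPoly (χ : ι → R) : MvPolynomial ι R := ∑ i, C (χ i) * X i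

theorem linearPoly_ne_zero {χ : ι → R} (hχ : χ ≠ 0) : linearPoly χ ≠ 0 := by
  classical
  obtain ⟨i, hi⟩ := Function.ne_iff.1 hχ
  intro h
  have heval : eval (Pi.single i 1) (linearPoly χ) = χ i := by
    simp [linearPoly, Pi.single_apply]
  exact hi (by rw [← heval, h, map_zero, Pi.zero_apply])

theorem linearPoly_isHomogeneous (χ : ι → R) : (linearPoly χ).IsHomogeneous 1 :=
  IsHomogeneous.sum _ _ _ fun i _ => by
    simpa using (isHomogeneous_C ι (χ i)).mul (isHomogeneous_X _ i)

end LinearPoly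

theorem invariants_inf_cochains_le_nullCochains {p M : ℕ} [NeZero p] {ι : Type*} [DecidableEq ι]
    (q : ℕ) : cochains (ZMod p) _ q ⊓ invariants p M ι (ZMod p) ≤ nullCochains p M ι (ZMod p) q :=
  fun ψ hψ => mem_nullCochains.2 ⟨hψ.1, fun i => by
    rw [translationOp_of_mem_invariants i 1 hψ.2, sum_one_zmod, zero_smul]⟩

namespace DetectingClass

open MvPolynomial

variable {p M : ℕ} {ι : Type*} [NeZero p] [NeZero M] [DecidableEq ι] [Fintype ι]
  (D : DetectingClass p M ι)

/-- The pullback of the detecting class along the `i`-th coordinate of the first letter. -/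
def coordClass (i : ι) : Cochain (ZMod p) (Word p M ι) := pullback (headCoord i) D.cls

/-- The class of a linear form, the linear combination of the classes of the coordinates. -/
def linearClass (χ : ι → ZMod p) : Cochain (ZMod p) (Word p M ι) := ∑ i, χ i • D.coordClass i

/-- Successive transfers along a list of coordinates, starting from a cochain of degree `deg` times
the length of the list. -/
def iterTransfer : List ι → Module.End (ZMod p) (Cochain (ZMod p) (Word p M ι))
  | [] => LinearMap.id
  | j :: js => iterTransfer js ∘ₗ D.transfer j (D.deg * (js.length + 1))

theorem iterTransfer_mem_smallVanishing (js : List ι) {s : ℕ} {ψ : Cochain (ZMod p) (Word p M ι)}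
    (hψ : ψ ∈ smallVanishing p M ι (ZMod p) (s + D.deg * js.length)) :
    D.iterTransfer js ψ ∈ smallVanishing p M ι (ZMod p) s := by
  induction js generalizing ψ with
  | nil => exact hψ
  | cons j js ih =>
    rw [List.length_cons, Nat.mul_succ, ← Nat.add_assoc] at hψ
    exact ih (D.transfer_mem_smallVanishing hψ)

theorem iterTransfer_coboundary (js : List ι) {ψ : Cochain (ZMod p) (Word p M ι)}
    (hψ : ψ ∈ nullCochains p M ι (ZMod p) (D.deg * js.length)) :
    D.iterTransfer js (coboundary (D.deg * js.length) ψ) = 0 := by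
  induction js generalizing ψ with
  | nil => rw [(mem_nullCochains.1 hψ).1.2 rfl, map_zero, map_zero]
  | cons j js ih =>
    obtain ⟨ψ', hψ', h⟩ := D.transfer_coboundary j hψ
    rw [List.length_cons, Nat.mul_succ, Nat.add_sub_cancel] at hψ' h
    exact (congrArg (D.iterTransfer js) h).trans (ih hψ')

theorem coordClass_mem (i : ι) :
    D.coordClass i ∈ normalizedCochains (ZMod p) (headCoord i) (D.deg + 1) :=
  pullback_mem_normalizedCochains _ D.cls_mem

theorem coordClass_mem_invariantCocycles (i : ι) :
    D.coordClass i ∈ invariantCocycles p M ι (ZMod p) D.deg := by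
  refine ⟨⟨normalizedCochains_succ_le _ (D.coordClass_mem i), fun g => ?_⟩, ?_⟩
  · exact congrArg (pullback (headCoord i)) (D.pullback_add_cls (g i))
  · exact (coboundary_pullback _ _ _).trans (by rw [D.coboundary_cls, map_zero])

theorem linearClass_mem_invariantCocycles (χ : ι → ZMod p) :
    D.linearClass χ ∈ invariantCocycles p M ι (ZMod p) D.deg :=
  sum_mem fun i _ => Submodule.smul_mem _ _ (D.coordClass_mem_invariantCocycles i)

theorem pullback_cls_mem_invariantCocycles {l : Word p M ι → ZMod p} {χ : ι → ZMod p}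
    (hl : ∀ g u, l (translate g u) = l u + χ ⬝ᵥ g) :
    pullback l D.cls ∈ invariantCocycles p M ι (ZMod p) D.deg := by
  refine ⟨⟨pullback_mem_cochains _ (normalizedCochains_succ_le _ D.cls_mem), fun g => ?_⟩, ?_⟩
  · have hcomp : pullback (translate g) (pullback l D.cls) =
        pullback l (pullback (· + χ ⬝ᵥ g) D.cls) :=
      funext fun v => congrArg D.cls (funext fun a => hl g (v a))
    rw [hcomp, D.pullback_add_cls]
  · exact (coboundary_pullback _ _ _).trans (by rw [D.coboundary_cls, map_zero])

theorem transfer_cupList_coordClass (j : ι) (w : List ι) :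
    D.transfer j (D.deg * w.length) (cupList D.deg (w.map D.coordClass)) =
      if j ∈ w then cupList D.deg ((w.erase j).map D.coordClass) else 0 := by
  induction w with
  | nil => simp [D.transfer_zero]
  | cons i w ih =>
    have hmem : cupList D.deg (w.map D.coordClass) ∈
        normalizedCochains (ZMod p) head (D.deg * w.length + 1) := by
      simpa using cupList_mem_normalizedCochains (List.forall_mem_map.2 fun i (_ : i ∈ w) =>
        headCoord_mem i (D.coordClass_mem i))
    have hinv : cupList D.deg (w.map D.coordClass) ∈ invariants p M ι (ZMod p) :=
      cupList_mem_invariants (List.forall_mem_map.2 fun i _ =>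
        (D.coordClass_mem_invariantCocycles i).1.2)
    simp only [List.map_cons, cupList, List.length_map, List.length_cons, Nat.mul_succ]
    by_cases hij : i = j
    · subst hij
      rw [if_pos List.mem_cons_self, List.erase_cons_head]
      exact D.transfer_cup_self i hmem hinv
    · refine (D.transfer_cup_of_ne hij hmem).trans ?_
      rw [ih]
      by_cases hjw : j ∈ w
      · rw [if_pos hjw, if_pos (List.mem_cons_of_mem i hjw),
          List.erase_cons_tail (by simpa using hij), List.map_cons, cupList, List.length_map,
          List.length_erase_of_mem hjw, Nat.mul_sub_one]
        rfl
      · rw [if_neg hjw, if_neg (by simp [hjw, Ne.symm hij]), map_zero, LinearMap.zero_apply]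

theorem iterTransfer_cupList_coordClass {js w : List ι} (h : js.length = w.length) :
    D.iterTransfer js (cupList D.deg (w.map D.coordClass)) = if js.Perm w then 1 else 0 := by
  induction js generalizing w with
  | nil =>
    obtain rfl := List.length_eq_zero_iff.1 h.symm
    simp [iterTransfer, cupList]
  | cons j js ih =>
    have hlength : js.length + 1 = w.length := h
    rw [iterTransfer, LinearMap.comp_apply, hlength, transfer_cupList_coordClass]
    by_cases hjw : j ∈ w
    · rw [if_pos hjw, ih (by rw [List.length_erase_of_mem hjw]; omega)]
      simp only [List.cons_perm_iff_perm_erase, hjw, true_and]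
    · rw [if_neg hjw, map_zero, if_neg fun hperm => hjw (hperm.subset List.mem_cons_self)]

theorem iterTransfer_cupList {js w : List ι} {χs : List (ι → ZMod p)}
    (h : js.length = w.length + χs.length) :
    D.iterTransfer js (cupList D.deg (w.map D.coordClass ++ χs.map D.linearClass)) =
      coeff (Multiset.toFinsupp (js : Multiset ι))
        ((w.map X).prod * (χs.map linearPoly).prod) • 1 := by
  induction χs generalizing w with
  | nil =>
    rw [List.map_nil, List.append_nil, D.iterTransfer_cupList_coordClass h, List.map_nil,
      List.prod_nil, mul_one, prod_map_X, coeff_monomial]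
    simp [Multiset.coe_eq_coe, List.perm_comm]
  | cons χ χs ih =>
    have hstep (i : ι) :
        D.iterTransfer js
            (cupList D.deg (w.map D.coordClass ++ D.coordClass i :: χs.map D.linearClass)) =
          coeff (Multiset.toFinsupp (js : Multiset ι))
            ((w.map X).prod * (X i * (χs.map linearPoly).prod)) • 1 := by
      have hlength : js.length = (w ++ [i]).length + χs.length := by
        simp only [h, List.length_append, List.length_cons, List.length_nil]; omega
      simpa [mul_assoc] using ih hlength
    simp only [List.map_cons, linearClass, cupList_append_sum_smul_cons, map_sum, map_smul, hstep,
      List.prod_cons, linearPoly, sum_mul, mul_sum, coeff_sum, mul_assoc, mul_left_comm _ (C _),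
      coeff_C_mul, sum_smul, smul_smul]

theorem exists_iterTransfer_cupList_eq_smul_one [Fact p.Prime] {α : Type*} [Fintype α]
    {χ : α → ι → ZMod p} (hχ : ∀ x, χ x ≠ 0) :
    ∃ js : List ι, js.length = Fintype.card α ∧ ∃ c : ZMod p, c ≠ 0 ∧
      D.iterTransfer js (cupList D.deg (univ.toList.map fun x => D.linearClass (χ x))) = c • 1 := by
  obtain ⟨m, hm⟩ := ne_zero_iff.1 (prod_ne_zero_iff.2 fun x (_ : x ∈ univ) =>
    linearPoly_ne_zero (hχ x))
  have hhomogeneous : (∏ x, linearPoly (χ x)).IsHomogeneous (Fintype.card α) := by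
    simpa using IsHomogeneous.prod univ _ _ fun x _ => linearPoly_isHomogeneous (χ x)
  have hdegree : m.degree = Fintype.card α :=
    not_not.1 fun h => hm (hhomogeneous.coeff_eq_zero h)
  have hlength : m.toMultiset.toList.length = Fintype.card α := by
    rw [Multiset.length_toList, Finsupp.card_toMultiset, ← hdegree]; rfl
  refine ⟨m.toMultiset.toList, hlength, _, hm, ?_⟩
  have h := D.iterTransfer_cupList (js := m.toMultiset.toList) (w := [])
    (χs := univ.toList.map χ) (by simp [hlength])
  simpa [Function.comp_def, Finset.prod_map_toList] using h

theorem exists_isSmall_forall_cls_ne_zero [Fact p.Prime] {α : Type*} [Fintype α]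
    {l : α → Word p M ι → ZMod p} {χ : α → ι → ZMod p} (hχ : ∀ x, χ x ≠ 0)
    (hl : ∀ x g u, l x (translate g u) = l x u + χ x ⬝ᵥ g) :
    ∃ v : ℕ → Word p M ι, IsSmall (D.deg * Fintype.card α) v ∧
      ∀ x, ∃ s, D.cls (fun a => l x (v (s + a))) ≠ 0 := by
  obtain ⟨js, hjs, c, hc, hlinear⟩ := D.exists_iterTransfer_cupList_eq_smul_one hχ
  by_contra! hcontra
  have hlength : D.deg * (univ : Finset α).toList.length = D.deg * js.length := by simp [hjs]
  have hvanishing : cupList D.deg (univ.toList.map fun x => pullback (l x) D.cls) ∈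
      smallVanishing p M ι (ZMod p) (0 + D.deg * js.length) := by
    intro v hv
    rw [zero_add, hjs] at hv
    obtain ⟨x, hx⟩ := hcontra v hv
    exact cupList_apply_eq_zero ⟨_, List.mem_map_of_mem (mem_toList.2 (mem_univ x)), hx⟩
  obtain ⟨ψ, hψ, hdiff⟩ := cohomologous_cupList (univ : Finset α).toList
    (fun x => D.pullback_cls_mem_invariantCocycles (hl x))
    (fun x => D.linearClass_mem_invariantCocycles (χ x)) (fun x => D.cohomologous (hl x))
  rw [hlength] at hψ hdiff
  have heq := congrArg (D.iterTransfer js) hdiff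
  rw [D.iterTransfer_coboundary js (invariants_inf_cochains_le_nullCochains _ hψ), map_sub,
    sub_eq_zero, hlinear] at heq
  have hsmall : IsSmall 0 (fun _ => 0 : ℕ → Word p M ι) := by simp [IsSmall, diffs, cuts]
  have hzero := D.iterTransfer_mem_smallVanishing js hvanishing _ hsmall
  rw [heq] at hzero
  exact hc (by simpa using hzero)

end DetectingClass

section Weights

variable {p N L : ℕ} {ι : Type*}

open Classical in
/-- The positions in the `i`-th of the `N` blocks of a word that carry the letter `g`. -/
noncomputable def occurrences (u : Word p (N * L) ι) (i : Fin N) (g : ι → ZMod p) :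
    Finset (Fin L) :=
  {r | u (finProdFinEquiv (i, r)) = g}

/-- The weight of the letter `g` in the `i`-th block of a word: it is positive if `g` is
the majority letter of the block, and equal to `1` if it is the only one. -/
noncomputable def weight (u : Word p (N * L) ι) (i : Fin N) (g : ι → ZMod p) : ℝ :=
  max 0 (2 * #(occurrences u i g) / L - 1)

theorem weight_translate (g : ι → ZMod p) (u : Word p (N * L) ι) (i : Fin N) (h : ι → ZMod p) :
    weight (translate g u) i h = weight u i (h - g) := by
  have hoccurrences : occurrences (translate g u) i h = occurrences u i (h - g) := by
    ext r
    simp only [occurrences, mem_filter, mem_univ, true_and, eq_sub_iff_add_eq]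
    rfl
  rw [weight, weight, hoccurrences]

theorem weight_le_one (u : Word p (N * L) ι) (i : Fin N) (g : ι → ZMod p) : weight u i g ≤ 1 := by
  classical
  have hcard : (#(occurrences u i g) : ℝ) ≤ L := by
    exact_mod_cast (card_le_univ _).trans_eq (Fintype.card_fin L)
  have hdiv := div_le_one_of_le₀ hcard (Nat.cast_nonneg L)
  exact max_le zero_le_one (by rw [mul_div_assoc]; linarith)

theorem weight_mul_weight_of_ne (u : Word p (N * L) ι) (i : Fin N) {g h : ι → ZMod p}
    (hgh : g ≠ h) : weight u i g * weight u i h = 0 := by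
  classical
  have hdisjoint : Disjoint (occurrences u i g) (occurrences u i h) :=
    disjoint_filter.2 fun r _ hg hh => hgh (hg.symm.trans hh)
  have hcard : (#(occurrences u i g) : ℝ) + #(occurrences u i h) ≤ L := by
    exact_mod_cast (card_union_of_disjoint hdisjoint).symm.trans_le
      ((card_le_univ _).trans_eq (Fintype.card_fin L))
  have hdiv := div_le_one_of_le₀ hcard (Nat.cast_nonneg L)
  rw [add_div] at hdiv
  rw [mul_eq_zero, weight, weight, max_eq_left_iff, max_eq_left_iff, mul_div_assoc, mul_div_assoc]
  by_contra! hpos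
  linarith

theorem card_occurrences_le_add_card_diffs (u u' : Word p (N * L) ι) (i : Fin N) (g : ι → ZMod p) :
    #(occurrences u i g) ≤
      #(occurrences u' i g) + #(diffs u u') := by
  classical
  have hinj : Function.Injective fun r : Fin L => finProdFinEquiv (i, r) :=
    finProdFinEquiv.injective.comp (Prod.mk_right_injective i)
  rw [← card_image_of_injective _ hinj, ← card_image_of_injective (occurrences u' i g) hinj]
  refine (card_le_card fun x hx => ?_).trans (card_union_le _ _)
  simp only [occurrences, diffs, mem_union, mem_image, mem_filter, mem_univ, true_and] at hx ⊢
  obtain ⟨r, hr, rfl⟩ := hx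
  by_cases h : u (finProdFinEquiv (i, r)) = u' (finProdFinEquiv (i, r))
  · exact .inl ⟨r, h ▸ hr, rfl⟩
  · exact .inr h

theorem abs_weight_sub_le (u u' : Word p (N * L) ι) (i : Fin N) (g : ι → ZMod p) :
    |weight u i g - weight u' i g| ≤ 2 * #(diffs u u') / L := by
  classical
  have hle : (#(occurrences u i g) : ℝ) ≤
      #(occurrences u' i g) + #(diffs u u') := by
    exact_mod_cast card_occurrences_le_add_card_diffs u u' i g
  have hge : (#(occurrences u' i g) : ℝ) ≤
      #(occurrences u i g) + #(diffs u u') := by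
    have hcomm : diffs u' u = diffs u u' := by simp only [diffs, ne_comm]
    exact_mod_cast hcomm ▸ card_occurrences_le_add_card_diffs u' u i g
  rw [weight, weight, max_comm, max_comm 0]
  refine (abs_max_sub_max_le_abs _ _ _).trans ?_
  rw [sub_sub_sub_cancel_right, ← sub_div, abs_div, Nat.abs_cast]
  gcongr
  rw [abs_le]
  constructor <;> linarith

theorem dist_weight_le {s : ℕ} {v : ℕ → Word p (N * L) ι} [Fintype (ι → ZMod p)]
    (hv : IsSmall s v) (a b : ℕ) : dist (weight (v a)) (weight (v b)) ≤ 2 * s / L := by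
  have hpos : (0 : ℝ) ≤ 2 * s / L := by positivity
  refine (dist_pi_le_iff hpos).2 fun i => (dist_pi_le_iff hpos).2 fun g => ?_
  refine (abs_weight_sub_le _ _ i g).trans ?_
  gcongr
  exact hv.1 a b

theorem apply_finProdFinEquiv_eq_of_forall_cuts {u : Word p (N * L) ι} {i : Fin N}
    (hi : ∀ x ∈ cuts u, x.divNat ≠ i) (r : ℕ) (hr : r < L) :
    u (finProdFinEquiv (i, ⟨r, hr⟩)) = u (finProdFinEquiv (i, ⟨0, by omega⟩)) := by
  induction r with
  | zero => rfl
  | succ r ih =>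
    rw [← ih (by omega)]
    by_contra hne
    have hval : (finProdFinEquiv (i, (⟨r, by omega⟩ : Fin L))).1 + 1 =
        (finProdFinEquiv (i, (⟨r + 1, hr⟩ : Fin L))).1 := by
      simp only [finProdFinEquiv_apply_val]; omega
    refine hi (finProdFinEquiv (i, ⟨r, by omega⟩)) ?_
      (congrArg Prod.fst (finProdFinEquiv.symm_apply_apply (i, _)))
    simp only [cuts, mem_filter, mem_univ, true_and, hval]
    exact ⟨Fin.is_lt _, Ne.symm hne⟩

theorem exists_weight_eq_one [NeZero L] {u : Word p (N * L) ι} {i : Fin N}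
    (hi : ∀ x ∈ cuts u, x.divNat ≠ i) : ∃ g, weight u i g = 1 := by
  classical
  refine ⟨u (finProdFinEquiv (i, ⟨0, NeZero.pos L⟩)), ?_⟩
  have huniv : occurrences u i (u (finProdFinEquiv (i, ⟨0, NeZero.pos L⟩))) = univ :=
    filter_true_of_mem fun r _ => apply_finProdFinEquiv_eq_of_forall_cuts hi r.1 r.2
  rw [weight, huniv, card_univ, Fintype.card_fin, mul_div_assoc, div_self (NeZero.ne _)]
  norm_num

end Weights

section AlmostFull

variable {α G : Type*} [Fintype α]

/-- The weightings of the pairs `(i, g)`, such that each `i` has at most one `g` of positive weight,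
and this weight is `1` for all but `s` of the `i`. -/
def almostFull (α G : Type*) [Fintype α] (s : ℕ) : Set (α → G → ℝ) :=
  {t | (∀ i g, t i g ∈ Set.Icc 0 1) ∧ (∀ i g h, g ≠ h → t i g * t i h = 0) ∧
    ∃ S : Finset α, Fintype.card α ≤ #S + s ∧ ∀ i ∈ S, ∃ g, t i g = 1}

theorem almostFull_mono {s s' : ℕ} (h : s ≤ s') : almostFull α G s ⊆ almostFull α G s' := by
  rintro t ⟨hmem, hmul, S, hS, hone⟩
  exact ⟨hmem, hmul, S, by omega, hone⟩

theorem isClosed_almostFull [Finite G] (s : ℕ) : IsClosed (almostFull α G s) := by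
  have hcont (i : α) (g : G) : Continuous fun t : α → G → ℝ => t i g := by fun_prop
  have heq : almostFull α G s = (⋂ i, ⋂ g, {t | t i g ∈ Set.Icc 0 1}) ∩
      ((⋂ i, ⋂ g, ⋂ h, ⋂ (_ : g ≠ h), {t | t i g * t i h = 0}) ∩
        ⋃ S ∈ {S : Finset α | Fintype.card α ≤ #S + s}, ⋂ i ∈ S, ⋃ g, {t | t i g = 1}) := by
    ext t
    simp [almostFull]
  rw [heq]
  refine .inter ?_ (.inter ?_ ?_)
  · exact isClosed_iInter fun i => isClosed_iInter fun g => isClosed_Icc.preimage (hcont i g)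
  · exact isClosed_iInter fun i => isClosed_iInter fun g => isClosed_iInter fun h =>
      isClosed_iInter fun _ => isClosed_eq ((hcont i g).mul (hcont i h)) continuous_const
  · exact (Set.toFinite _).isClosed_biUnion fun S _ => isClosed_biInter fun i _ =>
      isClosed_iUnion_of_finite fun g => isClosed_eq (hcont i g) continuous_const

theorem isCompact_almostFull [Finite G] (s : ℕ) : IsCompact (almostFull α G s) :=
  .of_isClosed_subset (isCompact_univ_pi fun _ => isCompact_univ_pi fun _ => isCompact_Icc)
    (isClosed_almostFull s) fun _ ht i _ g _ => ht.1 i g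

theorem weight_mem_almostFull {p N L s : ℕ} {ι : Type*} [NeZero L] {u : Word p (N * L) ι}
    (hu : #(cuts u) ≤ s) : weight u ∈ almostFull (Fin N) (ι → ZMod p) s := by
  classical
  refine ⟨fun i g => ⟨le_max_left _ _, weight_le_one u i g⟩,
    fun i g h => weight_mul_weight_of_ne u i, univ \ (cuts u).image Fin.divNat, ?_, fun i hi => ?_⟩
  · have himage := card_image_le (s := cuts u) (f := Fin.divNat)
    have hsdiff := le_card_sdiff ((cuts u).image Fin.divNat) (univ : Finset (Fin N))
    rw [card_univ] at hsdiff
    omega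
  · simp only [mem_sdiff, mem_univ, true_and, mem_image, not_exists, not_and] at hi
    exact exists_weight_eq_one hi

end AlmostFull

section Label

open Complex Filter Topology

variable {p : ℕ}

/-- The index of the sector of angle `2π / p` that contains `z`. -/
noncomputable def label (p : ℕ) (z : ℂ) : ZMod p := (⌊p * arg z / (2 * Real.pi)⌋ : ℤ)

theorem label_eq_of_arg_coe_eq {z : ℂ} {θ : ℝ} (h : (arg z : Real.Angle) = θ) :
    label p z = (⌊p * θ / (2 * Real.pi)⌋ : ℤ) := by
  obtain ⟨m, hm⟩ := Real.Angle.angle_eq_iff_two_pi_dvd_sub.1 h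
  have hfloor : p * arg z / (2 * Real.pi) = p * θ / (2 * Real.pi) + ((p * m : ℤ) : ℝ) := by
    rw [eq_add_of_sub_eq hm]
    push_cast
    field_simp
    ring
  rw [label, hfloor, Int.floor_add_intCast]
  push_cast
  simp

theorem eventually_abs_arg_div_lt {z₀ : ℂ} (hz₀ : z₀ ≠ 0) {ε : ℝ} (hε : 0 < ε) :
    ∀ᶠ z in 𝓝 z₀, |arg (z / z₀)| < ε := by
  have hcont : ContinuousAt (fun z => |arg (z / z₀)|) z₀ := by
    refine (ContinuousAt.comp (g := arg) ?_ (by fun_prop)).abs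
    rw [div_self hz₀]
    exact continuousAt_arg one_mem_slitPlane
  refine hcont.eventually_lt continuousAt_const ?_
  simpa [div_self hz₀] using hε

theorem floor_add_eq_or {a b : ℝ} (hb : |b| < 1 / 2) :
    ⌊a + b⌋ = ⌊a - 1 / 2⌋ ∨ ⌊a + b⌋ = ⌊a - 1 / 2⌋ + 1 := by
  rw [abs_lt] at hb
  have hlow : ⌊a - 1 / 2⌋ ≤ ⌊a + b⌋ := Int.floor_le_floor (by linarith)
  have hhigh : ⌊a + b⌋ ≤ ⌊a - 1 / 2 + 1⌋ := Int.floor_le_floor (by linarith)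
  rw [Int.floor_add_one] at hhigh
  omega

theorem eventually_label_eq_of_im_eq_zero {z₀ : ℂ} (hz₀ : z₀ ≠ 0) (him : z₀.im = 0) :
    ∀ᶠ z in 𝓝[{z | z.im = 0}] z₀, z ≠ 0 ∧ label p z = label p z₀ := by
  have hre : z₀.re ≠ 0 := fun h => hz₀ (Complex.ext h him)
  rcases hre.lt_or_gt with h | h
  · filter_upwards [self_mem_nhdsWithin,
      mem_nhdsWithin_of_mem_nhds ((isOpen_lt continuous_re continuous_const).mem_nhds h)]
      with z hzim hz
    refine ⟨fun h0 => by simp [h0] at hz, ?_⟩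
    rw [label, label, arg_eq_pi_iff.2 ⟨hz, hzim⟩, arg_eq_pi_iff.2 ⟨h, him⟩]
  · filter_upwards [self_mem_nhdsWithin,
      mem_nhdsWithin_of_mem_nhds ((isOpen_lt continuous_const continuous_re).mem_nhds h)]
      with z hzim hz
    refine ⟨fun h0 => by simp [h0] at hz, ?_⟩
    rw [label, label, arg_eq_zero_iff.2 ⟨le_of_lt hz, hzim⟩, arg_eq_zero_iff.2 ⟨le_of_lt h, him⟩]

variable [NeZero p]

theorem label_stdAddChar_mul (c : ZMod p) {z : ℂ} (hz : z ≠ 0) :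
    label p (ZMod.stdAddChar c * z) = label p z + c := by
  have hp : (p : ℝ) ≠ 0 := NeZero.ne _
  obtain ⟨j, rfl⟩ := ZMod.intCast_surjective c
  have hexp : (ZMod.stdAddChar (j : ZMod p) : ℂ) = exp ((2 * Real.pi * j / p : ℝ) * I) := by
    rw [ZMod.stdAddChar_coe]
    push_cast
    ring_nf
  have harg : (arg (ZMod.stdAddChar (j : ZMod p) * z) : Real.Angle) =
      (2 * Real.pi * j / p + arg z : ℝ) := by
    rw [hexp, arg_mul_coe_angle (exp_ne_zero _) hz, Real.Angle.coe_add, arg_exp_mul_I]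
    exact congrArg (· + _) (Real.Angle.coe_toIocMod _ _)
  have hsum : p * (2 * Real.pi * j / p + arg z) / (2 * Real.pi) =
      p * arg z / (2 * Real.pi) + j := by
    field_simp
    ring
  rw [label_eq_of_arg_coe_eq harg, hsum, Int.floor_add_intCast, label, Int.cast_add]

theorem exists_eventually_label_eq_or {z₀ : ℂ} (hz₀ : z₀ ≠ 0) :
    ∃ i : ZMod p, ∀ᶠ z in 𝓝 z₀, z ≠ 0 ∧ (label p z = i ∨ label p z = i + 1) := by
  have hp : (0 : ℝ) < p := Nat.cast_pos.2 (NeZero.pos p)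
  refine ⟨(⌊p * arg z₀ / (2 * Real.pi) - 1 / 2⌋ : ℤ), ?_⟩
  filter_upwards [eventually_abs_arg_div_lt hz₀ (div_pos Real.pi_pos hp), eventually_ne_nhds hz₀]
    with z hz hz0
  have harg : (arg z : Real.Angle) = (arg z₀ + arg (z / z₀) : ℝ) := by
    rw [Real.Angle.coe_add, ← arg_mul_coe_angle hz₀ (div_ne_zero hz0 hz₀), mul_div_cancel₀ _ hz₀]
  have hsmall : |p * arg (z / z₀) / (2 * Real.pi)| < 1 / 2 := by
    rw [lt_div_iff₀ hp, ← Nat.abs_cast p, ← abs_mul, mul_comm] at hz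
    rw [abs_div, abs_of_pos Real.two_pi_pos, div_lt_iff₀ Real.two_pi_pos]
    linarith
  refine ⟨hz0, ?_⟩
  rw [label_eq_of_arg_coe_eq harg, mul_add, add_div]
  refine (floor_add_eq_or hsmall).imp (congrArg _) fun h => ?_
  rw [h, Int.cast_add, Int.cast_one]

end Label

theorem carry_eq_zero {p : ℕ} (hp : 2 < p) {w : ℕ → ZMod p} {i : ZMod p}
    (h : ∀ a, w a = i ∨ w a = i + 1) : carry p w = 0 := by
  have hone : (1 : ZMod p).valMinAbs = 1 := by
    simpa using ZMod.valMinAbs_natCast_of_le_half (n := p) (a := 1) (by omega)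
  have hneg : (-1 : ZMod p).valMinAbs = -1 := by
    have : Fact (1 < p) := ⟨by omega⟩
    have : NeZero p := ⟨by omega⟩
    rw [ZMod.valMinAbs_neg_of_ne_half, hone]
    rw [ZMod.val_one]
    omega
  have hcoboundary : coboundary 2 (edgeInt p) w = 0 := by
    rw [coboundary_two_edgeInt]
    rcases h 0 with h0 | h0 <;> rcases h 1 with h1 | h1 <;> rcases h 2 with h2 | h2 <;>
      simp [h0, h1, h2, hone, hneg]
  rw [carry, reduce_apply, carryInt, hcoboundary, Int.zero_ediv, Int.cast_zero]

section Limit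

open Filter Topology

theorem exists_mem_forall_nhds_of_dist_le {E : Type*} [PseudoMetricSpace E] {K : Set E}
    (hK : IsCompact K) {x : ℕ → ℕ → E} {ε : ℕ → ℝ} (hx : ∀ n, x n 0 ∈ K)
    (hdist : ∀ n a, dist (x n a) (x n 0) ≤ ε n) (hε : Tendsto ε atTop (𝓝 0)) :
    ∃ t ∈ K, ∀ U ∈ 𝓝 t, ∃ n, ∀ a, x n a ∈ U := by
  obtain ⟨t, ht, φ, hφ, hlim⟩ := hK.tendsto_subseq hx
  refine ⟨t, ht, fun U hU => ?_⟩
  obtain ⟨δ, hδ, hball⟩ := Metric.mem_nhds_iff.1 hU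
  obtain ⟨n, hsmall, hnear⟩ := (((hε.comp hφ.tendsto_atTop).eventually_lt_const (half_pos hδ)).and
    (Metric.tendsto_nhds.1 hlim _ (half_pos hδ))).exists
  refine ⟨φ n, fun a => hball (Metric.mem_ball.2 ?_)⟩
  calc dist (x (φ n) a) t ≤ dist (x (φ n) a) (x (φ n) 0) + dist (x (φ n) 0) t :=
        dist_triangle _ _ _
    _ < δ / 2 + δ / 2 := add_lt_add_of_le_of_lt ((hdist _ a).trans hsmall.le) hnear
    _ = δ := add_halves δ

variable {p N : ℕ} {ι : Type*} [Fintype ι]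

/-- A function of weightings, equivariant for the translations of the group and for the character
given by `χ`. -/
def IsEquivariant [NeZero p] (χ : ι → ZMod p) (f : (Fin N → (ι → ZMod p) → ℝ) → ℂ) : Prop :=
  ∀ g t, f (fun i h => t i (h - g)) = ZMod.stdAddChar (χ ⬝ᵥ g) * f t

variable [NeZero N] [NeZero p]

open Classical in
/-- The labelling of words that a function of weightings induces; where the function vanishes, the
label only has to be chosen equivariantly. -/
noncomputable def wordLabel {L : ℕ} [NeZero L] (χ : ι → ZMod p)
    (f : (Fin N → (ι → ZMod p) → ℝ) → ℂ) (u : Word p (N * L) ι) : ZMod p :=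
  if f (weight u) = 0 then χ ⬝ᵥ head u else label p (f (weight u))

theorem wordLabel_translate {L : ℕ} [NeZero L] {χ : ι → ZMod p}
    {f : (Fin N → (ι → ZMod p) → ℝ) → ℂ} (hf : IsEquivariant χ f) (g : ι → ZMod p)
    (u : Word p (N * L) ι) : wordLabel χ f (translate g u) = wordLabel χ f u + χ ⬝ᵥ g := by
  have htranslate : f (weight (translate g u)) = ZMod.stdAddChar (χ ⬝ᵥ g) * f (weight u) := by
    rw [← hf g]
    exact congrArg f (funext₂ fun i h => weight_translate g u i h)
  have hne : (ZMod.stdAddChar (χ ⬝ᵥ g) : ℂ) ≠ 0 := by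
    rw [ZMod.stdAddChar_apply]
    exact Circle.coe_ne_zero _
  rw [wordLabel, wordLabel, htranslate]
  by_cases h : f (weight u) = 0
  · rw [if_pos (by rw [h, mul_zero]), if_pos h]
    exact dotProduct_add χ (head u) g
  · rw [if_neg (mul_ne_zero hne h), if_neg h, label_stdAddChar_mul _ h]

theorem exists_mem_almostFull_forall_eq_zero [Fact p.Prime] [DecidableEq ι] {d : ℕ}
    {y : Cochain (ZMod p) (ZMod p)} (D : ∀ M [NeZero M], DetectingClass p M ι)
    (hdeg : ∀ M [NeZero M], (D M).deg = d) (hcls : ∀ M [NeZero M], (D M).cls = y) {K : Set ℂ}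
    (hK : ∀ z ∈ K, z ≠ 0 → ∃ U ∈ 𝓝[K] z, ∀ ζ : ℕ → ℂ, (∀ a, ζ a ∈ U) →
      (∀ a, ζ a ≠ 0) ∧ y (fun a => label p (ζ a)) = 0)
    {α : Type*} [Fintype α] {χ : α → ι → ZMod p} (hχ : ∀ x, χ x ≠ 0)
    {f : α → (Fin N → (ι → ZMod p) → ℝ) → ℂ} (hcont : ∀ x, Continuous (f x))
    (hmem : ∀ x t, f x t ∈ K) (hequiv : ∀ x, IsEquivariant (χ x) (f x)) :
    ∃ t ∈ almostFull (Fin N) (ι → ZMod p) (d * Fintype.card α), ∀ x, f x t = 0 := by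
  have hdetect (n : ℕ) : ∃ v : ℕ → Word p (N * (n + 1)) ι, IsSmall (d * Fintype.card α) v ∧
      ∀ x, ∃ s, y (fun a => wordLabel (χ x) (f x) (v (s + a))) ≠ 0 := by
    rw [← hdeg (N * (n + 1)), ← hcls (N * (n + 1))]
    exact (D _).exists_isSmall_forall_cls_ne_zero hχ fun x => wordLabel_translate (hequiv x)
  choose v hsmall hne using hdetect
  have hlim : Tendsto (fun n : ℕ => (2 * (d * Fintype.card α : ℕ) / (n + 1 : ℕ) : ℝ)) atTop (𝓝 0) :=
    (tendsto_const_div_atTop_nhds_zero_nat _).comp (tendsto_add_atTop_nat 1)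
  obtain ⟨t, ht, hnear⟩ := exists_mem_forall_nhds_of_dist_le (isCompact_almostFull _)
    (x := fun n a => weight (v n a)) (fun n => weight_mem_almostFull ((hsmall n).2 0))
    (fun n a => dist_weight_le (hsmall n) a 0) hlim
  refine ⟨t, ht, fun x => by_contra fun hx => ?_⟩
  obtain ⟨U, hU, hzero⟩ := hK _ (hmem x t) hx
  have htendsto : Tendsto (f x) (𝓝 t) (𝓝[K] f x t) :=
    tendsto_nhdsWithin_iff.2 ⟨(hcont x).tendsto t, .of_forall (hmem x)⟩
  obtain ⟨n, hn⟩ := hnear _ (htendsto hU)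
  obtain ⟨s, hs⟩ := hne n x
  obtain ⟨hne0, hy⟩ := hzero (fun a => f x (weight (v n (s + a)))) fun a => hn (s + a)
  exact hs (by simpa only [wordLabel, if_neg (hne0 _)] using hy)

theorem exists_mem_almostFull_forall_eq_zero_of_two_lt [Fact p.Prime] (hp : 2 < p)
    {α : Type*} [Fintype α] {χ : α → ι → ZMod p} (hχ : ∀ x, χ x ≠ 0)
    {f : α → (Fin N → (ι → ZMod p) → ℝ) → ℂ} (hcont : ∀ x, Continuous (f x))
    (hequiv : ∀ x, IsEquivariant (χ x) (f x)) :
    ∃ t ∈ almostFull (Fin N) (ι → ZMod p) (2 * Fintype.card α), ∀ x, f x t = 0 := by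
  classical
  refine exists_mem_almostFull_forall_eq_zero (fun M _ => carryClass p M ι) (fun _ _ => rfl)
    (fun _ _ => rfl) (K := Set.univ) (fun z _ hz => ?_) hχ hcont (fun _ _ => Set.mem_univ _) hequiv
  obtain ⟨i, hi⟩ := exists_eventually_label_eq_or (p := p) hz
  exact ⟨_, nhdsWithin_univ z ▸ hi, fun ζ hζ =>
    ⟨fun a => (hζ a).1, carry_eq_zero hp fun a => (hζ a).2⟩⟩

theorem exists_mem_almostFull_forall_eq_zero_of_im_eq_zero
    {α : Type*} [Fintype α] {χ : α → ι → ZMod 2} (hχ : ∀ x, χ x ≠ 0)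
    {f : α → (Fin N → (ι → ZMod 2) → ℝ) → ℂ} (hcont : ∀ x, Continuous (f x))
    (him : ∀ x t, (f x t).im = 0) (hequiv : ∀ x, IsEquivariant (χ x) (f x)) :
    ∃ t ∈ almostFull (Fin N) (ι → ZMod 2) (Fintype.card α), ∀ x, f x t = 0 := by
  classical
  rw [← one_mul (Fintype.card α)]
  refine exists_mem_almostFull_forall_eq_zero (fun M _ => edgeClass M ι) (fun _ _ => rfl)
    (fun _ _ => rfl) (K := {z | z.im = 0}) (fun z hzim hz => ?_) hχ hcont him hequiv
  refine ⟨_, eventually_label_eq_of_im_eq_zero (p := 2) hz hzim, fun ζ hζ =>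
    ⟨fun a => (hζ a).1, ?_⟩⟩
  simp only [(hζ _).2, sub_self]

end Limit

section Fourier

variable {p : ℕ} [NeZero p] {ι : Type*} [Fintype ι]

/-- The character of the group `(ℤ/p)^ι` that corresponds to `χ` under its self-duality. -/
noncomputable def dotChar (χ : ι → ZMod p) : AddChar (ι → ZMod p) ℂ where
  toFun g := ZMod.stdAddChar (χ ⬝ᵥ g)
  map_zero_eq_one' := by rw [dotProduct_zero, AddChar.map_zero_eq_one]
  map_add_eq_mul' g h := by rw [dotProduct_add, AddChar.map_add_eq_mul]

theorem dotChar_apply (χ g : ι → ZMod p) : dotChar χ g = ZMod.stdAddChar (χ ⬝ᵥ g) :=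
  rfl

theorem dotChar_comm (χ g : ι → ZMod p) : dotChar χ g = dotChar g χ := by
  rw [dotChar_apply, dotChar_apply, dotProduct_comm]

theorem dotChar_neg_left (χ g : ι → ZMod p) : dotChar (-χ) g = starRingEnd ℂ (dotChar χ g) := by
  rw [dotChar_apply, neg_dotProduct, AddChar.map_neg_eq_conj, dotChar_apply]

theorem dotChar_ne_one {χ : ι → ZMod p} (hχ : χ ≠ 0) : dotChar χ ≠ 1 := by
  classical
  obtain ⟨j, hj⟩ := Function.ne_iff.1 hχ
  refine AddChar.ne_one_iff.2 ⟨Pi.single j 1, fun h => hj ?_⟩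
  rw [dotChar_apply, dotProduct_single_one,
    ← AddChar.map_zero_eq_one (ZMod.stdAddChar (N := p))] at h
  exact ZMod.injective_stdAddChar h

variable [DecidableEq ι]

theorem sum_dotChar_of_ne_zero {g : ι → ZMod p} (hg : g ≠ 0) :
    ∑ χ : ι → ZMod p, dotChar χ g = 0 := by
  simp only [dotChar_comm _ g]
  exact AddChar.sum_eq_zero_of_ne_one (dotChar_ne_one hg)

theorem card_mul_eq_sum_of_sum_dotChar_mul_eq_zero {F : (ι → ZMod p) → ℂ}
    (hF : ∀ χ ≠ 0, ∑ g, dotChar χ g * F g = 0) (x : ι → ZMod p) :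
    (Fintype.card (ι → ZMod p) : ℂ) * F x = ∑ g, F g := by
  calc (Fintype.card (ι → ZMod p) : ℂ) * F x
      = ∑ g, (∑ χ, dotChar χ (g - x)) * F g := by
        rw [sum_eq_single x (fun g _ hg => by
          rw [sum_dotChar_of_ne_zero (sub_ne_zero.2 hg), zero_mul]) (by simp)]
        simp
    _ = ∑ χ, dotChar χ (-x) * ∑ g, dotChar χ g * F g := by
        simp only [sum_mul, mul_sum]
        rw [sum_comm]
        simp only [← mul_assoc, ← AddChar.map_add_eq_mul, neg_add_eq_sub]
    _ = ∑ g, F g := by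
        rw [sum_eq_single 0 (fun χ _ hχ => by rw [hF χ hχ, mul_zero]) (by simp)]
        simp [dotChar_apply]

variable {N : ℕ} {κ : Type*}

/-- The Fourier coefficient at `χ` of a real-valued function of a group element and a weighting. -/
noncomputable def fourierCoeff (F : (Fin N → (ι → ZMod p) → ℝ) → (ι → ZMod p) → ℝ)
    (χ : ι → ZMod p) (t : Fin N → (ι → ZMod p) → ℝ) : ℂ :=
  ∑ g, dotChar χ g * F t g

theorem isEquivariant_fourierCoeff {F : (Fin N → (ι → ZMod p) → ℝ) → (ι → ZMod p) → ℝ}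
    (hF : ∀ g t h, F (fun i h => t i (h - g)) h = F t (h - g)) (χ : ι → ZMod p) :
    IsEquivariant χ (fourierCoeff F χ) := by
  intro g t
  rw [fourierCoeff, fourierCoeff, mul_sum, ← Equiv.sum_comp (Equiv.addLeft g)]
  refine sum_congr rfl fun h _ => ?_
  rw [Equiv.coe_addLeft, hF, add_sub_cancel_left, AddChar.map_add_eq_mul, dotChar_apply χ g,
    mul_assoc]

theorem fourierCoeff_neg (F : (Fin N → (ι → ZMod p) → ℝ) → (ι → ZMod p) → ℝ) (χ : ι → ZMod p)
    (t : Fin N → (ι → ZMod p) → ℝ) :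
    fourierCoeff F (-χ) t = starRingEnd ℂ (fourierCoeff F χ t) := by
  simp only [fourierCoeff, map_sum, map_mul, Complex.conj_ofReal, dotChar_neg_left]

theorem continuous_fourierCoeff {F : (Fin N → (ι → ZMod p) → ℝ) → (ι → ZMod p) → ℝ}
    (hF : ∀ g, Continuous fun t => F t g) (χ : ι → ZMod p) : Continuous (fourierCoeff F χ) :=
  continuous_finsetSum _ fun g _ =>
    continuous_const.mul (Complex.continuous_ofReal.comp (hF g))

end Fourier

section Equalization

theorem exists_finset_half_of_neg_ne_self {V : Type*} [InvolutiveNeg V] [Fintype V]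
    [DecidableEq V] : ∃ S : Finset V, 2 * #S ≤ #{x : V | -x ≠ x} ∧ (∀ x ∈ S, -x ≠ x) ∧
      ∀ x, -x ≠ x → x ∈ S ∨ -x ∈ S := by
  let e := Fintype.equivFin V
  let S : Finset V := {x | e x < e (-x)}
  have hS {x : V} : x ∈ S ↔ e x < e (-x) := by simp [S]
  have hne : ∀ x ∈ S, -x ≠ x := fun x hx h => (hS.1 hx).ne (congrArg e h.symm)
  refine ⟨S, ?_, hne, fun x hx => ?_⟩
  · have hdisjoint : Disjoint S (S.image Neg.neg) := by
      refine disjoint_left.2 fun x hx hx' => ?_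
      obtain ⟨y, hy, rfl⟩ := mem_image.1 hx'
      rw [hS, neg_neg] at hx
      exact lt_asymm hx (hS.1 hy)
    rw [two_mul]
    nth_rewrite 2 [← card_image_of_injective S neg_injective]
    rw [← card_union_of_disjoint hdisjoint]
    refine card_le_card (union_subset (fun x hx => by simpa using hne x hx) fun x hx => ?_)
    obtain ⟨y, hy, rfl⟩ := mem_image.1 hx
    simpa using (hne y hy).symm
  · rw [hS, hS, neg_neg]
    exact lt_or_gt_of_ne fun h => hx (e.injective h).symm

theorem neg_eq_self_iff_eq_zero_of_odd {p : ℕ} (hp : Odd p) {ι : Type*} {χ : ι → ZMod p} :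
    -χ = χ ↔ χ = 0 := by
  simp only [funext_iff, Pi.neg_apply, Pi.zero_apply, ZMod.neg_eq_self_iff]
  exact forall_congr' fun j => or_iff_left fun h =>
    Nat.not_even_iff_odd.2 hp (h ▸ even_two_mul _)

variable {p N : ℕ} [Fact p.Prime] [NeZero N] {ι κ : Type*} [Fintype ι] [DecidableEq ι] [Fintype κ]

theorem exists_mem_almostFull_fourierCoeff_eq_zero
    {F : κ → (Fin N → (ι → ZMod p) → ℝ) → (ι → ZMod p) → ℝ}
    (hcont : ∀ k g, Continuous fun t => F k t g)
    (hF : ∀ k g t h, F k (fun i h => t i (h - g)) h = F k t (h - g)) :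
    ∃ t ∈ almostFull (Fin N) (ι → ZMod p)
        ((Fintype.card (ι → ZMod p) - 1) * Fintype.card κ),
      ∀ k, ∀ χ ≠ 0, fourierCoeff (F k) χ t = 0 := by
  have hcard : #{χ : ι → ZMod p | χ ≠ 0} = Fintype.card (ι → ZMod p) - 1 := by
    rw [filter_ne', card_erase_of_mem (mem_univ _), card_univ]
  obtain rfl | hp := (Fact.out : p.Prime).eq_two_or_odd'
  · have him (k : κ) (χ : ι → ZMod 2) (t) : (fourierCoeff (F k) χ t).im = 0 := by
      rw [← Complex.conj_eq_iff_im, ← fourierCoeff_neg]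
      congr 1
      exact funext fun j => ZMod.neg_eq_self_mod_two (χ j)
    obtain ⟨t, ht, hzero⟩ := exists_mem_almostFull_forall_eq_zero_of_im_eq_zero
      (α := ({χ : ι → ZMod 2 | χ ≠ 0} : Finset _) × κ) (χ := fun x => x.1.1)
      (f := fun x => fourierCoeff (F x.2) x.1.1) (fun x => (mem_filter.1 x.1.2).2)
      (fun x => continuous_fourierCoeff (hcont x.2) _) (fun x t => him _ _ t)
      (fun x => isEquivariant_fourierCoeff (hF x.2) _)
    refine ⟨t, ?_, fun k χ hχ => hzero (⟨χ, by simpa using hχ⟩, k)⟩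
    rwa [Fintype.card_prod, Fintype.card_coe, hcard] at ht
  · obtain ⟨S, hS, hne, hcover⟩ := exists_finset_half_of_neg_ne_self (V := ι → ZMod p)
    simp only [ne_eq, neg_eq_self_iff_eq_zero_of_odd hp] at hS hne hcover
    obtain ⟨t, ht, hzero⟩ := exists_mem_almostFull_forall_eq_zero_of_two_lt
      ((Fact.out : p.Prime).odd_iff.1 hp) (α := S × κ) (χ := fun x => x.1.1)
      (f := fun x => fourierCoeff (F x.2) x.1.1) (fun x => hne x.1.1 x.1.2)
      (fun x => continuous_fourierCoeff (hcont x.2) _)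
      (fun x => isEquivariant_fourierCoeff (hF x.2) _)
    refine ⟨t, almostFull_mono ?_ ht, fun k χ hχ => ?_⟩
    · rw [Fintype.card_prod, Fintype.card_coe, ← mul_assoc, ← hcard]
      exact Nat.mul_le_mul_right _ hS
    · obtain h | h := hcover χ hχ
      · exact hzero (⟨χ, h⟩, k)
      · exact (map_eq_zero _).1 ((fourierCoeff_neg (F k) χ t).symm.trans (hzero (⟨-χ, h⟩, k)))

theorem exists_mem_almostFull_card_mul_eq_sum
    {F : κ → (Fin N → (ι → ZMod p) → ℝ) → (ι → ZMod p) → ℝ}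
    (hcont : ∀ k g, Continuous fun t => F k t g)
    (hF : ∀ k g t h, F k (fun i h => t i (h - g)) h = F k t (h - g)) :
    ∃ t ∈ almostFull (Fin N) (ι → ZMod p)
        ((Fintype.card (ι → ZMod p) - 1) * Fintype.card κ),
      ∀ k g, Fintype.card (ι → ZMod p) * F k t g = ∑ h, F k t h := by
  obtain ⟨t, ht, hzero⟩ := exists_mem_almostFull_fourierCoeff_eq_zero hcont hF
  exact ⟨t, ht, fun k g => by
    exact_mod_cast card_mul_eq_sum_of_sum_dotChar_mul_eq_zero (hzero k) g⟩

end Equalization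

section Counting

theorem forall_card_eq_and_exists_mem_of_disjoint {α G : Type*} [Fintype α] [Fintype G] {m : ℕ}
    {S : G → Finset α} (hcard : Fintype.card α = m * Fintype.card G)
    (hdisjoint : Pairwise fun g h => Disjoint (S g) (S h)) (hS : ∀ g, m ≤ #(S g)) :
    (∀ g, #(S g) = m) ∧ ∀ i, ∃ g, i ∈ S g := by
  classical
  have hunion : #(univ.biUnion S) = ∑ g, #(S g) :=
    card_biUnion fun g _ h _ hgh => hdisjoint hgh
  have hconst : ∑ _g : G, m = Fintype.card α := by
    rw [sum_const, card_univ, smul_eq_mul, hcard, mul_comm]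
  have hsum : ∑ _g : G, m = ∑ g, #(S g) :=
    (sum_le_sum fun g _ => hS g).antisymm (hunion ▸ hconst ▸ card_le_univ _)
  refine ⟨fun g => ((sum_eq_sum_iff_of_le fun g _ => hS g).1 hsum g (mem_univ g)).symm,
    fun i => ?_⟩
  have huniv : univ.biUnion S = univ := by
    rw [← card_eq_iff_eq_univ, hunion, ← hsum, hconst]
  simpa using huniv.ge (mem_univ i)

theorem exists_forall_filter_eq_of_disjoint {α G : Type*} [Fintype α] [Fintype G] [DecidableEq G]
    {m : ℕ} {S : G → Finset α} (hcard : Fintype.card α = m * Fintype.card G)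
    (hdisjoint : Pairwise fun g h => Disjoint (S g) (S h)) (hS : ∀ g, m ≤ #(S g)) :
    ∃ c : α → G, ∀ g, univ.filter (c · = g) = S g ∧ #(S g) = m := by
  obtain ⟨hm, hcover⟩ := forall_card_eq_and_exists_mem_of_disjoint hcard hdisjoint hS
  choose c hc using hcover
  refine ⟨c, fun g => ⟨ext fun i => ?_, hm g⟩⟩
  rw [mem_filter_univ]
  exact ⟨fun h => h ▸ hc i, fun hi => hdisjoint.eq (not_disjoint_iff.2 ⟨i, hc i, hi⟩)⟩

end Counting

section Gram

open Matrix

variable {α G κ : Type*} [Fintype α] [Fintype G]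

/-- The sum of the rank one matrices `a i (a i)ᵀ`, each taken with the total weight of `i`. -/
def weightedGram (a : α → κ → ℝ) (t : α → G → ℝ) : Matrix κ κ ℝ :=
  ∑ i, (∑ g, t i g) • vecMulVec (a i) (a i)

variable [Fintype κ]

theorem weightedGram_mulVec (a : α → κ → ℝ) (t : α → G → ℝ) (z : κ → ℝ) :
    weightedGram a t *ᵥ z = ∑ i, ((∑ g, t i g) * (a i ⬝ᵥ z)) • a i := by
  simp only [weightedGram, sum_mulVec, smul_mulVec, vecMulVec_mulVec, op_smul_eq_smul, mul_smul]

theorem dotProduct_weightedGram_mulVec (a : α → κ → ℝ) (t : α → G → ℝ) (z : κ → ℝ) :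
    z ⬝ᵥ weightedGram a t *ᵥ z = ∑ i, (∑ g, t i g) * (a i ⬝ᵥ z) ^ 2 := by
  simp only [weightedGram_mulVec, dotProduct_comm z, sum_dotProduct, smul_dotProduct, smul_eq_mul,
    mul_assoc, sq]

theorem posDef_weightedGram {a : α → κ → ℝ} {s : ℕ} {t : α → G → ℝ}
    (ha : ∀ S : Finset α, #S = Fintype.card κ → ∀ z, (∀ i ∈ S, a i ⬝ᵥ z = 0) → z = 0)
    (ht : t ∈ almostFull α G s) (hs : Fintype.card κ + s ≤ Fintype.card α) :
    (weightedGram a t).PosDef := by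
  obtain ⟨hmem, -, S, hS, hone⟩ := ht
  obtain ⟨S', hsub, hcard⟩ := exists_subset_card_eq (show Fintype.card κ ≤ #S by omega)
  have hnonneg (i : α) : 0 ≤ ∑ g, t i g := sum_nonneg fun g _ => (hmem i g).1
  have hpos : ∀ i ∈ S, 0 < ∑ g, t i g := fun i hi => by
    obtain ⟨g, hg⟩ := hone i hi
    exact sum_pos' (fun g _ => (hmem i g).1) ⟨g, mem_univ g, hg ▸ one_pos⟩
  have hherm : (weightedGram a t).IsHermitian := by
    simp only [IsHermitian, weightedGram, conjTranspose_sum, conjTranspose_smul,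
      conjTranspose_vecMulVec, star_trivial]
  refine .of_dotProduct_mulVec_pos hherm fun z hz => ?_
  rw [star_trivial, dotProduct_weightedGram_mulVec]
  refine (sum_nonneg fun i _ => mul_nonneg (hnonneg i) (sq_nonneg _)).lt_of_ne' fun hsum => hz ?_
  rw [sum_eq_zero_iff_of_nonneg fun i _ => mul_nonneg (hnonneg i) (sq_nonneg _)] at hsum
  exact ha S' hcard z fun i hi => pow_eq_zero_iff two_ne_zero |>.1 <|
    (mul_eq_zero.1 (hsum i (mem_univ i))).resolve_left (hpos i (hsub hi)).ne'

variable [DecidableEq κ]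

/-- The solution `z` of `weightedGram a t *ᵥ z = e`, scaled by the determinant so that it depends
continuously on all weightings `t`. -/
noncomputable def gramSolution (a : α → κ → ℝ) (e : κ → ℝ) (t : α → G → ℝ) : κ → ℝ :=
  (weightedGram a t).adjugate *ᵥ e

theorem weightedGram_mulVec_gramSolution (a : α → κ → ℝ) (e : κ → ℝ) (t : α → G → ℝ) :
    weightedGram a t *ᵥ gramSolution a e t = (weightedGram a t).det • e := by
  rw [gramSolution, mulVec_mulVec, mul_adjugate, smul_mulVec, one_mulVec]

theorem dotProduct_gramSolution_pos {a : α → κ → ℝ} {e : κ → ℝ} {t : α → G → ℝ} (he : e ≠ 0)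
    (hpos : (weightedGram a t).PosDef) : 0 < e ⬝ᵥ gramSolution a e t := by
  have hsolution := weightedGram_mulVec_gramSolution a e t
  have hne : gramSolution a e t ≠ 0 := fun h => smul_ne_zero hpos.det_pos.ne' he
    (by rw [← hsolution, h, mulVec_zero])
  have hquad := hpos.dotProduct_mulVec_pos hne
  rw [star_trivial, hsolution, dotProduct_smul, smul_eq_mul, dotProduct_comm] at hquad
  exact pos_of_mul_pos_right hquad hpos.det_pos.le

/-- The contribution of the group element `g` to the expansion of
`weightedGram a t *ᵥ gramSolution a e t` in the vectors `a i`. -/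
noncomputable def share (a : α → κ → ℝ) (e : κ → ℝ) (t : α → G → ℝ) (g : G) : κ → ℝ :=
  ∑ i, (t i g * (a i ⬝ᵥ gramSolution a e t)) • a i

theorem sum_share (a : α → κ → ℝ) (e : κ → ℝ) (t : α → G → ℝ) :
    ∑ g, share a e t g = (weightedGram a t).det • e := by
  rw [← weightedGram_mulVec_gramSolution, weightedGram_mulVec]
  simp only [share]
  rw [sum_comm]
  simp only [sum_mul, sum_smul]

theorem share_equiv (a : α → κ → ℝ) (e : κ → ℝ) (t : α → G → ℝ) (σ : Equiv.Perm G) (g : G) :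
    share a e (fun i h => t i (σ h)) g = share a e t (σ g) := by
  have hgram : weightedGram a (fun i h => t i (σ h)) = weightedGram a t :=
    sum_congr rfl fun i _ => by rw [Equiv.sum_comp σ (t i)]
  rw [share, gramSolution, hgram]
  rfl

theorem continuous_share (a : α → κ → ℝ) (e : κ → ℝ) (g : G) :
    Continuous fun t : α → G → ℝ => share a e t g := by
  have hgram : Continuous fun t : α → G → ℝ => weightedGram a t := by
    unfold weightedGram
    fun_prop
  have hsolution : Continuous fun t : α → G → ℝ => gramSolution a e t :=
    hgram.matrix_adjugate.matrix_mulVec continuous_const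
  exact continuous_finsetSum _ fun i _ => ((continuous_apply_apply i g).mul
    (continuous_const.dotProduct hsolution)).smul continuous_const

end Gram

section Partition

theorem exists_labelling_of_forall_sum_smul_eq {α G κ : Type*} [Fintype α] [Fintype G]
    [DecidableEq G] [Fintype κ] {a : α → κ → ℝ} {e b : κ → ℝ} {s : ℕ}
    {t : α → G → ℝ} {r : ℝ} (hr : 0 < r) (ht : t ∈ almostFull α G s)
    (hsum : ∀ g, ∑ i, (t i g * (a i ⬝ᵥ b)) • a i = r • e)
    (ha : ∀ S : Finset α, #S < Fintype.card κ → ∀ x : α → ℝ, ∑ i ∈ S, x i • a i ≠ e)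
    (hcard : Fintype.card α = Fintype.card κ * Fintype.card G) :
    ∃ (c : α → G) (x : α → ℝ), (∀ g, #{i | c i = g} = Fintype.card κ) ∧
      (∀ i, 0 < x i * (a i ⬝ᵥ b)) ∧ ∀ g, ∑ i with c i = g, x i • a i = e := by
  obtain ⟨hmem, hmul, -⟩ := ht
  let X (i : α) (g : G) : ℝ := r⁻¹ * (t i g * (a i ⬝ᵥ b))
  let S (g : G) : Finset α := {i | X i g ≠ 0}
  have hS {i g} : i ∈ S g ↔ X i g ≠ 0 := mem_filter_univ i
  have hX (g : G) : ∑ i ∈ S g, X i g • a i = e := by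
    rw [sum_filter_of_ne fun i _ h => left_ne_zero_of_smul h]
    simp only [X, mul_smul r⁻¹, ← smul_sum, hsum, inv_smul_smul₀ hr.ne']
  have hdisjoint : Pairwise fun g h => Disjoint (S g) (S h) := fun g h hgh =>
    disjoint_left.2 fun i hg hh => by
      simp only [hS, X, mul_ne_zero_iff] at hg hh
      exact mul_ne_zero hg.2.1 hh.2.1 (hmul i g h hgh)
  obtain ⟨c, hc⟩ := exists_forall_filter_eq_of_disjoint hcard hdisjoint fun g =>
    not_lt.1 fun h => ha (S g) h (X · g) (hX g)
  refine ⟨c, fun i => X i (c i), fun g => (hc g).1 ▸ (hc g).2, fun i => ?_, fun g => ?_⟩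
  · have hi : i ∈ S (c i) := (hc (c i)).1 ▸ mem_filter.2 ⟨mem_univ i, rfl⟩
    simp only [hS, X, mul_ne_zero_iff] at hi
    have ht : 0 < t i (c i) := (hmem i (c i)).1.lt_of_ne' hi.2.1
    have hb : 0 < (a i ⬝ᵥ b) ^ 2 := sq_pos_of_ne_zero hi.2.2
    calc (0 : ℝ) < r⁻¹ * t i (c i) * (a i ⬝ᵥ b) ^ 2 := by positivity
      _ = X i (c i) * (a i ⬝ᵥ b) := by simp only [X]; ring
  · rw [← hX g, ← (hc g).1]
    exact sum_congr rfl fun i hi => by simp only [(mem_filter.1 hi).2]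

variable {κ : Type*} [Fintype κ] [Nonempty κ] {e : κ → ℝ}

theorem exists_balanced_labelling_of_prime {p N : ℕ} [Fact p.Prime] {ι : Type*} [Fintype ι]
    [DecidableEq ι] {a : Fin N → κ → ℝ}
    (hN : N = Fintype.card κ * Fintype.card (ι → ZMod p))
    (hbasis : ∀ S : Finset (Fin N), #S = Fintype.card κ → ∀ z, (∀ i ∈ S, a i ⬝ᵥ z = 0) → z = 0)
    (he : ∀ S : Finset (Fin N), #S < Fintype.card κ → ∀ x : Fin N → ℝ, ∑ i ∈ S, x i • a i ≠ e) :
    ∃ (c : Fin N → ι → ZMod p) (b : κ → ℝ) (x : Fin N → ℝ), 0 < e ⬝ᵥ b ∧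
      (∀ g, #{i | c i = g} = Fintype.card κ) ∧ (∀ i, 0 < x i * (a i ⬝ᵥ b)) ∧
      ∀ g, ∑ i with c i = g, x i • a i = e := by
  classical
  have hκ : 0 < Fintype.card κ := Fintype.card_pos
  have hG : 0 < Fintype.card (ι → ZMod p) := Fintype.card_pos
  have : NeZero N := ⟨by rw [hN]; positivity⟩
  obtain ⟨t, ht, hequal⟩ := exists_mem_almostFull_card_mul_eq_sum (p := p) (ι := ι)
    (F := fun k t g => share a e t g k)
    (fun k g => (continuous_apply k).comp (continuous_share a e g))
    fun k g t h => congrFun (share_equiv a e t (Equiv.subRight g) h) k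
  have hbudget : Fintype.card κ + (Fintype.card (ι → ZMod p) - 1) * Fintype.card κ ≤
      Fintype.card (Fin N) := by
    rw [Fintype.card_fin, hN, Nat.sub_mul, one_mul, mul_comm,
      Nat.add_sub_of_le (Nat.le_mul_of_pos_right _ hG)]
  have hpos := posDef_weightedGram hbasis ht hbudget
  have hne : e ≠ 0 := fun h => he ∅ hκ 0 (by rw [sum_empty, h])
  have hshare (g : ι → ZMod p) : share a e t g =
      ((Fintype.card (ι → ZMod p) : ℝ)⁻¹ * (weightedGram a t).det) • e := by
    rw [mul_smul, ← sum_share, eq_inv_smul_iff₀ (by positivity)]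
    exact funext fun k => (hequal k g).trans (sum_apply k _ _).symm
  obtain ⟨c, x, hc⟩ := exists_labelling_of_forall_sum_smul_eq
    (mul_pos (by positivity) hpos.det_pos) ht hshare he ((Fintype.card_fin N).trans hN)
  exact ⟨c, gramSolution a e t, x, dotProduct_gramSolution_pos hne hpos, hc⟩

theorem exists_balanced_labelling {n N : ℕ} {a : Fin N → κ → ℝ}
    (hn : ∃ p k : ℕ, p.Prime ∧ n = p ^ k) (hN : N = Fintype.card κ * n)
    (hbasis : ∀ S : Finset (Fin N), #S = Fintype.card κ → ∀ z, (∀ i ∈ S, a i ⬝ᵥ z = 0) → z = 0)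
    (he : ∀ S : Finset (Fin N), #S < Fintype.card κ → ∀ x : Fin N → ℝ, ∑ i ∈ S, x i • a i ≠ e) :
    ∃ (c : Fin N → Fin n) (b : κ → ℝ) (x : Fin N → ℝ), 0 < e ⬝ᵥ b ∧
      (∀ m, #{i | c i = m} = Fintype.card κ) ∧ (∀ i, 0 < x i * (a i ⬝ᵥ b)) ∧
      ∀ m, ∑ i with c i = m, x i • a i = e := by
  obtain ⟨p, k, hp, rfl⟩ := hn
  have : Fact p.Prime := ⟨hp⟩
  have hcard : Fintype.card (Fin k → ZMod p) = p ^ k := by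
    rw [Fintype.card_fun, ZMod.card, Fintype.card_fin]
  let σ : (Fin k → ZMod p) ≃ Fin (p ^ k) := Fintype.equivFinOfCardEq hcard
  obtain ⟨c, b, x, hb, hc, hpos, hsum⟩ :=
    exists_balanced_labelling_of_prime (p := p) (ι := Fin k) (hN.trans (by rw [hcard])) hbasis he
  refine ⟨fun i => σ (c i), b, x, hb, fun m => ?_, hpos, fun m => ?_⟩
  · simpa only [← Equiv.eq_symm_apply] using hc (σ.symm m)
  · simpa only [← Equiv.eq_symm_apply] using hsum (σ.symm m)

end Partition

section Geometry

open Matrix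

variable {d N : ℕ}

/-- The homogeneous coordinates `(1, y₁, …, y_d)` of a point. -/
def homogenize (y : EuclideanSpace ℝ (Fin d)) : Fin (d + 1) → ℝ :=
  Fin.cons 1 y.ofLp

theorem continuous_homogenize : Continuous (homogenize (d := d)) :=
  continuous_const.finCons (PiLp.continuous_ofLp 2 _)

theorem exists_homogenize_eq {z : Fin (d + 1) → ℝ} (hz : z 0 = 1) : ∃ y, homogenize y = z :=
  ⟨WithLp.toLp 2 (Fin.tail z), (congrArg (Fin.cons · (Fin.tail z)) hz.symm).trans
    (Fin.cons_self_tail z)⟩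

/-- The vectors `a i` are the homogeneous coordinates of linear equations for the sets `H i`. -/
def IsEquations (a : Fin N → Fin (d + 1) → ℝ) (H : Fin N → Set (EuclideanSpace ℝ (Fin d))) : Prop :=
  ∀ i y, y ∈ H i ↔ a i ⬝ᵥ homogenize y = 0

theorem exists_isEquations {H : Fin N → Set (EuclideanSpace ℝ (Fin d))}
    (hH : ∀ i, IsHyperplane (H i)) : ∃ a, IsEquations a H := by
  choose v c _ hH using hH
  refine ⟨fun i => vecCons (-c i) (v i).ofLp, fun i y => ?_⟩
  have hdot : vecCons (-c i) (v i).ofLp ⬝ᵥ homogenize y = -c i * 1 + (v i).ofLp ⬝ᵥ y.ofLp :=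
    cons_dotProduct_cons _ _ _ _
  rw [hdot, hH i, Set.mem_ofPred_eq, EuclideanSpace.inner_eq_star_dotProduct, star_trivial,
    mul_one, neg_add_eq_sub, sub_eq_zero]

variable {H : Fin N → Set (EuclideanSpace ℝ (Fin d))} {a : Fin N → Fin (d + 1) → ℝ}

theorem IsEquations.eq_zero_of_forall_dotProduct_eq_zero (ha : IsEquations a H)
    (hgp : InGeneralPosition H) {S : Finset (Fin N)} (hS : #S = d + 1) {z : Fin (d + 1) → ℝ}
    (hz : ∀ i ∈ S, a i ⬝ᵥ z = 0) : z = 0 := by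
  by_cases h0 : z 0 = 0
  · obtain ⟨S', hsub, hcard⟩ := exists_subset_card_eq (show d ≤ #S by omega)
    obtain ⟨x, hx, hunique⟩ := hgp.1 S' hcard
    obtain ⟨y, hy⟩ := exists_homogenize_eq (z := homogenize x + z)
      (by rw [Pi.add_apply, h0, add_zero]; rfl)
    have hyx : y = x := hunique y fun i hi => by
      rw [ha, hy, dotProduct_add, (ha i x).1 (hx i hi), hz i (hsub hi), add_zero]
    exact left_eq_add.1 (hyx ▸ hy)
  · obtain ⟨y, hy⟩ := exists_homogenize_eq (z := (z 0)⁻¹ • z)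
      (by rw [Pi.smul_apply, smul_eq_mul, inv_mul_cancel₀ h0])
    refine (hgp.2 S hS ⟨y, fun i hi => ?_⟩).elim
    rw [ha, hy, dotProduct_smul, hz i hi, smul_zero]

theorem sum_mul_dotProduct_homogenize {S : Finset (Fin N)} {x : Fin N → ℝ}
    (hx : ∑ i ∈ S, x i • a i = Pi.single 0 1) (y : EuclideanSpace ℝ (Fin d)) :
    ∑ i ∈ S, x i * (a i ⬝ᵥ homogenize y) = 1 := by
  have hdot := congrArg (· ⬝ᵥ homogenize y) hx
  simp only [sum_dotProduct, smul_dotProduct, single_one_dotProduct, smul_eq_mul] at hdot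
  exact hdot

theorem IsEquations.sum_smul_ne_single (ha : IsEquations a H) (hgp : InGeneralPosition H)
    (hN : d ≤ N) {S : Finset (Fin N)} (hS : #S ≤ d) (x : Fin N → ℝ) :
    ∑ i ∈ S, x i • a i ≠ Pi.single 0 1 := by
  intro hx
  obtain ⟨S', hsub, -, hcard⟩ := exists_subsuperset_card_eq (subset_univ S) hS (by simpa using hN)
  obtain ⟨y, hy, -⟩ := hgp.1 S' hcard
  refine zero_ne_one ((sum_eq_zero fun i hi => ?_).symm.trans (sum_mul_dotProduct_homogenize hx y))
  rw [(ha i y).1 (hy i (hsub hi)), mul_zero]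

theorem exists_forall_mem_erase_mem (hgp : InGeneralPosition H) {S : Finset (Fin N)}
    (hS : #S = d + 1) : ∃ P : Fin N → EuclideanSpace ℝ (Fin d),
      ∀ i ∈ S, ∀ j ∈ S, j ≠ i → P i ∈ H j := by
  have hvertex (i : Fin N) : ∃ q, i ∈ S → ∀ j ∈ S, j ≠ i → q ∈ H j := by
    by_cases hi : i ∈ S
    · obtain ⟨q, hq, -⟩ := hgp.1 (S.erase i) (by rw [card_erase_of_mem hi, hS, Nat.add_sub_cancel])
      exact ⟨q, fun _ j hj hne => hq j (mem_erase.2 ⟨hne, hj⟩)⟩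
    · exact ⟨0, fun h => absurd h hi⟩
  choose P hP using hvertex
  exact ⟨P, hP⟩

theorem IsEquations.eq_sum_smul_of_forall_mem (ha : IsEquations a H) (hgp : InGeneralPosition H)
    {S : Finset (Fin N)} (hS : #S = d + 1) {x : Fin N → ℝ}
    (hx : ∑ i ∈ S, x i • a i = Pi.single 0 1) {P : Fin N → EuclideanSpace ℝ (Fin d)}
    (hP : ∀ i ∈ S, ∀ j ∈ S, j ≠ i → P i ∈ H j) (y : EuclideanSpace ℝ (Fin d)) :
    y = ∑ i ∈ S, (x i * (a i ⬝ᵥ homogenize y)) • P i := by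
  have hone : ∀ i ∈ S, x i * (a i ⬝ᵥ homogenize (P i)) = 1 := fun i hi => by
    rw [← sum_mul_dotProduct_homogenize hx (P i), sum_eq_single_of_mem i hi fun j hj hne => by
      rw [(ha j _).1 (hP i hi j hj hne), mul_zero]]
  have hhom : homogenize y =
      ∑ i ∈ S, (x i * (a i ⬝ᵥ homogenize y)) • homogenize (P i) := by
    refine sub_eq_zero.1 (ha.eq_zero_of_forall_dotProduct_eq_zero hgp hS fun j hj => ?_)
    rw [dotProduct_sub, dotProduct_sum, sum_eq_single_of_mem j hj fun i hi hne => by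
      rw [dotProduct_smul, (ha j _).1 (hP i hi j hj hne.symm), smul_zero], dotProduct_smul,
      smul_eq_mul, mul_right_comm, hone j hj, one_mul, sub_self]
  ext j
  simpa [homogenize, Finset.sum_apply] using congrFun hhom j.succ

theorem IsEquations.mem_interior_convexHull_simplexVertices {n : ℕ} (ha : IsEquations a H)
    (hgp : InGeneralPosition H) {c : Fin N → Fin n} {m : Fin n} (hcard : #{i | c i = m} = d + 1)
    {x : Fin N → ℝ} (hx : ∑ i with c i = m, x i • a i = Pi.single 0 1)
    {b : EuclideanSpace ℝ (Fin d)} (hb : ∀ i, 0 < x i * (a i ⬝ᵥ homogenize b)) :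
    b ∈ interior (convexHull ℝ (SimplexVertices H c m)) := by
  obtain ⟨P, hP⟩ := exists_forall_mem_erase_mem hgp hcard
  have hopen : IsOpen {y | ∀ i, 0 < x i * (a i ⬝ᵥ homogenize y)} := by
    simp only [Set.ofPred_forall]
    exact isOpen_iInter_of_finite fun i => isOpen_lt continuous_const
      (continuous_const.mul (continuous_const.dotProduct continuous_homogenize))
  refine mem_interior.2 ⟨_, fun y hy => ?_, hopen, hb⟩
  rw [ha.eq_sum_smul_of_forall_mem hgp hcard hx hP y]
  refine (convex_convexHull ℝ _).sum_mem (fun i _ => (hy i).le)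
    (sum_mul_dotProduct_homogenize hx y) fun i hi => subset_convexHull ℝ _ ?_
  exact ⟨i, (mem_filter.1 hi).2, fun j hj hne => hP i hi j (mem_filter.2 ⟨mem_univ j, hj⟩) hne⟩

end Geometry

end DualTverberg

/-- The dual Tverberg theorem for prime powers: `(d+1)n` hyperplanes in general
position in `ℝ^d`, `n` a prime power, can be partitioned into `n` subfamilies of
`d+1` hyperplanes each, so that the simplexes formed by the subfamilies have a common
interior point. The partition is encoded by a labeling `c` all of whose fibers have
`d+1` elements. -/
theorem dual_tverberg_prime_power (d n : ℕ) (hd : 1 ≤ d)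
    (hn : ∃ p k : ℕ, p.Prime ∧ n = p ^ k)
    (H : Fin ((d + 1) * n) → Set (EuclideanSpace ℝ (Fin d)))
    (hH : ∀ i, IsHyperplane (H i))
    (hgp : InGeneralPosition H) :
    ∃ c : Fin ((d + 1) * n) → Fin n,
      (∀ m : Fin n, {i | c i = m}.ncard = d + 1) ∧
      ∃ b : EuclideanSpace ℝ (Fin d), ∀ m : Fin n,
        b ∈ interior (convexHull ℝ (SimplexVertices H c m)) := by
  obtain ⟨a, ha⟩ := DualTverberg.exists_isEquations hH
  have hn_pos : 0 < n := by
    obtain ⟨p, k, hp, rfl⟩ := hn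
    exact pow_pos hp.pos k
  obtain ⟨c, b, x, hb, hcard, hpos, hsum⟩ :=
    DualTverberg.exists_balanced_labelling (e := Pi.single 0 1) (a := a) hn
      (by rw [Fintype.card_fin])
      (fun S hS _ => ha.eq_zero_of_forall_dotProduct_eq_zero hgp (by simpa using hS))
      (fun S hS => ha.sum_smul_ne_single hgp (by nlinarith) (by simpa [Nat.lt_succ_iff] using hS))
  rw [single_one_dotProduct] at hb
  obtain ⟨y, hy⟩ := DualTverberg.exists_homogenize_eq (z := (b 0)⁻¹ • b) (inv_mul_cancel₀ hb.ne')
  simp only [Fintype.card_fin] at hcard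
  refine ⟨c, fun m => ?_, y, fun m => ?_⟩
  · rw [Set.ncard_eq_toFinset_card', Set.toFinset_ofPred, hcard]
  · refine ha.mem_interior_convexHull_simplexVertices hgp (hcard m) (hsum m) fun i => ?_
    rw [hy, dotProduct_smul, smul_eq_mul, mul_left_comm]
    exact mul_pos (inv_pos.2 hb) (hpos i)
end

section
/- Let B ⊂ ℝ^d be a convex compact set, let n ≥ 1, and let f_1, …, f_n : B → ℝ^d be continuous maps. Set l = ⌊(n+d)/(d+1)⌋. Suppose that for every x ∈ B at most l−1 of the points f_1(x), …, f_n(x) lie outside B. Then there exists x ∈ B such that every closed halfspace containing x contains at least l of the points f_1(x), …, f_n(x). -/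
open scoped InnerProductSpace

/-!
For `x ∈ B` the centre points of `f_1(x), …, f_n(x)` exist by Helly's theorem and lie in `B`,
because they lie in the convex hull of any `n - l + 1` of the `f_i(x)`. If no `x ∈ B` were itself
such a centre point, each `x ∈ B` would have a linear functional `φ`, which can be kept constant
near `x`, such that `φ` is smaller at all centre points of the `f_i(x)` than at `x`. A partition of
unity makes `φ = φ_x` depend continuously on `x`, and then the Hartman–Stampacchia variational
inequality provides an `x ∈ B` which minimizes `φ_x` over `B`, a contradiction.

The variational inequality is obtained by compactness from a covering theorem for the standard
simplex, in the spirit of Knaster–Kuratowski–Mazurkiewicz, and this in turn from a lemma of Scarf.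
The points of a finite set, compared coordinate by coordinate, form an abstract pseudomanifold: each
door lies in exactly two rooms, apart from the boundary. Counting doors and rooms modulo two as in
Sperner's lemma yields a room which carries all the colours.
-/

section Counting

open Finset

lemma exists_eq_two_and_forall_eq_one {ι : Type*} {s : Finset ι} {f : ι → ℕ}
    (hpos : ∀ x ∈ s, 0 < f x) (hsum : ∑ x ∈ s, f x = #s + 1) :
    ∃ x ∈ s, f x = 2 ∧ ∀ y ∈ s, y ≠ x → f y = 1 := by
  have hexcess : ∑ x ∈ s, (f x - 1) = 1 := by
    rw [sum_tsub_distrib s hpos, hsum]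
    simp
  obtain ⟨x, hx, hfx⟩ := exists_ne_zero_of_sum_ne_zero (hexcess.trans_ne one_ne_zero)
  have honly := sum_le_one_iff.1 hexcess.le
  refine ⟨x, hx, ?_, fun y hy hyx ↦ ?_⟩
  · have := (honly x x hx hx hfx hfx).2
    lia
  · have := hpos y hy
    by_contra hfy
    exact hyx (honly y x hy hx (by lia) hfx).1

lemma exists_odd_card_filter_of_odd {α β : Type*} {r : α → β → Prop} [∀ a b, Decidable (r a b)]
    {s : Finset α} {t : Finset β} {a : α} (ha : a ∈ s) (hodd : Odd #{b ∈ t | r a b})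
    (heven : ∀ x ∈ s, x ≠ a → Even #{b ∈ t | r x b}) : ∃ b ∈ t, Odd #{x ∈ s | r x b} := by
  classical
  have hcount : ∑ x ∈ s, #{b ∈ t | r x b} = ∑ b ∈ t, #{x ∈ s | r x b} :=
    sum_card_bipartiteAbove_eq_sum_card_bipartiteBelow r
  have hrest : Even (∑ x ∈ s.erase a, #{b ∈ t | r x b}) :=
    even_sum _ fun x hx ↦ heven x (mem_of_mem_erase hx) (ne_of_mem_erase hx)
  by_contra! hnot
  refine Nat.not_even_iff_odd.2 (hodd.add_even hrest) ?_
  rw [add_sum_erase s (fun x ↦ #{b ∈ t | r x b}) ha, hcount]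
  exact even_sum _ fun b hb ↦ Nat.not_odd_iff_even.1 (hnot b hb)

lemma bijOn_insert_erase {X Y : Type*} [DecidableEq X] {c : X → Y} {τ : Finset X} {A : Set Y}
    {z w : X} (hτ : Set.BijOn c τ A) (hw : w ∈ τ) (hcw : c w = c z) :
    Set.BijOn c (insert z (τ.erase w) : Finset X) A := by
  have hcz : c z ∈ A := hcw ▸ hτ.mapsTo hw
  have hinsert := (hτ.sdiff_singleton hw).insert (a := z) (by simp [hcw])
  rwa [hcw, Set.insert_sdiff_singleton, Set.insert_eq_of_mem hcz, ← coe_erase,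
    ← coe_insert] at hinsert

lemma exists_mem_apply_eq_of_not_surjOn_insert {X Y : Type*} [DecidableEq X]
    {c : X → Y} {τ : Finset X} {y₀ : Y} {z : X} (hτ : Set.BijOn c τ {y₀}ᶜ)
    (hsurj : ¬ Set.SurjOn c (insert z τ : Finset X) Set.univ) :
    ∃ w ∈ τ, c w = c z := by
  refine hτ.surjOn fun hcz ↦ hsurj fun i _ ↦ ?_
  rcases eq_or_ne i y₀ with rfl | hi
  · exact ⟨z, by simp, hcz⟩
  · exact Set.image_mono (by simp) (hτ.surjOn hi)

end Counting

section Scarf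

open Finset

variable {I X α : Type*} [Fintype I] [LinearOrder α] {u : I → X → α} {τ ρ : Finset X}

/-- The indices `i` for which `y` lies weakly below all of `τ` in the order given by `u i`. -/
def lowIndices (u : I → X → α) (τ : Finset X) (y : X) : Finset I :=
  {i | ∀ x ∈ τ, u i y ≤ u i x}

/-- Scarf's notion of a dominant set for a family of orders: no point of `X` is strictly above
the minimum of `τ` in all the orders simultaneously. -/
def IsDominant (u : I → X → α) (τ : Finset X) : Prop :=
  ∀ y, (lowIndices u τ y).Nonempty

/-- A room: a dominant set with one point for each order. Rooms play the role of the
top-dimensional simplices in Sperner's lemma. -/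
def IsRoom (u : I → X → α) (ρ : Finset X) : Prop :=
  IsDominant u ρ ∧ #ρ = Fintype.card I

/-- A door: a dominant set with one point fewer than a room. -/
def IsDoor (u : I → X → α) (τ : Finset X) : Prop :=
  IsDominant u τ ∧ #τ + 1 = Fintype.card I

/-- Points `s i` at the boundary of a family of orders: `s i` is the strict minimum of the
`i`-th order, and in the other orders it lies above all the points which are not of this form. -/
structure IsSlack (u : I → X → α) (s : I → X) : Prop where
  lt_of_ne : ∀ i y, y ≠ s i → u i (s i) < u i y
  lt_of_notMem_range : ∀ i j y, i ≠ j → y ∉ Set.range s → u i y < u i (s j)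

lemma mem_lowIndices {i : I} {y : X} : i ∈ lowIndices u τ y ↔ ∀ x ∈ τ, u i y ≤ u i x := by
  simp [lowIndices]

lemma notMem_lowIndices {i : I} {y : X} : i ∉ lowIndices u τ y ↔ ∃ x ∈ τ, u i x < u i y := by
  simp [mem_lowIndices]

lemma IsDominant.mono (hρ : IsDominant u ρ) (h : τ ⊆ ρ) : IsDominant u τ := fun y ↦
  (hρ y).mono fun _ hi ↦ mem_lowIndices.2 fun x hx ↦ mem_lowIndices.1 hi x (h hx)

lemma isDominant_insert_iff [DecidableEq X] {z : X} :
    IsDominant u (insert z τ) ↔ ∀ y, ∃ i ∈ lowIndices u τ y, u i y ≤ u i z := by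
  simp only [IsDominant, Finset.Nonempty, mem_lowIndices, forall_mem_insert, and_comm]

lemma IsDoor.isRoom_and_subset_iff [DecidableEq X] (hτ : IsDoor u τ) :
    IsRoom u ρ ∧ τ ⊆ ρ ↔ ∃ z ∉ τ, IsDominant u (insert z τ) ∧ insert z τ = ρ := by
  constructor
  · rintro ⟨⟨hdom, hcard⟩, hsub⟩
    obtain ⟨z, hz, rfl⟩ := exists_eq_insert_iff.2 ⟨hsub, hτ.2.trans hcard.symm⟩
    exact ⟨z, hz, hdom, rfl⟩
  · rintro ⟨z, hz, hdom, rfl⟩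
    exact ⟨⟨hdom, (card_insert_of_notMem hz).trans hτ.2⟩, subset_insert z τ⟩

lemma sum_card_lowIndices (hu : ∀ i, Function.Injective (u i)) (hτ : τ.Nonempty) :
    ∑ x ∈ τ, #(lowIndices u τ x) = Fintype.card I := by
  classical
  rw [← card_univ, ← card_biUnion]
  · congr
    refine eq_univ_iff_forall.2 fun i ↦ ?_
    obtain ⟨x, hx, hmin⟩ := τ.exists_min_image (u i) hτ
    exact mem_biUnion.2 ⟨x, hx, mem_lowIndices.2 hmin⟩
  · refine fun x hx y hy hxy ↦ disjoint_left.2 fun i hix hiy ↦ hxy (hu i ?_)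
    exact (mem_lowIndices.1 hix y hy).antisymm (mem_lowIndices.1 hiy x hx)

/-- A pigeonhole argument: the sets `lowIndices u τ x`, for `x ∈ τ`, partition `I`. -/
lemma IsDoor.exists_lowIndices_eq_pair [DecidableEq I] (hu : ∀ i, Function.Injective (u i))
    (hτ : IsDoor u τ) (hne : τ.Nonempty) :
    ∃ i j, i ≠ j ∧ (∃ x ∈ τ, lowIndices u τ x = {i, j}) ∧
      ∀ p ∉ ({i, j} : Finset I), ∃ x ∈ τ, lowIndices u τ x = {p} := by
  obtain ⟨x₀, hx₀, htwo, hone⟩ := exists_eq_two_and_forall_eq_one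
    (fun x _ ↦ card_pos.2 (hτ.1 x)) ((sum_card_lowIndices hu hne).trans hτ.2.symm)
  obtain ⟨i, j, hij, hpair⟩ := card_eq_two.1 htwo
  refine ⟨i, j, hij, ⟨x₀, hx₀, hpair⟩, fun p hp ↦ ?_⟩
  obtain ⟨x, hx, hmin⟩ := τ.exists_min_image (u p) hne
  have hpx : p ∈ lowIndices u τ x := mem_lowIndices.2 hmin
  have hxx₀ : x ≠ x₀ := by
    rintro rfl
    exact hp (hpair ▸ hpx)
  obtain ⟨q, hq⟩ := card_eq_one.1 (hone x hx hxx₀)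
  rw [hq, mem_singleton] at hpx
  exact ⟨x, hx, hpx ▸ hq⟩

lemma IsDominant.exists_lowIndices_eq_singleton_of_insert [DecidableEq X] [DecidableEq I]
    (hu : ∀ i, Function.Injective (u i)) (hτ : IsDominant u τ) {i j : I}
    (hpair : ∃ x ∈ τ, lowIndices u τ x = {i, j})
    (hsingle : ∀ p ∉ ({i, j} : Finset I), ∃ x ∈ τ, lowIndices u τ x = {p})
    {z : X} (hz : z ∉ τ) (hdom : IsDominant u (insert z τ)) :
    ∃ k ∈ ({i, j} : Finset I), lowIndices u τ z = {k} ∧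
      ∀ y, lowIndices u τ y = {k} → u k y ≤ u k z := by
  rw [isDominant_insert_iff] at hdom
  have hlost {x : X} (hx : x ∈ τ) : ∃ p ∈ lowIndices u τ x, p ∉ lowIndices u τ z := by
    obtain ⟨p, hp, hle⟩ := hdom x
    have hlt : u p x < u p z := hle.lt_of_ne fun h ↦ hz (hu p h ▸ hx)
    exact ⟨p, hp, notMem_lowIndices.2 ⟨x, hx, hlt⟩⟩
  have hsub : lowIndices u τ z ⊆ {i, j} := by
    intro p hpz
    by_contra hp
    obtain ⟨x, hx, hxp⟩ := hsingle p hp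
    obtain ⟨q, hq, hqz⟩ := hlost hx
    rw [hxp, mem_singleton] at hq
    exact hqz (hq ▸ hpz)
  obtain ⟨x₀, hx₀, hx₀ij⟩ := hpair
  obtain ⟨q, hq, hqz⟩ := hlost hx₀
  obtain ⟨k, hk⟩ : ∃ k, lowIndices u τ z = {k} := by
    rw [hx₀ij] at hq
    have hcard : #(lowIndices u τ z) ≤ #(({i, j} : Finset I).erase q) :=
      card_le_card (subset_erase.2 ⟨hsub, hqz⟩)
    have hpos := card_pos.2 (hτ z)
    have htwo : #({i, j} : Finset I) ≤ 2 := card_le_two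
    rw [card_erase_of_mem hq] at hcard
    exact card_eq_one.1 (by lia)
  refine ⟨k, hsub (hk ▸ mem_singleton_self k), hk, fun y hy ↦ ?_⟩
  obtain ⟨p, hp, hle⟩ := hdom y
  rw [hy, mem_singleton] at hp
  exact hp ▸ hle

lemma IsDominant.insert_of_lowIndices_eq_singleton [DecidableEq X] (hτ : IsDominant u τ)
    {z : X} {k : I} (hz : lowIndices u τ z = {k})
    (hmax : ∀ y, lowIndices u τ y = {k} → u k y ≤ u k z) : IsDominant u (insert z τ) := by
  refine isDominant_insert_iff.2 fun y ↦ ?_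
  by_cases hy : ∃ p ∈ lowIndices u τ y, p ≠ k
  · obtain ⟨p, hp, hpk⟩ := hy
    obtain ⟨x, hx, hxz⟩ : ∃ x ∈ τ, u p x < u p z := notMem_lowIndices.1 (by simpa [hz] using hpk)
    exact ⟨p, hp, (mem_lowIndices.1 hp x hx).trans hxz.le⟩
  · have hyk : lowIndices u τ y = {k} :=
      eq_singleton_iff_nonempty_unique_mem.2 ⟨hτ y, by simpa using hy⟩
    exact ⟨k, hyk ▸ mem_singleton_self k, hmax y hyk⟩

lemma IsDoor.exists_pair_isRoom_iff [Finite X] (hu : ∀ i, Function.Injective (u i))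
    (hτ : IsDoor u τ) (hne : τ.Nonempty) (hex : ∀ k, ∃ y, lowIndices u τ y = {k}) :
    ∃ ρ₁ ρ₂, ρ₁ ≠ ρ₂ ∧ ∀ ρ, IsRoom u ρ ∧ τ ⊆ ρ ↔ ρ = ρ₁ ∨ ρ = ρ₂ := by
  classical
  obtain ⟨i, j, hij, ⟨x₀, hx₀, hpair⟩, hsingle⟩ := hτ.exists_lowIndices_eq_pair hu hne
  choose z hz hmax using fun k ↦
    Set.exists_max_image {y | lowIndices u τ y = {k}} (u k) (Set.toFinite _) (hex k)
  simp only [Set.mem_ofPred_eq] at hz hmax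
  have hzτ {k} (hk : k ∈ ({i, j} : Finset I)) : z k ∉ τ := fun hzk ↦ by
    have hkz : k ∈ lowIndices u τ (z k) := by simp [hz]
    rw [← hpair] at hk
    have hzx₀ : z k = x₀ :=
      hu k ((mem_lowIndices.1 hkz x₀ hx₀).antisymm (mem_lowIndices.1 hk (z k) hzk))
    have hcard := congr_arg card (hpair.symm.trans (hzx₀ ▸ hz k))
    simp [card_pair hij] at hcard
  have hi : i ∈ ({i, j} : Finset I) := mem_insert_self i _
  have hj : j ∈ ({i, j} : Finset I) := mem_insert_of_mem (mem_singleton_self j)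
  refine ⟨insert (z i) τ, insert (z j) τ, fun h ↦ ?_, fun ρ ↦ ?_⟩
  · have hzz : z i = z j := (insert_inj (hzτ hi)).1 h
    exact hij (singleton_injective ((hz i).symm.trans (hzz ▸ hz j)))
  · rw [hτ.isRoom_and_subset_iff]
    constructor
    · rintro ⟨x, hx, hdom, rfl⟩
      obtain ⟨k, hk, hxk, hxmax⟩ :=
        hτ.1.exists_lowIndices_eq_singleton_of_insert hu ⟨x₀, hx₀, hpair⟩ hsingle hx hdom
      obtain rfl : x = z k := hu k ((hmax k x hxk).antisymm (hxmax _ (hz k)))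
      rcases mem_insert.1 hk with rfl | hk
      · exact .inl rfl
      · exact .inr (mem_singleton.1 hk ▸ rfl)
    · rintro (rfl | rfl)
      · exact ⟨z i, hzτ hi, hτ.1.insert_of_lowIndices_eq_singleton (hz i) (hmax i), rfl⟩
      · exact ⟨z j, hzτ hj, hτ.1.insert_of_lowIndices_eq_singleton (hz j) (hmax j), rfl⟩

section Boundary

variable {s : I → X} {i₀ : I}

lemma IsSlack.self_mem_lowIndices (hs : IsSlack u s) (τ : Finset X) (i : I) :
    i ∈ lowIndices u τ (s i) := by
  refine mem_lowIndices.2 fun x _ ↦ ?_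
  rcases eq_or_ne x (s i) with rfl | hx
  exacts [le_rfl, (hs.lt_of_ne i x hx).le]

lemma IsSlack.eq_of_mem_lowIndices (hs : IsSlack u s) {i : I} {y : X} (hi : s i ∈ τ)
    (hy : i ∈ lowIndices u τ y) : y = s i := by
  by_contra h
  exact (hs.lt_of_ne i y h).not_ge (mem_lowIndices.1 hy (s i) hi)

lemma IsSlack.lowIndices_eq_singleton (hs : IsSlack u s) {t : X} (ht : t ∈ τ)
    (htr : t ∉ Set.range s) (k : I) : lowIndices u τ (s k) = {k} := by
  refine eq_singleton_iff_unique_mem.2 ⟨hs.self_mem_lowIndices τ k, fun q hq ↦ ?_⟩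
  by_contra hqk
  exact (hs.lt_of_notMem_range q k t hqk htr).not_ge (mem_lowIndices.1 hq t ht)

variable [DecidableEq I] [DecidableEq X]

lemma IsSlack.lowIndices_image_compl_eq_singleton_iff (hs : IsSlack u s) {y : X} :
    lowIndices u (({i₀}ᶜ : Finset I).image s) y = {i₀} ↔ y ∉ ({i₀}ᶜ : Finset I).image s := by
  refine ⟨fun hy hmem ↦ ?_, fun hy ↦ eq_singleton_iff_unique_mem.2 ⟨?_, fun p hp ↦ ?_⟩⟩
  · obtain ⟨p, hp, rfl⟩ := mem_image.1 hmem
    exact mem_compl.1 hp (hy ▸ hs.self_mem_lowIndices _ p)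
  · by_cases hyr : y ∈ Set.range s
    · obtain ⟨p, rfl⟩ := hyr
      obtain rfl : p = i₀ := by
        by_contra hp
        exact hy (mem_image_of_mem s (by simpa using hp))
      exact hs.self_mem_lowIndices _ p
    · simp only [mem_lowIndices, forall_mem_image, mem_compl, mem_singleton]
      exact fun j hj ↦ (hs.lt_of_notMem_range i₀ j y (Ne.symm hj) hyr).le
  · by_contra hpi
    have hsp : s p ∈ ({i₀}ᶜ : Finset I).image s := mem_image_of_mem s (by simpa using hpi)
    exact hy (hs.eq_of_mem_lowIndices hsp hp ▸ hsp)

lemma IsSlack.isDoor_image_compl (hs : IsSlack u s) (hinj : Function.Injective s) :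
    IsDoor u (({i₀}ᶜ : Finset I).image s) := by
  refine ⟨fun y ↦ ?_, ?_⟩
  · by_cases hy : y ∈ ({i₀}ᶜ : Finset I).image s
    · obtain ⟨p, -, rfl⟩ := mem_image.1 hy
      exact ⟨p, hs.self_mem_lowIndices _ p⟩
    · rw [hs.lowIndices_image_compl_eq_singleton_iff.2 hy]
      exact singleton_nonempty i₀
  · rw [card_image_of_injective _ hinj, card_compl, card_singleton]
    exact Nat.sub_add_cancel (Fintype.card_pos_iff.2 ⟨i₀⟩)

lemma IsSlack.existsUnique_isRoom_image_compl_subset [Finite X] (hs : IsSlack u s)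
    (hinj : Function.Injective s) (hu : Function.Injective (u i₀)) :
    ∃! ρ, IsRoom u ρ ∧ ({i₀}ᶜ : Finset I).image s ⊆ ρ := by
  have hdoor := hs.isDoor_image_compl (i₀ := i₀) hinj
  set τ := ({i₀}ᶜ : Finset I).image s with hτ
  have hlow {y} : lowIndices u τ y = {i₀} ↔ y ∉ τ := hs.lowIndices_image_compl_eq_singleton_iff
  obtain ⟨z, hz, hmax⟩ := Set.exists_max_image {y | y ∉ τ} (u i₀) (Set.toFinite _)
    ⟨s i₀, by simp [hτ, hinj.eq_iff]⟩
  refine ⟨insert z τ, hdoor.isRoom_and_subset_iff.2 ⟨z, hz, ?_, rfl⟩, fun ρ hρ ↦ ?_⟩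
  · exact hdoor.1.insert_of_lowIndices_eq_singleton (hlow.2 hz) fun y hy ↦ hmax y (hlow.1 hy)
  · obtain ⟨x, hx, hdom, rfl⟩ := hdoor.isRoom_and_subset_iff.1 hρ
    obtain ⟨i, hi, hle⟩ := isDominant_insert_iff.1 hdom z
    rw [hlow.2 hz, mem_singleton] at hi
    rw [hu ((hmax x hx).antisymm (hi ▸ hle))]

end Boundary

section Colouring

variable {c : X → I} {s : I → X} {i₀ : I}

lemma card_add_one_of_bijOn_compl (hτ : Set.BijOn c τ {i₀}ᶜ) : #τ + 1 = Fintype.card I := by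
  classical
  have hcard : #τ = #({i₀}ᶜ : Finset I) := Set.BijOn.finsetCard_eq c (by simpa using hτ)
  rw [hcard, card_compl, card_singleton]
  exact Nat.sub_add_cancel (Fintype.card_pos_iff.2 ⟨i₀⟩)

lemma even_card_filter_subset_of_not_surjOn [DecidableEq X] {D : Finset (Finset X)}
    (hD : ∀ τ ⊆ ρ, τ ∈ D ↔ Set.BijOn c τ {i₀}ᶜ) (hρ : #ρ = Fintype.card I)
    (hsurj : ¬ Set.SurjOn c ρ Set.univ) : Even #{τ ∈ D | τ ⊆ ρ} := by
  rcases {τ ∈ D | τ ⊆ ρ}.eq_empty_or_nonempty with hempty | ⟨τ, hτ⟩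
  · simp [hempty]
  have hmiss {τ} (hsub : τ ⊆ ρ) (hc : Set.BijOn c τ {i₀}ᶜ) : ∃ z ∉ τ, insert z τ = ρ :=
    exists_eq_insert_iff.2 ⟨hsub, (card_add_one_of_bijOn_compl hc).trans hρ.symm⟩
  obtain ⟨hτD, hsub⟩ := mem_filter.1 hτ
  have hbij := (hD τ hsub).1 hτD
  obtain ⟨z, hz, rfl⟩ := hmiss hsub hbij
  obtain ⟨w, hw, hcw⟩ := exists_mem_apply_eq_of_not_surjOn_insert hbij hsurj
  have hzw : z ≠ w := by
    rintro rfl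
    exact hz hw
  suffices {τ' ∈ D | τ' ⊆ insert z τ} = {τ, insert z (τ.erase w)} by
    rw [this, card_pair]
    · exact even_two
    · exact fun h ↦ hz (h ▸ mem_insert_self z _)
  ext τ'
  simp only [mem_filter, mem_insert, mem_singleton]
  constructor
  · rintro ⟨hD', hsub'⟩
    have hbij' := (hD τ' hsub').1 hD'
    obtain ⟨z', hz', hins⟩ := hmiss hsub' hbij'
    obtain rfl : τ' = (insert z τ).erase z' := by rw [← hins, erase_insert hz']
    have : z' = z ∨ z' = w := by
      by_contra! h
      exact hzw (hbij'.injOn (by simp [h.1.symm]) (by simp [hw, h.2.symm]) hcw.symm)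
    rcases this with rfl | rfl
    · exact .inl (erase_insert hz)
    · exact .inr (erase_insert_of_ne hzw)
  · rintro (rfl | rfl)
    · exact ⟨hτD, hsub⟩
    · have hsub' := insert_subset_insert z (erase_subset w τ)
      exact ⟨(hD _ hsub').2 (bijOn_insert_erase hbij hw hcw), hsub'⟩

lemma exists_notMem_range_of_bijOn_compl [DecidableEq I] [DecidableEq X]
    (hc : Function.LeftInverse c s) (hτ : Set.BijOn c τ {i₀}ᶜ)
    (hne : τ ≠ ({i₀}ᶜ : Finset I).image s) : ∃ t ∈ τ, t ∉ Set.range s := by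
  by_contra! h
  refine hne (eq_of_subset_of_card_le (fun t ht ↦ ?_) ?_)
  · obtain ⟨i, rfl⟩ := h t ht
    exact mem_image_of_mem s (by simpa [hc i] using hτ.mapsTo ht)
  · rw [card_image_of_injective _ hc.injective]
    exact (Set.BijOn.finsetCard_eq c (by simpa using hτ)).ge

lemma bijOn_image_compl [DecidableEq I] [DecidableEq X] (hc : Function.LeftInverse c s) :
    Set.BijOn c (({i₀}ᶜ : Finset I).image s) {i₀}ᶜ := by
  rw [coe_image, coe_compl, coe_singleton]
  refine ⟨?_, ?_, fun i hi ↦ ⟨s i, Set.mem_image_of_mem s hi, hc i⟩⟩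
  · rintro _ ⟨i, hi, rfl⟩
    rwa [hc i]
  · rintro _ ⟨i, -, rfl⟩ _ ⟨j, -, rfl⟩ h
    rw [← hc i, h, hc j]

lemma IsSlack.exists_isRoom_surjOn [Nonempty I] [Finite X] (hs : IsSlack u s)
    (hu : ∀ i, Function.Injective (u i)) (hc : Function.LeftInverse c s) :
    ∃ ρ, IsRoom u ρ ∧ Set.SurjOn c ρ Set.univ := by
  classical
  have := Fintype.ofFinite X
  obtain ⟨i₀⟩ := ‹Nonempty I›
  let R : Finset (Finset X) := {ρ | IsRoom u ρ}
  let D : Finset (Finset X) := {τ | IsDoor u τ ∧ Set.BijOn c τ {i₀}ᶜ}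
  let τ₀ : Finset X := ({i₀}ᶜ : Finset I).image s
  have hR {ρ} : ρ ∈ R ↔ IsRoom u ρ := mem_filter_univ ρ
  have hD {τ} : τ ∈ D ↔ IsDoor u τ ∧ Set.BijOn c τ {i₀}ᶜ := mem_filter_univ τ
  have hτ₀ : τ₀ ∈ D := hD.2 ⟨hs.isDoor_image_compl hc.injective, bijOn_image_compl hc⟩
  have hboundary : #{ρ ∈ R | τ₀ ⊆ ρ} = 1 := by
    obtain ⟨ρ, hρ, huniq⟩ :=
      hs.existsUnique_isRoom_image_compl_subset (i₀ := i₀) hc.injective (hu i₀)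
    refine card_eq_one.2 ⟨ρ, ext fun ρ' ↦ ?_⟩
    rw [mem_filter, hR, mem_singleton]
    exact ⟨huniq ρ', fun h ↦ h ▸ hρ⟩
  have hinner : ∀ τ ∈ D, τ ≠ τ₀ → #{ρ ∈ R | τ ⊆ ρ} = 2 := by
    intro τ hτ hne
    obtain ⟨hdoor, hbij⟩ := hD.1 hτ
    obtain ⟨t, ht, htr⟩ := exists_notMem_range_of_bijOn_compl hc hbij hne
    obtain ⟨ρ₁, ρ₂, hρ, hiff⟩ := hdoor.exists_pair_isRoom_iff hu ⟨t, ht⟩ fun k ↦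
      ⟨s k, hs.lowIndices_eq_singleton ht htr k⟩
    refine card_eq_two.2 ⟨ρ₁, ρ₂, hρ, ext fun ρ ↦ ?_⟩
    rw [mem_filter, hR, hiff, mem_insert, mem_singleton]
  obtain ⟨ρ, hρ, hodd⟩ := exists_odd_card_filter_of_odd hτ₀ (hboundary ▸ odd_one)
    fun τ hτ hne ↦ hinner τ hτ hne ▸ even_two
  rw [hR] at hρ
  refine ⟨ρ, hρ, by_contra fun hsurj ↦ Nat.not_even_iff_odd.2 hodd ?_⟩
  exact even_card_filter_subset_of_not_surjOn (fun τ hτ ↦ hD.trans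
    ⟨And.right, fun h ↦ ⟨⟨hρ.1.mono hτ, card_add_one_of_bijOn_compl h⟩, h⟩⟩) hρ.2 hsurj

end Colouring

end Scarf

/-- A form of Scarf's lemma. -/
theorem IsSlack.exists_dominant_transversal {I X α : Type*} [Finite I] [Finite X] [LinearOrder α]
    {u : I → X → α} {s : I → X} (hs : IsSlack u s) {c : X → I} (hc : Function.LeftInverse c s) :
    ∃ t : I → X, (∀ i, c (t i) = i) ∧ ∀ y, ∃ i, ∀ j, u i y ≤ u i (t j) := by
  have := Fintype.ofFinite I
  obtain ⟨_, -⟩ := exists_wellFoundedLT X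
  -- Ties between points are broken by a linear order on `X`.
  let v (i : I) (x : X) : α ×ₗ X := toLex (u i x, x)
  have hv {i x y} (h : u i x < u i y) : v i x < v i y := Prod.Lex.toLex_lt_toLex.2 (.inl h)
  have hvs : IsSlack v s :=
    ⟨fun i y h ↦ hv (hs.lt_of_ne i y h), fun i j y h hy ↦ hv (hs.lt_of_notMem_range i j y h hy)⟩
  rcases isEmpty_or_nonempty I
  · exact ⟨s, hc, fun y ↦ isEmptyElim (c y)⟩
  obtain ⟨ρ, hρ, hsurj⟩ := hvs.exists_isRoom_surjOn
    (fun i x y h ↦ (Prod.ext_iff.1 (toLex.injective h)).2) hc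
  choose t ht hct using fun i ↦ hsurj (Set.mem_univ i)
  refine ⟨t, hct, fun y ↦ ?_⟩
  obtain ⟨i, hi⟩ := hρ.1 y
  refine ⟨i, fun j ↦ ?_⟩
  exact (Prod.Lex.toLex_le_toLex'.1 (mem_lowIndices.1 hi (t j) (ht j))).1

section Simplex

open Finset

variable {I : Type*} [Fintype I]

/-- The slack point `s i` added to the standard simplex: its `i`-th coordinate is less than, and
its other coordinates are greater than, the coordinates of all points of the simplex. -/
def slackPoint [DecidableEq I] (i : I) : I → ℝ :=
  Function.update (fun _ ↦ 2) i (-1)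

lemma one_le_sum_max_zero [Nonempty I] {m : I → ℝ}
    (hm : ∀ y ∈ stdSimplex ℝ I, ∃ i, y i ≤ m i) : 1 ≤ ∑ i, max (m i) 0 := by
  by_contra! hlt
  -- Spreading the missing mass evenly over `max m 0` yields a point of the simplex violating `hm`.
  set ε : ℝ := (1 - ∑ i, max (m i) 0) / Fintype.card I with hε
  have hεpos : 0 < ε := div_pos (by linarith) (by exact_mod_cast Fintype.card_pos)
  obtain ⟨i, hi⟩ := hm (fun i ↦ max (m i) 0 + ε)
    ⟨fun i ↦ by positivity, by simp [sum_add_distrib, hε, mul_div_cancel₀]⟩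
  linarith [le_max_left (m i) 0]

lemma exists_transversal_stdSimplex_of_finset [DecidableEq I]
    {c : stdSimplex ℝ I → I} (F : Finset (stdSimplex ℝ I)) :
    ∃ t : I → I → ℝ, (∀ i, t i = slackPoint i ∨ ∃ x, c x = i ∧ t i = x) ∧
      ∀ y ∈ F, ∃ i, ∀ j, y i ≤ t j i := by
  let point : F ⊕ I → I → ℝ := Sum.elim (fun x ↦ x.1) slackPoint
  have hs : IsSlack (fun i x ↦ point x i) (Sum.inr : I → F ⊕ I) := by
    constructor
    · rintro i (x | j) hne
      · have := stdSimplex.zero_le x.1 i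
        simp only [point, slackPoint, Sum.elim_inl, Sum.elim_inr, Function.update_self]
        linarith
      · have hij : i ≠ j := fun h ↦ hne (h ▸ rfl)
        norm_num [point, slackPoint, hij]
    · rintro i j (x | k) hij hx
      · have := stdSimplex.le_one x.1 i
        simp only [point, slackPoint, Sum.elim_inl, Sum.elim_inr, Function.update_of_ne hij]
        linarith
      · exact (hx ⟨k, rfl⟩).elim
  obtain ⟨t, ht, hdom⟩ := hs.exists_dominant_transversal
    (c := Sum.elim (fun x ↦ c x.1) id) fun _ ↦ rfl
  refine ⟨fun i ↦ point (t i), fun i ↦ ?_, fun y hy ↦ hdom (.inl ⟨y, hy⟩)⟩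
  rcases hti : t i with x | j
  · exact .inr ⟨x, by simpa [hti] using ht i, congr_arg point hti⟩
  · obtain rfl : j = i := by simpa [hti] using ht i
    exact .inl (congr_arg point hti)

lemma exists_transversal_stdSimplex [DecidableEq I] {A : I → Set (stdSimplex ℝ I)}
    (hA : ∀ i, IsClosed (A i)) (hcover : ⋃ i, A i = Set.univ) :
    ∃ t : I → I → ℝ, (∀ i, t i = slackPoint i ∨ ∃ x ∈ A i, t i = x) ∧
      ∀ y ∈ stdSimplex ℝ I, ∃ i, ∀ j, y i ≤ t j i := by
  choose c hc using Set.iUnion_eq_univ_iff.1 hcover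
  let C (i : I) : Set (I → ℝ) := insert (slackPoint i) (Subtype.val '' A i)
  let K (y : stdSimplex ℝ I) : Set (I → I → ℝ) := {t | ∃ i, ∀ j, y i ≤ t j i}
  have hC : IsCompact (Set.univ.pi C) := isCompact_univ_pi fun i ↦
    ((hA i).isCompact.image continuous_subtype_val).insert _
  have hK (y) : IsClosed (K y) := by
    have : K y = ⋃ i, ⋂ j, {t | y i ≤ t j i} := by ext; simp [K]
    rw [this]
    exact isClosed_iUnion_of_finite fun i ↦ isClosed_iInter fun j ↦
      isClosed_le continuous_const (by fun_prop)
  obtain ⟨t, htC, htK⟩ := hC.inter_iInter_nonempty K hK fun F ↦ by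
    obtain ⟨t, ht, hdom⟩ := exists_transversal_stdSimplex_of_finset (c := c) F
    refine ⟨t, fun i _ ↦ (ht i).imp_right ?_, Set.mem_iInter₂.2 hdom⟩
    rintro ⟨x, rfl, hx⟩
    exact ⟨x, hc x, hx.symm⟩
  refine ⟨t, fun i ↦ (htC i trivial).imp_right ?_, fun y hy ↦ Set.mem_iInter.1 htK ⟨y, hy⟩⟩
  rintro ⟨x, hx, h⟩
  exact ⟨x, hx, h.symm⟩

theorem exists_forall_eq_zero_or_mem_of_iUnion_eq_univ [Nonempty I] {A : I → Set (stdSimplex ℝ I)}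
    (hA : ∀ i, IsClosed (A i)) (hcover : ⋃ i, A i = Set.univ) :
    ∃ x : stdSimplex ℝ I, ∀ i, x i = 0 ∨ x ∈ A i := by
  classical
  obtain ⟨t, ht, hdom⟩ := exists_transversal_stdSimplex hA hcover
  let m (i : I) : ℝ := ⨅ j, t j i
  have hmt (i j : I) : m i ≤ t j i := ciInf_le (Set.finite_range _).bddBelow j
  have hone : 1 ≤ ∑ i, max (m i) 0 := one_le_sum_max_zero fun y hy ↦
    (hdom y hy).imp fun i hi ↦ le_ciInf hi
  have heq {j : I} {x : stdSimplex ℝ I} (hx : t j = x) (i : I) : max (m i) 0 = x i := by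
    have hle (i) : max (m i) 0 ≤ x i :=
      max_le ((hmt i j).trans_eq (congr_fun hx i)) (stdSimplex.zero_le x i)
    refine (sum_eq_sum_iff_of_le fun i _ ↦ hle i).1 ?_ i (mem_univ i)
    exact (sum_le_sum fun i _ ↦ hle i).antisymm ((stdSimplex.sum_eq_one x).trans_le hone)
  have hslack {j : I} (hj : t j = slackPoint j) : max (m j) 0 = 0 := by
    have := hmt j j
    simp only [hj, slackPoint, Function.update_self] at this
    exact max_eq_right (by linarith)
  obtain ⟨j, hj⟩ : ∃ j, t j ≠ slackPoint j := by
    by_contra! h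
    rw [sum_congr rfl fun j _ ↦ hslack (h j), sum_const_zero] at hone
    exact hone.not_gt one_pos
  obtain ⟨x, -, hx⟩ := (ht j).resolve_left hj
  refine ⟨x, fun i ↦ (ht i).imp (fun hi ↦ (heq hx i).symm.trans (hslack hi)) ?_⟩
  rintro ⟨x', hx', hi⟩
  have : x = x' := Subtype.ext (funext fun k ↦ (heq hx k).symm.trans (heq hi k))
  exact this ▸ hx'

end Simplex

section VariationalInequality

open Finset

variable {E : Type*} [NormedAddCommGroup E] [NormedSpace ℝ E] {B : Set E}

lemma exists_forall_apply_self_le_of_finite {I : Type*} [Finite I] (hB : Convex ℝ B)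
    (hne : B.Nonempty) {φ : B → StrongDual ℝ E} (hφ : Continuous φ) {y : I → E}
    (hy : ∀ i, y i ∈ B) : ∃ x : B, ∀ i, φ x x ≤ φ x (y i) := by
  have := Fintype.ofFinite I
  rcases isEmpty_or_nonempty I
  · exact ⟨⟨_, hne.some_mem⟩, isEmptyElim⟩
  let X (t : stdSimplex ℝ I) : B := ⟨∑ i, t i • y i, hB.sum_mem
    (fun i _ ↦ stdSimplex.zero_le t i) (stdSimplex.sum_eq_one t) fun i _ ↦ hy i⟩
  have hX : Continuous X := by
    refine .subtype_mk (continuous_finsetSum _ fun i _ ↦ ?_) _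
    exact ((continuous_apply i).comp continuous_subtype_val).smul continuous_const
  let A (i : I) : Set (stdSimplex ℝ I) := {t | ∀ k, φ (X t) (y i) ≤ φ (X t) (y k)}
  have hφy (i) : Continuous fun t ↦ φ (X t) (y i) := (hφ.comp hX).clm_apply continuous_const
  obtain ⟨t, ht⟩ := exists_forall_eq_zero_or_mem_of_iUnion_eq_univ (A := A)
    (fun i ↦ by
      simp only [A, Set.ofPred_forall]
      exact isClosed_iInter fun k ↦ isClosed_le (hφy i) (hφy k))
    (Set.iUnion_eq_univ_iff.2 fun t ↦ Finite.exists_min fun i ↦ φ (X t) (y i))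
  refine ⟨X t, fun k ↦ ?_⟩
  calc φ (X t) (X t) = ∑ i, t i * φ (X t) (y i) := by simp [X]
    _ ≤ ∑ i, t i * φ (X t) (y k) := sum_le_sum fun i _ ↦ by
      rcases ht i with h | h
      · simp [h]
      · exact mul_le_mul_of_nonneg_left (h k) (stdSimplex.zero_le t i)
    _ = φ (X t) (y k) := by rw [← sum_mul, stdSimplex.sum_eq_one, one_mul]

/-- The Hartman–Stampacchia theorem. -/
theorem exists_forall_apply_self_le (hBc : IsCompact B) (hB : Convex ℝ B)
    (hne : B.Nonempty) {φ : B → StrongDual ℝ E} (hφ : Continuous φ) :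
    ∃ x : B, ∀ y ∈ B, φ x x ≤ φ x y := by
  have := isCompact_iff_compactSpace.1 hBc
  let S (y : B) : Set B := {x | φ x x ≤ φ x y}
  have hS (y) : IsClosed (S y) := isClosed_le (hφ.clm_apply continuous_subtype_val)
    (hφ.clm_apply continuous_const)
  obtain ⟨x, hx⟩ := isCompact_univ.inter_iInter_nonempty S hS fun F ↦ by
    obtain ⟨x, hx⟩ := exists_forall_apply_self_le_of_finite hB hne hφ fun y : F ↦ y.1.2
    exact ⟨x, trivial, Set.mem_iInter₂.2 fun y hy ↦ hx ⟨y, hy⟩⟩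
  exact ⟨x, fun y hy ↦ Set.mem_iInter.1 hx.2 ⟨y, hy⟩⟩

theorem exists_forall_mem_of_forall_exists_apply_le (hBc : IsCompact B) (hB : Convex ℝ B)
    (hne : B.Nonempty) {Z : StrongDual ℝ E → Set E} (hZ : ∀ φ, IsClosed (Z φ))
    (h : ∀ x ∈ B, ∃ y ∈ B, ∀ φ : StrongDual ℝ E, φ x ≤ φ y → x ∈ Z φ) :
    ∃ x ∈ B, ∀ φ, x ∈ Z φ := by
  by_contra! hnot
  choose! y hyB hy using h
  obtain ⟨φ, hφ⟩ := exists_continuous_forall_mem_convex_of_local_const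
    (t := fun x : B ↦ {φ : StrongDual ℝ E | φ (y x - x) < 0})
    (fun x ↦ convex_halfSpace_lt ⟨fun _ _ ↦ rfl, fun _ _ ↦ rfl⟩ 0)
    fun x ↦ by
      obtain ⟨φ, hφ⟩ := hnot x x.2
      refine ⟨φ, ?_⟩
      filter_upwards [continuous_subtype_val.continuousAt ((hZ φ).isOpen_compl.mem_nhds hφ)]
        with x' hx'
      by_contra! hle
      rw [map_sub, sub_nonneg] at hle
      exact hx' (hy x' x'.2 φ hle)
  obtain ⟨x, hx⟩ := exists_forall_apply_self_le hBc hB hne φ.continuous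
  have hlt : φ x (y x - x) < 0 := hφ x
  rw [map_sub, sub_neg] at hlt
  exact hlt.not_ge (hx (y x) (hyB x x.2))

end VariationalInequality

section CenterPoint

open Finset

variable {ι E : Type*} [Finite ι] [AddCommGroup E] [Module ℝ E]

lemma exists_forall_mem_convexHull_image_compl [FiniteDimensional ℝ E] {k : ℕ}
    (hk : (Module.finrank ℝ E + 1) * k < Nat.card ι) (q : ι → E) :
    ∃ y, ∀ S : Set ι, S.ncard ≤ k → y ∈ convexHull ℝ (q '' Sᶜ) := by
  classical
  have := Fintype.ofFinite ι
  suffices h : (⋂ S ∈ ({S | #S ≤ k} : Finset (Finset ι)),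
      convexHull ℝ (q '' (S : Set ι)ᶜ)).Nonempty by
    obtain ⟨y, hy⟩ := h
    refine ⟨y, fun S hS ↦ ?_⟩
    simp only [mem_filter_univ, Set.mem_iInter] at hy
    simpa using hy S.toFinset (by rwa [← Set.ncard_eq_toFinset_card'])
  refine Convex.helly_theorem' (fun _ _ ↦ convex_convexHull ℝ _) fun T hT hTcard ↦ ?_
  have hunion : #(T.biUnion id) < Fintype.card ι := by
    calc #(T.biUnion id) ≤ #T * k := card_biUnion_le_card_mul T id k fun S hS ↦ by
          simpa using hT hS
      _ ≤ (Module.finrank ℝ E + 1) * k := by gcongr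
      _ < Fintype.card ι := by rwa [← Nat.card_eq_fintype_card]
  obtain ⟨i, hi⟩ := exists_mem_notMem_of_card_lt_card (s := T.biUnion id) (t := univ) hunion
  refine ⟨q i, Set.mem_iInter₂.2 fun S hS ↦ subset_convexHull ℝ _ ⟨i, fun hiS ↦ hi.2 ?_, rfl⟩⟩
  exact mem_biUnion.2 ⟨S, hS, hiS⟩

theorem exists_mem_forall_lt_ncard_setOf_le [FiniteDimensional ℝ E] {k : ℕ}
    (hk : (Module.finrank ℝ E + 1) * k < Nat.card ι) {B : Set E} (hB : Convex ℝ B) {q : ι → E}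
    (hq : {i | q i ∉ B}.ncard ≤ k) :
    ∃ y ∈ B, ∀ φ : E →ₗ[ℝ] ℝ, k < {i | φ y ≤ φ (q i)}.ncard := by
  obtain ⟨y, hy⟩ := exists_forall_mem_convexHull_image_compl hk q
  refine ⟨y, convexHull_min ?_ hB (hy _ hq), fun φ ↦ ?_⟩
  · rintro _ ⟨i, hi, rfl⟩
    exact not_not.1 hi
  · by_contra! hle
    have hlt : q '' {i | φ y ≤ φ (q i)}ᶜ ⊆ {z | φ z < φ y} := by
      rintro _ ⟨i, hi, rfl⟩
      simpa using hi
    exact lt_irrefl (φ y) (convexHull_min hlt (convex_halfSpace_lt φ.isLinear _) (hy _ hle))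

end CenterPoint

lemma isClosed_setOf_lt_ncard_setOf_mem {ι X : Type*} [Finite ι] [TopologicalSpace X]
    {K : ι → Set X} (hK : ∀ i, IsClosed (K i)) (k : ℕ) :
    IsClosed {x | k < {i | x ∈ K i}.ncard} := by
  have : {x | k < {i | x ∈ K i}.ncard} = ⋃ S ∈ {S : Set ι | k < S.ncard}, ⋂ i ∈ S, K i := by
    ext x
    simp only [Set.mem_ofPred_eq, Set.mem_iUnion₂, Set.mem_iInter₂]
    exact ⟨fun h ↦ ⟨_, h, fun _ ↦ id⟩, fun ⟨S, hS, hx⟩ ↦ hS.trans_le (Set.ncard_le_ncard hx)⟩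
  rw [this]
  exact (Set.toFinite _).isClosed_biUnion fun S _ ↦ isClosed_biInter fun i _ ↦ hK i

theorem central_fixed_point_general {ι E : Type*} [Finite ι] [NormedAddCommGroup E]
    [NormedSpace ℝ E] [FiniteDimensional ℝ E] {k : ℕ}
    (hk : (Module.finrank ℝ E + 1) * k < Nat.card ι) {B : Set E} (hBc : IsCompact B)
    (hB : Convex ℝ B) (hne : B.Nonempty) {f : ι → E → E} (hf : ∀ i, ContinuousOn (f i) B)
    (hout : ∀ x ∈ B, {i | f i x ∉ B}.ncard ≤ k) :
    ∃ x ∈ B, ∀ (φ : StrongDual ℝ E) (c : ℝ), c ≤ φ x → k < {i | c ≤ φ (f i x)}.ncard := by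
  let K (φ : StrongDual ℝ E) (i : ι) : Set E := {x ∈ B | φ x ≤ φ (f i x)}
  have hK (φ i) : IsClosed (K φ i) := hBc.isClosed.isClosed_le φ.continuous.continuousOn
    (φ.continuous.comp_continuousOn (hf i))
  have hKB {φ x} (hx : x ∈ B) : {i | x ∈ K φ i} = {i | φ x ≤ φ (f i x)} := by simp [K, hx]
  obtain ⟨x, hx, hdepth⟩ := exists_forall_mem_of_forall_exists_apply_le hBc hB hne
    (fun φ ↦ isClosed_setOf_lt_ncard_setOf_mem (hK φ) k) fun x hx ↦ by
      obtain ⟨y, hy, hdepth⟩ := exists_mem_forall_lt_ncard_setOf_le hk hB (hout x hx)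
      refine ⟨y, hy, fun φ hφ ↦ ?_⟩
      rw [Set.mem_ofPred_eq, hKB hx]
      exact (hdepth φ).trans_le (Set.ncard_le_ncard fun i hi ↦ hφ.trans hi)
  refine ⟨x, hx, fun φ c hc ↦ ?_⟩
  have hlt : k < {i | x ∈ K φ i}.ncard := hdepth φ
  rw [hKB hx] at hlt
  exact hlt.trans_le (Set.ncard_le_ncard fun i hi ↦ hc.trans hi)

/-- A fixed-point / central point lemma: if `B ⊂ ℝ^d` is a nonempty convex compact
set, `f_1, …, f_n : B → ℝ^d` are continuous, `l = ⌊(n+d)/(d+1)⌋`, and for every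
`x ∈ B` at most `l-1` of the points `f_i(x)` lie outside `B`, then there is `x ∈ B`
such that every closed halfspace containing `x` contains at least `l` of the points
`f_i(x)` (counted with multiplicity, i.e. counting indices). -/
theorem central_fixed_point (d n : ℕ) (hn : 1 ≤ n)
    (B : Set (EuclideanSpace ℝ (Fin d)))
    (hBc : IsCompact B) (hBconv : Convex ℝ B) (hBne : B.Nonempty)
    (f : Fin n → EuclideanSpace ℝ (Fin d) → EuclideanSpace ℝ (Fin d))
    (hf : ∀ i, ContinuousOn (f i) B)
    (hout : ∀ x ∈ B, {i | f i x ∉ B}.ncard ≤ (n + d) / (d + 1) - 1) :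
    ∃ x ∈ B, ∀ (v : EuclideanSpace ℝ (Fin d)) (c : ℝ), v ≠ 0 → c ≤ ⟪x, v⟫_ℝ →
      (n + d) / (d + 1) ≤ {i | c ≤ ⟪f i x, v⟫_ℝ}.ncard := by
  have hk : (d + 1) * ((n + d) / (d + 1) - 1) < n := by
    have := Nat.mul_div_le (n + d) (d + 1)
    rw [Nat.mul_sub_one]
    lia
  obtain ⟨x, hx, hdepth⟩ :=
    central_fixed_point_general (by simpa using hk) hBc hBconv hBne hf hout
  refine ⟨x, hx, fun v c _ hc ↦ Nat.le_of_pred_lt ?_⟩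
  simpa [real_inner_comm] using hdepth (innerSL ℝ v) c (by simpa [real_inner_comm] using hc)
end
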